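/- arXiv:math/9808077 — 6 statements merged into one kernel-verified Lean document; each statement's English description precedes it below -/
import Mathlib

section
/- Lemma (longevity bound for atoms of mature strings): There exists a closed audioactive system (S, u, v) such that for every string w all of whose entries lie in {1,2,3}, whenever JHC^9(w) is a split compound of atoms A_1, …, A_k, then for each j the string JHC^20(A_j) is a split compound of atoms each of which lies in S or equals u ++ [n] or v ++ [n] for some integer n ≥ 4. -/
/-!
The system need not be Conway's list of elements. Take for `S` the set of all atoms over
`{1, 2, 3}` that occur in the splitting of some 29 days old string (`Mature`), and for `u`, `v` the
prefixes `npu`, `plu` of the two transuranic families. Splittings are preserved by the operator,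
so an atom of the image of an atom occurring in `JHC^29 w` occurs in `JHC^29 (JHC w)`, and an atom
of `JHC^20 A`, with `A` occurring in `JHC^9 w`, occurs in `JHC^29 w` (`Occ.trans`). Closedness and
the bound of 20 days are therefore automatic, and two facts remain, for atoms occurring in 29 days
old strings.

* Those containing a letter `n ≥ 4` are exactly `npu ++ [n]` and `plu ++ [n]`. A letter `n ≥ 4` in
  a string two days old is always followed by a split point (`sep_large`). What precedes it is
  determined near the end by finitely many letters: a search over the possible ends
  (`searchL_root`) shows that 27 days later the string ends in `2` followed by one of the two
  prefixes and `n`, and there is a split point behind that `2` (`transuranic_end`).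
* Those over `{1, 2, 3}` have bounded length, so that `S` is finite (`atom_length_lt`). A window of
  a string determines an interval of its image (`core`). A search (`search_nil`) over all windows
  of 24 letters compatible with being two days older than a `Valid` string shows that in each of
  them one of Conway's splitting patterns (`okCut`) appears within 17 days. The length of an
  interval at most about doubles every day, so a very long atom would have an ancestor containing
  such a window, and would split (`chain`).

A splitting `L.R` is handled through `Sep L R`: the last letter of `L` never changes, and it must
differ from the first letters of all iterates of `R`.
-/

open Filter

/-- Conway's audioactive (look-and-say) operator: split into maximal runs
`a₁^{m₁} ⋯ a_r^{m_r}` and output `[m₁, a₁, …, m_r, a_r]`. -/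
def JHC (w : List ℕ) : List ℕ :=
  (w.splitBy (· == ·)).flatMap (fun r => [r.length, r.headI])

/-- A string is a nonempty finite list of positive integers. -/
def IsString (w : List ℕ) : Prop := w ≠ [] ∧ ∀ x ∈ w, 0 < x

/-- `w` splits as `L.R`. -/
def SplitsAs (w L R : List ℕ) : Prop :=
  w = L ++ R ∧ L ≠ [] ∧ R ≠ [] ∧ ∀ n : ℕ, JHC^[n] w = JHC^[n] L ++ JHC^[n] R

/-- An atom is a string admitting no splitting. -/
def IsAtomString (w : List ℕ) : Prop := IsString w ∧ ∀ L R, ¬ SplitsAs w L R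

/-- `w` is a split compound of the atoms in the list `As`. -/
def SplitCompound (w : List ℕ) (As : List (List ℕ)) : Prop :=
  (∀ A ∈ As, IsAtomString A) ∧ w = As.flatten ∧
    ∀ n : ℕ, JHC^[n] w = (As.map (fun A => JHC^[n] A)).flatten

/-- Membership in the system `(S, u, v)`: either in `S`, or of the form
`u ++ [n]` or `v ++ [n]` with `n ≥ 4`. -/
def InSystem (S : Finset (List ℕ)) (u v : List ℕ) (A : List ℕ) : Prop :=
  A ∈ S ∨ ∃ n : ℕ, 4 ≤ n ∧ (A = u ++ [n] ∨ A = v ++ [n])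

/-- A closed audioactive system. -/
structure ClosedAudioactiveSystem where
  S : Finset (List ℕ)
  u : List ℕ
  v : List ℕ
  S_atom : ∀ A ∈ S, IsAtomString A
  S_entries : ∀ A ∈ S, ∀ x ∈ A, x ∈ ({1, 2, 3} : Set ℕ)
  u_entries : ∀ x ∈ u, x ∈ ({1, 2, 3} : Set ℕ)
  v_entries : ∀ x ∈ v, x ∈ ({1, 2, 3} : Set ℕ)
  u_atom : ∀ n : ℕ, 4 ≤ n → IsAtomString (u ++ [n])
  v_atom : ∀ n : ℕ, 4 ≤ n → IsAtomString (v ++ [n])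
  closed : ∀ A, InSystem S u v A →
    ∃ As : List (List ℕ), SplitCompound (JHC A) As ∧ ∀ B ∈ As, InSystem S u v B

namespace Audioactive

open List

/-! ### The operator as a run-length recursion -/

/-- Run-length reading of a list while inside a run: `m` copies of `a` have already been read. -/
def rle (a m : ℕ) : List ℕ → List ℕ
  | [] => [m, a]
  | b :: t => bif Nat.beq b a then rle a (m + 1) t else m :: a :: rle b 1 t

theorem beq_false_iff {a b : ℕ} : Nat.beq a b = false ↔ a ≠ b := by
  rw [← Bool.not_eq_true, Nat.beq_eq]

theorem rle_same (a m : ℕ) (t : List ℕ) : rle a m (a :: t) = rle a (m + 1) t := by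
  simp [rle]

theorem rle_ne {a b : ℕ} (h : b ≠ a) (m : ℕ) (t : List ℕ) :
    rle a m (b :: t) = m :: a :: rle b 1 t := by
  have : Nat.beq b a = false := by
    rw [beq_false_iff]; exact h
  simp [rle, this]

theorem loop_eq_rle (l : List ℕ) : ∀ (a : ℕ) (g : List ℕ) (gs : List (List ℕ)),
    (∀ x ∈ g, x = a) →
    (List.splitBy.loop (· == ·) l a g gs).flatMap (fun r => [r.length, r.headI])
      = gs.reverse.flatMap (fun r => [r.length, r.headI]) ++ rle a (g.length + 1) l := by
  induction l with
  | nil =>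
    intro a g gs hg
    have : (g.reverse ++ [a]).headI = a := by
      cases h : g.reverse with
      | nil => rfl
      | cons b t =>
        have : b ∈ g := by rw [← List.mem_reverse, h]; simp
        simpa using hg b this
    simp [List.splitBy.loop, rle, this]
  | cons b t ih =>
    intro a g gs hg
    by_cases hb : b = a
    · subst hb
      have := ih b (b :: g) gs (by simpa using hg)
      simp only [List.splitBy.loop, beq_self_eq_true, rle_same]
      simpa using this
    · have h1 : (a == b) = false := by simpa using fun h => hb h.symm
      have : (g.reverse ++ [a]).headI = a := by
        cases h : g.reverse with
        | nil => rfl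
        | cons b t =>
          have : b ∈ g := by rw [← List.mem_reverse, h]; simp
          simpa using hg b this
      simp only [List.splitBy.loop, h1, rle_ne hb]
      rw [ih b [] _ (by simp)]
      simp [this]

@[simp] theorem JHC_nil : JHC [] = [] := rfl

theorem JHC_cons (a : ℕ) (t : List ℕ) : JHC (a :: t) = rle a 1 t := by
  have := loop_eq_rle t a [] [] (by simp)
  simpa [JHC, List.splitBy] using this

@[simp] theorem JHC_iter_nil (k : ℕ) : JHC^[k] [] = [] := by
  induction k with
  | zero => rfl
  | succ k ih => rw [Function.iterate_succ_apply', ih, JHC_nil]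

theorem rle_ne_nil (a m : ℕ) (t : List ℕ) : rle a m t ≠ [] := by
  induction t generalizing a m with
  | nil => simp [rle]
  | cons b t ih =>
    by_cases h : b = a
    · subst h; rw [rle_same]; exact ih _ _
    · simp [rle_ne h]

theorem rle_getLast? (t : List ℕ) : ∀ a m, (rle a m t).getLast? = (a :: t).getLast? := by
  induction t with
  | nil => intro a m; simp [rle]
  | cons b t ih =>
    intro a m
    by_cases h : b = a
    · subst h; rw [rle_same, ih]; simp
    · rw [rle_ne h, List.getLast?_cons_cons, List.getLast?_cons, ih]
      simp [List.getLast?_cons]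

theorem JHC_getLast? (w : List ℕ) : (JHC w).getLast? = w.getLast? := by
  cases w with
  | nil => rfl
  | cons a t => rw [JHC_cons, rle_getLast?]

theorem JHC_iter_getLast? (k : ℕ) (w : List ℕ) : (JHC^[k] w).getLast? = w.getLast? := by
  induction k with
  | zero => rfl
  | succ k ih => rw [Function.iterate_succ_apply', JHC_getLast?, ih]

theorem JHC_iter_ne_nil (k : ℕ) {w : List ℕ} (h : w ≠ []) : JHC^[k] w ≠ [] := by
  intro h0
  have := JHC_iter_getLast? k w
  rw [h0] at this
  exact h (by simpa using this.symm)

/-! ### Splittings -/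

/-- No run straddles the boundary between `L` and `R`. -/
def NoMerge (L R : List ℕ) : Prop := ∀ a ∈ L.getLast?, a ∉ R.head?

theorem JHC_append {L R : List ℕ} (h : NoMerge L R) : JHC (L ++ R) = JHC L ++ JHC R := by
  unfold JHC
  rw [List.splitBy_append, List.flatMap_append]
  intro x hx y hy
  have := h x hx
  simp only [beq_eq_false_iff_ne, ne_eq]
  rintro rfl
  exact this hy

theorem rle_length_count (t : List ℕ) : ∀ a m m', (rle a m t).length = (rle a m' t).length := by
  induction t with
  | nil => simp [rle]
  | cons b t ih =>
    intro a m m'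
    by_cases h : b = a
    · subst h; simp only [rle_same]; exact ih _ _ _
    · simp [rle_ne h]

theorem rle_append_length (t : List ℕ) : ∀ a m b s, (a :: t).getLast? = some b →
    (rle a m (t ++ b :: s)).length + 2 = (rle a m t).length + (rle b 1 s).length := by
  induction t with
  | nil =>
    intro a m b s h
    obtain rfl : a = b := by simpa using h
    rw [List.nil_append, rle_same, rle_length_count s a (m + 1) 1]
    simp [rle]; omega
  | cons c t ih =>
    intro a m b s h
    have h' : (c :: t).getLast? = some b := by simpa using h
    by_cases hc : c = a
    · subst hc; rw [List.cons_append, rle_same, rle_same]; exact ih _ _ _ _ h'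
    · rw [List.cons_append, rle_ne hc, rle_ne hc]
      have := ih c 1 b s h'
      simp only [List.length_cons]; omega

/-- A merging boundary costs one run, so the image is strictly shorter. -/
theorem JHC_length_lt {L R : List ℕ} (h : ¬ NoMerge L R) :
    (JHC (L ++ R)).length < (JHC L).length + (JHC R).length := by
  unfold NoMerge at h
  push Not at h
  obtain ⟨b, hL, hR⟩ := h
  cases L with
  | nil => simp at hL
  | cons a t =>
    cases R with
    | nil => simp at hR
    | cons c s =>
      obtain rfl : c = b := by simpa using hR
      rw [List.cons_append, JHC_cons, JHC_cons, JHC_cons]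
      have := rle_append_length t a 1 c s (by simpa using hL)
      omega

theorem JHC_length_le (L R : List ℕ) :
    (JHC (L ++ R)).length ≤ (JHC L).length + (JHC R).length := by
  by_cases h : NoMerge L R
  · rw [JHC_append h, List.length_append]
  · exact (JHC_length_lt h).le

theorem noMerge_of_eq {L R : List ℕ} (h : JHC (L ++ R) = JHC L ++ JHC R) : NoMerge L R := by
  by_contra hn
  have := JHC_length_lt hn
  rw [h, List.length_append] at this
  omega

/-- `L` and `R` never merge: the last letter of `L`, which is constant in time, never equals the
first letter of an iterate of `R`. This is equivalent to the splitting `L.R`, see `sep_iff`; the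
two sides may be empty. -/
def Sep (L R : List ℕ) : Prop := ∀ k : ℕ, NoMerge L (JHC^[k] R)

theorem Sep.iter {L R : List ℕ} (h : Sep L R) (k : ℕ) :
    JHC^[k] (L ++ R) = JHC^[k] L ++ JHC^[k] R := by
  induction k with
  | zero => rfl
  | succ k ih =>
    simp only [Function.iterate_succ_apply']
    rw [ih, JHC_append]
    intro a ha
    rw [JHC_iter_getLast?] at ha
    exact h k a ha

theorem sep_iff {L R : List ℕ} :
    Sep L R ↔ ∀ k : ℕ, JHC^[k] (L ++ R) = JHC^[k] L ++ JHC^[k] R := by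
  refine ⟨fun h k => h.iter k, fun h k => ?_⟩
  have h1 := h (k + 1)
  simp only [Function.iterate_succ_apply'] at h1
  rw [h k] at h1
  have := noMerge_of_eq h1
  intro a ha
  exact this a (by rwa [JHC_iter_getLast?])

theorem Sep.iterate {L R : List ℕ} (h : Sep L R) (k : ℕ) : Sep (JHC^[k] L) (JHC^[k] R) := by
  intro j a ha
  rw [JHC_iter_getLast?] at ha
  rw [← Function.iterate_add_apply]
  exact h _ a ha

theorem sep_nil_right (L : List ℕ) : Sep L [] := by
  intro k a _; simp

theorem sep_nil_left (R : List ℕ) : Sep [] R := by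
  intro k a h; simp at h

theorem NoMerge.of_append_left {A M R : List ℕ} (h : NoMerge (A ++ M) R) : NoMerge M R := by
  intro a ha
  exact h a (List.mem_getLast?_append_of_mem_getLast? ha)

theorem NoMerge.append_left {A M R : List ℕ} (hM : M ≠ []) (h : NoMerge M R) :
    NoMerge (A ++ M) R := by
  intro a ha
  rw [List.getLast?_append_of_ne_nil _ hM] at ha
  exact h a ha

theorem Sep.of_append_left {A M R : List ℕ} (h : Sep (A ++ M) R) : Sep M R :=
  fun k => (h k).of_append_left

theorem Sep.append_left {A M R : List ℕ} (hM : M ≠ []) (h : Sep M R) : Sep (A ++ M) R :=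
  fun k => (h k).append_left hM

theorem sep_mid {A M R : List ℕ} (h1 : Sep A M) (h2 : Sep (A ++ M) R) : Sep A (M ++ R) := by
  by_cases hM : M = []
  · subst hM; simpa using h2
  · intro k a ha
    rw [h2.of_append_left.iter k, List.head?_append_of_ne_nil _ (JHC_iter_ne_nil k hM)]
    exact h1 k a ha

theorem sep_sub {A M R : List ℕ} (h1 : Sep A (M ++ R)) (h2 : Sep M R) : Sep A M := by
  by_cases hM : M = []
  · subst hM; exact sep_nil_right _
  · intro k a ha
    have := h1 k a ha
    rwa [h2.iter k, List.head?_append_of_ne_nil _ (JHC_iter_ne_nil k hM)] at this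

theorem sep_inner {L P Q R : List ℕ} (h1 : Sep L (P ++ Q ++ R)) (h2 : Sep (L ++ (P ++ Q)) R)
    (h : Sep P Q) : Sep (L ++ P) (Q ++ R) := by
  by_cases hP : P = []
  · subst hP; simpa using h1
  · exact Sep.append_left hP (sep_mid h h2.of_append_left)

/-! ### Atoms inside a string -/

/-- `A` occupies an interval of `x` both of whose ends are split points (or ends of `x`). -/
def Occ (A x : List ℕ) : Prop :=
  ∃ L R, x = L ++ A ++ R ∧ Sep L (A ++ R) ∧ Sep (L ++ A) R

theorem not_sep_of_atom {A P Q : List ℕ} (hA : IsAtomString A) (h : A = P ++ Q) (hP : P ≠ [])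
    (hQ : Q ≠ []) : ¬ Sep P Q := by
  intro hs
  refine hA.2 P Q ⟨h, hP, hQ, fun n => ?_⟩
  rw [h]; exact hs.iter n

theorem atom_of_sep {A : List ℕ} (h0 : IsString A)
    (h : ∀ P Q, A = P ++ Q → P ≠ [] → Q ≠ [] → ¬ Sep P Q) : IsAtomString A := by
  refine ⟨h0, fun L R hs => h L R hs.1 hs.2.1 hs.2.2.1 (sep_iff.2 fun k => ?_)⟩
  rw [← hs.1]; exact hs.2.2.2 k

theorem Occ.trans {A B x : List ℕ} {k : ℕ} (h : Occ A x) (hB : Occ B (JHC^[k] A)) :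
    Occ B (JHC^[k] x) := by
  obtain ⟨L, R, rfl, h1, h2⟩ := h
  obtain ⟨L', R', hA, h3, h4⟩ := hB
  have e1 : JHC^[k] (L ++ A ++ R) = JHC^[k] L ++ JHC^[k] A ++ JHC^[k] R := by
    rw [List.append_assoc, h1.iter, h2.of_append_left.iter, List.append_assoc]
  have s1 : Sep (JHC^[k] L) (JHC^[k] A ++ JHC^[k] R) := by
    rw [← h2.of_append_left.iter k]; exact h1.iterate k
  have s2 : Sep (JHC^[k] L ++ JHC^[k] A) (JHC^[k] R) := by
    have : Sep L A := sep_sub h1 h2.of_append_left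
    rw [← this.iter k]; exact h2.iterate k
  refine ⟨JHC^[k] L ++ L', R' ++ JHC^[k] R, ?_, ?_, ?_⟩
  · rw [e1, hA]; simp
  · have := sep_inner (L := JHC^[k] L) (P := L') (Q := B ++ R') (R := JHC^[k] R)
      (by rw [← List.append_assoc, ← hA]; exact s1)
      (by rw [← List.append_assoc L', ← hA]; exact s2) h3
    simpa using this
  · have := sep_inner (L := JHC^[k] L) (P := L' ++ B) (Q := R') (R := JHC^[k] R)
      (by rw [← hA]; exact s1) (by rw [← hA]; exact s2) h4
    simpa using this

/-- An atom does not straddle a split point. -/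
theorem Occ.of_append {A X Y : List ℕ} (hA : IsAtomString A) (h : Occ A (X ++ Y)) (hs : Sep X Y) :
    Occ A X ∨ Occ A Y := by
  obtain ⟨L, R, he, h1, h2⟩ := h
  rw [List.append_assoc, List.append_eq_append_iff] at he
  rcases he with ⟨L2, rfl, hY⟩ | ⟨C, rfl, hC⟩
  · right
    refine ⟨L2, R, by simpa using hY, h1.of_append_left, ?_⟩
    rw [List.append_assoc] at h2
    exact h2.of_append_left
  · rw [List.append_eq_append_iff] at hC
    rcases hC with ⟨R1, rfl, rfl⟩ | ⟨Q, rfl, rfl⟩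
    · left
      refine ⟨L, R1, by simp, ?_, ?_⟩
      · rw [← List.append_assoc] at h1
        exact sep_sub h1 hs.of_append_left
      · refine sep_sub h2 ?_
        rw [← List.append_assoc] at hs
        exact hs.of_append_left
    · by_cases hC : C = []
      · subst hC
        right
        exact ⟨[], R, by simp, sep_nil_left _, by
          simpa using (show Sep (L ++ Q) R by simpa using h2).of_append_left⟩
      by_cases hQ : Q = []
      · subst hQ
        left
        refine ⟨L, [], by simp, ?_, sep_nil_right _⟩
        exact sep_sub (R := R) (by simpa using h1) (by simpa using h2.of_append_left)
      exfalso
      refine not_sep_of_atom hA rfl hC hQ ?_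
      refine sep_sub hs.of_append_left ?_
      rw [← List.append_assoc] at h2
      exact h2.of_append_left

theorem Occ.eq_of_atom {A B : List ℕ} (hA : IsAtomString A) (hB : IsAtomString B) (h : Occ A B) :
    A = B := by
  obtain ⟨L, R, rfl, h1, h2⟩ := h
  have hL : L = [] := by
    by_contra hL
    refine not_sep_of_atom hB (List.append_assoc L A R) hL ?_ h1
    simp [hA.1.1]
  have hR : R = [] := by
    by_contra hR
    exact not_sep_of_atom hB rfl (by simp [hA.1.1]) hR h2
  subst hL hR
  simp

/-- Consecutive members of the list are separated from everything that follows. -/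
def ChainSep : List (List ℕ) → Prop
  | [] => True
  | A :: As => Sep A As.flatten ∧ ChainSep As

theorem JHC_flatten_length_le (Bs : List (List ℕ)) :
    (JHC Bs.flatten).length ≤ (Bs.map JHC).flatten.length := by
  induction Bs with
  | nil => simp
  | cons B Bs ih =>
    have := JHC_length_le B Bs.flatten
    simp only [List.flatten_cons, List.map_cons, List.length_append]
    omega

theorem chainSep_of_iter (As : List (List ℕ)) :
    (∀ n : ℕ, JHC^[n] As.flatten = (As.map (fun A => JHC^[n] A)).flatten) → ChainSep As := by
  induction As with
  | nil => intro _; trivial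
  | cons A As ih =>
    intro h
    have key : ∀ n, JHC^[n] As.flatten = (As.map (fun A => JHC^[n] A)).flatten →
        NoMerge (JHC^[n] A) (JHC^[n] As.flatten) := by
      intro n hn
      by_contra hm
      have h1 := h (n + 1)
      have h0 := h n
      simp only [List.flatten_cons, List.map_cons, Function.iterate_succ_apply'] at h1 h0
      rw [h0, ← hn] at h1
      have h2 := JHC_length_lt hm
      rw [h1, hn] at h2
      have h3 := JHC_flatten_length_le (As.map (fun A => JHC^[n] A))
      rw [List.map_map] at h3
      simp only [List.length_append, Function.comp_def] at h2 h3
      omega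
    have all : ∀ n, JHC^[n] As.flatten = (As.map (fun A => JHC^[n] A)).flatten := by
      intro n
      induction n with
      | zero => simp
      | succ n hn =>
        have h1 := h (n + 1)
        have h0 := h n
        simp only [List.flatten_cons, List.map_cons, Function.iterate_succ_apply'] at h1 h0 ⊢
        rw [h0, ← hn, JHC_append (key n hn)] at h1
        exact List.append_cancel_left h1
    refine ⟨fun k a ha => key k (all k) a ?_, ih all⟩
    rwa [JHC_iter_getLast?]

theorem ChainSep.iter {As : List (List ℕ)} (h : ChainSep As) (n : ℕ) :
    JHC^[n] As.flatten = (As.map (fun A => JHC^[n] A)).flatten := by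
  induction As with
  | nil => simp
  | cons A As ih =>
    simp only [List.flatten_cons, List.map_cons]
    rw [h.1.iter, ih h.2]

theorem ChainSep.append {As Bs : List (List ℕ)} (hA : ChainSep As) (hB : ChainSep Bs)
    (h : Sep As.flatten Bs.flatten) : ChainSep (As ++ Bs) := by
  induction As with
  | nil => simpa using hB
  | cons A As ih =>
    rw [List.flatten_cons] at h
    refine ⟨?_, ih hA.2 h.of_append_left⟩
    change Sep A (As ++ Bs).flatten
    rw [List.flatten_append]
    exact sep_mid hA.1 h

theorem ChainSep.occ {As : List (List ℕ)} (h : ChainSep As) : ∀ A ∈ As, Occ A As.flatten := by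
  induction As with
  | nil => simp
  | cons B As ih =>
    intro A hA
    rw [List.mem_cons] at hA
    rcases hA with rfl | hA
    · exact ⟨[], As.flatten, by simp, sep_nil_left _, by simpa using h.1⟩
    · obtain ⟨L, R, he, h1, h2⟩ := ih h.2 A hA
      have hs : Sep B (L ++ A ++ R) := he ▸ h.1
      have hs' : Sep B L := by
        refine sep_sub (R := A ++ R) (by simpa using hs) h1
      refine ⟨B ++ L, R, by simp [he], ?_, ?_⟩
      · by_cases hL : L = []
        · subst hL; simpa using hs
        · exact h1.append_left hL
      · by_cases hL : L ++ A = []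
        · have h3 : L = [] ∧ A = [] := by simpa using hL
          obtain ⟨rfl, rfl⟩ := h3
          simpa using hs
        · rw [List.append_assoc]; exact h2.append_left hL

theorem occ_of_splitCompound {w A : List ℕ} {As : List (List ℕ)} (h : SplitCompound w As)
    (hA : A ∈ As) : Occ A w := by
  obtain ⟨_, rfl, h2⟩ := h
  exact (chainSep_of_iter As h2).occ A hA

theorem exists_splitCompound (w : List ℕ) (hw : IsString w) : ∃ As, SplitCompound w As := by
  suffices H : ∃ As : List (List ℕ), (∀ A ∈ As, IsAtomString A) ∧ w = As.flatten ∧ ChainSep As by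
    obtain ⟨As, h1, rfl, h3⟩ := H
    exact ⟨As, h1, rfl, h3.iter⟩
  induction hn : w.length using Nat.strong_induction_on generalizing w with
  | _ n ih =>
    by_cases hA : IsAtomString w
    · exact ⟨[w], by simpa using hA, by simp, sep_nil_right _, trivial⟩
    · have : ∃ L R, SplitsAs w L R := by
        by_contra hc
        push Not at hc
        exact hA ⟨hw, hc⟩
      obtain ⟨L, R, rfl, hL, hR, hs⟩ := this
      have hL' := List.length_pos_iff.2 hL
      have hR' := List.length_pos_iff.2 hR
      rw [List.length_append] at hn
      obtain ⟨As, a1, a2, a3⟩ := ih L.length (by omega) L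
        ⟨hL, fun x hx => hw.2 x (by simp [hx])⟩ rfl
      obtain ⟨Bs, b1, b2, b3⟩ := ih R.length (by omega) R
        ⟨hR, fun x hx => hw.2 x (by simp [hx])⟩ rfl
      refine ⟨As ++ Bs, ?_, by rw [List.flatten_append, ← a2, ← b2], a3.append b3 ?_⟩
      · intro A hA
        rcases List.mem_append.1 hA with h | h
        exacts [a1 A h, b1 A h]
      · rw [← a2, ← b2]; exact sep_iff.2 hs

/-! ### Conway's splitting patterns -/

/-- The three beginnings `1¹X¹` (`X ≠ 1`), `1³` and `3¹X^j` (`X ≠ 3`, `j = 1, 2`), which the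
operator permutes cyclically. Their first letters are `1` and `3`. -/
def Start (R : List ℕ) : Prop :=
  (∃ x t, R = 1 :: x :: t ∧ x ≠ 1 ∧ x ∉ t.head?) ∨
  (∃ t, R = 1 :: 1 :: 1 :: t ∧ 1 ∉ t.head?) ∨
  (∃ x t, x ≠ 3 ∧ x ∉ t.head? ∧ (R = 3 :: x :: t ∨ R = 3 :: x :: x :: t))

theorem rle_end {x m : ℕ} {t : List ℕ} (h : x ∉ t.head?) : rle x m t = m :: x :: JHC t := by
  cases t with
  | nil => rfl
  | cons b t =>
    have : b ≠ x := by simpa using h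
    rw [rle_ne this, JHC_cons]

theorem rle_shape (t : List ℕ) : ∀ a m, ∃ c s, rle a m t = c :: a :: s := by
  induction t with
  | nil => intro a m; exact ⟨m, [], rfl⟩
  | cons b t ih =>
    intro a m
    by_cases h : b = a
    · subst h; rw [rle_same]; exact ih _ _
    · rw [rle_ne h]; exact ⟨m, _, rfl⟩

/-- The image of a list whose head is not `1` does not begin with `1, 1`. -/
theorem rle_one_not_mem {t : List ℕ} (h : 1 ∉ t.head?) :
    (JHC t).head? = none ∨ (∃ c x s, JHC t = c :: x :: s ∧ x ≠ 1) := by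
  cases t with
  | nil => simp
  | cons b t =>
    right
    have hb : b ≠ 1 := by simpa using h
    obtain ⟨c, s, h⟩ := rle_shape t b 1
    exact ⟨c, b, s, by rw [JHC_cons, h], hb⟩

theorem Start.jhc {R : List ℕ} (h : Start R) : Start (JHC R) := by
  rcases h with ⟨x, t, rfl, hx, ht⟩ | ⟨t, rfl, ht⟩ | ⟨x, t, hx, ht, rfl | rfl⟩
  · right; left
    rw [JHC_cons, rle_ne hx, rle_end ht]
    exact ⟨_, rfl, by simpa using hx⟩
  · right; right
    rw [JHC_cons, rle_same, rle_same, rle_end ht]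
    rcases rle_one_not_mem ht with h | ⟨c, x, s, h, hx⟩
    · exact ⟨1, JHC t, by simp, by simp [h], Or.inl rfl⟩
    · rw [h]
      by_cases hc : c = 1
      · subst hc
        exact ⟨1, x :: s, by simp, by simpa using hx, Or.inr rfl⟩
      · exact ⟨1, c :: x :: s, by simp, by simpa using hc, Or.inl rfl⟩
  · left
    rw [JHC_cons, rle_ne hx, rle_end ht]
    exact ⟨3, _, rfl, by simp, by simp⟩
  · left
    rw [JHC_cons, rle_ne hx, rle_same, rle_end ht]
    exact ⟨3, _, rfl, by simp, by simp⟩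

theorem Start.iter {R : List ℕ} (h : Start R) (k : ℕ) : Start (JHC^[k] R) := by
  induction k with
  | zero => exact h
  | succ k ih => rw [Function.iterate_succ_apply']; exact ih.jhc

theorem Start.two_not_mem {R : List ℕ} (h : Start R) : 2 ∉ R.head? := by
  rcases h with ⟨x, t, rfl, hx, ht⟩ | ⟨t, rfl, ht⟩ | ⟨x, t, hx, ht, rfl | rfl⟩ <;> simp

theorem sep_two {L R : List ℕ} (hL : L.getLast? = some 2) (hR : Start R) : Sep L R := by
  intro k a ha
  obtain rfl : 2 = a := by simpa [hL] using ha
  exact (hR.iter k).two_not_mem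

/-- The prefix `2, 2` in front of such a beginning is a fixed point of the operator. -/
theorem sep_not_two {L R : List ℕ} (hL : 2 ∉ L.getLast?) (hR : Start R) :
    Sep L (2 :: 2 :: R) := by
  have : ∀ k, JHC^[k] (2 :: 2 :: R) = 2 :: 2 :: JHC^[k] R := by
    intro k
    induction k with
    | zero => rfl
    | succ k ih =>
      rw [Function.iterate_succ_apply', ih, JHC_cons, rle_same, rle_end (hR.iter k).two_not_mem,
        Function.iterate_succ_apply']
  intro k a ha
  rw [this k]
  rintro h
  obtain rfl : 2 = a := by simpa using h
  exact hL ha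

/-- Recognises a `Start` from the first letters alone, whatever follows. -/
def okStart : List ℕ → Bool
  | a :: b :: c :: t =>
    (Nat.beq a 1 && !Nat.beq b 1 && !Nat.beq c b) ||
    (Nat.beq a 3 && !Nat.beq b 3 &&
      (!Nat.beq c b || match t with | [] => false | d :: _ => !Nat.beq d b)) ||
    (Nat.beq a 1 && Nat.beq b 1 && Nat.beq c 1 &&
      match t with | [] => false | d :: _ => !Nat.beq d 1)
  | _ => false

theorem start_of_okStart {t : List ℕ} (h : okStart t = true) (r : List ℕ) : Start (t ++ r) := by
  match t, h with
  | a :: b :: c :: [], h =>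
    simp only [okStart, Bool.and_false, Bool.or_false, Bool.or_eq_true, Bool.and_eq_true,
      Bool.not_eq_true', Nat.beq_eq, beq_false_iff] at h
    rcases h with ⟨⟨rfl, h1⟩, h2⟩ | ⟨⟨rfl, h1⟩, h2⟩
    · exact Or.inl ⟨b, c :: r, rfl, h1, by simpa using h2⟩
    · exact Or.inr (Or.inr ⟨b, c :: r, h1, by simpa using h2, Or.inl rfl⟩)
  | a :: b :: c :: d :: t, h =>
    simp only [okStart, Bool.or_eq_true, Bool.and_eq_true,
      Bool.not_eq_true', Nat.beq_eq, beq_false_iff] at h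
    rcases h with (⟨⟨rfl, h1⟩, h2⟩ | ⟨⟨rfl, h1⟩, h2⟩) | ⟨⟨⟨rfl, rfl⟩, rfl⟩, h2⟩
    · exact Or.inl ⟨b, c :: d :: t ++ r, rfl, h1, by simpa using h2⟩
    · by_cases hc : c = b
      · subst hc
        exact Or.inr (Or.inr ⟨c, d :: t ++ r, h1, by simpa using h2, Or.inr rfl⟩)
      · exact Or.inr (Or.inr ⟨b, c :: d :: t ++ r, h1, by simpa using hc, Or.inl rfl⟩)
    · exact Or.inr (Or.inl ⟨d :: t ++ r, rfl, by simpa using h2⟩)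

/-- Recognises a split point between the letter `a` and the list `t`. -/
def okCut (a : ℕ) (t : List ℕ) : Bool :=
  bif Nat.beq a 2 then okStart t else
    match t with
    | b :: c :: t => Nat.beq b 2 && Nat.beq c 2 && okStart t
    | _ => false

/-- A split point strictly inside the window is visible. -/
def hasCut : List ℕ → Bool
  | [] => false
  | a :: t => okCut a t || hasCut t

theorem sep_of_okCut {a : ℕ} {t : List ℕ} (h : okCut a t = true) (l r : List ℕ) :
    t ≠ [] ∧ Sep (l ++ [a]) (t ++ r) := by
  unfold okCut at h
  by_cases ha : a = 2
  · subst ha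
    have h : okStart t = true := by simpa using h
    refine ⟨?_, sep_two (by simp) (start_of_okStart h r)⟩
    rintro rfl; simp [okStart] at h
  · rw [beq_false_iff.2 ha, cond_false] at h
    match t, h with
    | b :: c :: t, h =>
      simp only [Bool.and_eq_true, Nat.beq_eq] at h
      obtain ⟨⟨rfl, rfl⟩, h⟩ := h
      exact ⟨by simp, sep_not_two (by simpa using ha) (start_of_okStart h r)⟩

theorem sep_of_hasCut {W : List ℕ} (h : hasCut W = true) :
    ∃ P Q, W = P ++ Q ∧ P ≠ [] ∧ Q ≠ [] ∧ ∀ l r, Sep (l ++ P) (Q ++ r) := by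
  induction W with
  | nil => simp [hasCut] at h
  | cons a t ih =>
    rw [hasCut, Bool.or_eq_true] at h
    rcases h with h | h
    · exact ⟨[a], t, rfl, by simp, (sep_of_okCut h [] []).1, fun l r => (sep_of_okCut h l r).2⟩
    · obtain ⟨P, Q, rfl, hP, hQ, hs⟩ := ih h
      refine ⟨a :: P, Q, rfl, by simp, hQ, fun l r => ?_⟩
      have := hs (l ++ [a]) r
      simpa using this

/-! ### Strings that are at least two days old -/

/-- No two consecutive letters at odd positions coincide, where the list is read from position `0`
as pairs (count, letter). -/
def altOK : List ℕ → Bool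
  | _ :: a :: t => (match t with | _ :: b :: _ => !Nat.beq a b | _ => true) && altOK t
  | _ => true

/-- The list is a sequence of pairs (count, letter) with counts `1, 2, 3` and positive letters. -/
def Cnt : List ℕ → Prop
  | [] => True
  | [_] => False
  | c :: a :: t => (1 ≤ c ∧ c ≤ 3) ∧ 1 ≤ a ∧ Cnt t

/-- The shape of strings that are at least two days old. -/
def Valid (y : List ℕ) : Prop := altOK y = true ∧ Cnt y

theorem altOK_rle (t : List ℕ) : ∀ a m, altOK (rle a m t) = true := by
  induction t with
  | nil => intro a m; rfl
  | cons b t ih =>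
    intro a m
    by_cases h : b = a
    · subst h; rw [rle_same]; exact ih _ _
    · rw [rle_ne h]
      have h1 := ih b 1
      obtain ⟨c, s, h2⟩ := rle_shape t b 1
      have : Nat.beq a b = false := beq_false_iff.2 (fun e => h e.symm)
      rw [h2] at h1 ⊢
      simp [altOK, this] at h1 ⊢
      exact h1

theorem altOK_JHC (w : List ℕ) : altOK (JHC w) = true := by
  cases w with
  | nil => rfl
  | cons a t => rw [JHC_cons]; exact altOK_rle t a 1

/-- No letter occurs four times in a row. -/
def NoFour (z : List ℕ) : Prop := ∀ a, ¬ [a, a, a, a] <:+: z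

theorem noFour_of_altOK : ∀ z : List ℕ, altOK z = true → NoFour z
  | [], _ => by intro a h; simpa using h.length_le
  | [_], _ => by intro a h; simpa using h.length_le
  | c :: b :: t, h => by
    have ht : altOK t = true := by
      simp only [altOK, Bool.and_eq_true] at h; exact h.2
    have ih := noFour_of_altOK t ht
    intro a hf
    rw [List.infix_cons_iff, List.infix_cons_iff] at hf
    rcases hf with ⟨s, hs⟩ | ⟨s, hs⟩ | hf
    · simp at hs
      obtain ⟨rfl, rfl, rfl⟩ := hs
      simp [altOK] at h
    · simp at hs
      obtain ⟨rfl, rfl⟩ := hs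
      simp [altOK] at h
    · exact ih a hf

theorem rle_cnt (t : List ℕ) : ∀ a m, NoFour (List.replicate m a ++ t) → 1 ≤ m → 1 ≤ a →
    (∀ x ∈ t, 1 ≤ x) → Cnt (rle a m t) ∧ ∀ x ∈ rle a m t, x ≤ 3 ∨ x = a ∨ x ∈ t := by
  induction t with
  | nil =>
    intro a m h hm ha _
    have h3 : m ≤ 3 := by
      by_contra hc
      obtain ⟨k, rfl⟩ : ∃ k, m = k + 4 := ⟨m - 4, by omega⟩
      exact h a ⟨List.replicate k a, [], by simp [List.replicate_add]⟩
    simp [rle, Cnt, *]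
  | cons b t ih =>
    intro a m h hm ha ht
    have h3 : m ≤ 3 := by
      by_contra hc
      obtain ⟨k, rfl⟩ : ∃ k, m = k + 4 := ⟨m - 4, by omega⟩
      exact h a ⟨List.replicate k a, b :: t, by simp [List.replicate_add]⟩
    by_cases hb : b = a
    · subst hb
      rw [rle_same]
      obtain ⟨i1, i2⟩ := ih b (m + 1) (by simpa [List.replicate_add] using h) (by omega) ha
        (fun x hx => ht x (by simp [hx]))
      refine ⟨i1, fun x hx => ?_⟩
      rcases i2 x hx with h | h | h <;> simp [h]
    · rw [rle_ne hb]
      obtain ⟨i1, i2⟩ := ih b 1 (fun c hc => h c (hc.trans ⟨List.replicate m a, [], by simp⟩))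
        le_rfl (ht b (by simp)) (fun x hx => ht x (by simp [hx]))
      refine ⟨⟨⟨hm, h3⟩, ha, i1⟩, fun x hx => ?_⟩
      simp only [List.mem_cons] at hx
      rcases hx with rfl | rfl | hx
      · exact Or.inl h3
      · simp
      · rcases i2 x hx with h | h | h <;> simp [h]

theorem JHC_cnt {z : List ℕ} (h : NoFour z) (hp : ∀ x ∈ z, 1 ≤ x) :
    Cnt (JHC z) ∧ ∀ x ∈ JHC z, x ≤ 3 ∨ x ∈ z := by
  cases z with
  | nil => simp [Cnt]
  | cons a t =>
    rw [JHC_cons]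
    have := rle_cnt t a 1 (by simpa using h) le_rfl (hp a (by simp))
      (fun x hx => hp x (by simp [hx]))
    simpa using this

theorem Cnt.pos : ∀ {z : List ℕ}, Cnt z → ∀ x ∈ z, 1 ≤ x
  | [], _ => by simp
  | c :: a :: t, h => by
    intro x hx
    simp only [List.mem_cons] at hx
    rcases hx with rfl | rfl | hx
    exacts [h.1.1, h.2.1, Cnt.pos h.2.2 x hx]

theorem rle_pos (t : List ℕ) : ∀ a m, 1 ≤ a → 1 ≤ m → (∀ x ∈ t, 1 ≤ x) →
    ∀ x ∈ rle a m t, 1 ≤ x := by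
  induction t with
  | nil => intro a m ha hm _; simp [rle, ha, hm]
  | cons b t ih =>
    intro a m ha hm ht
    by_cases hb : b = a
    · subst hb; rw [rle_same]
      exact ih _ _ ha (by omega) (fun x hx => ht x (by simp [hx]))
    · rw [rle_ne hb]
      intro x hx
      simp only [List.mem_cons] at hx
      rcases hx with rfl | rfl | hx
      · exact hm
      · exact ha
      · exact ih b 1 (ht b (by simp)) le_rfl (fun x hx => ht x (by simp [hx])) x hx

theorem isString_JHC {w : List ℕ} (h : IsString w) : IsString (JHC w) := by
  obtain ⟨h1, h2⟩ := h
  cases w with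
  | nil => simp at h1
  | cons a t =>
    rw [JHC_cons]
    exact ⟨rle_ne_nil _ _ _,
      rle_pos t a 1 (h2 a (by simp)) le_rfl (fun x hx => h2 x (by simp [hx]))⟩

theorem isString_iter {w : List ℕ} (h : IsString w) (k : ℕ) : IsString (JHC^[k] w) := by
  induction k with
  | zero => exact h
  | succ k ih => rw [Function.iterate_succ_apply']; exact isString_JHC ih

theorem valid_two {w : List ℕ} (h : IsString w) : Valid (JHC (JHC w)) :=
  ⟨altOK_JHC _, (JHC_cnt (noFour_of_altOK _ (altOK_JHC w)) (isString_JHC h).2).1⟩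

theorem Valid.jhc {y : List ℕ} (h : Valid y) : Valid (JHC y) :=
  ⟨altOK_JHC _, (JHC_cnt (noFour_of_altOK _ h.1) h.2.pos).1⟩

theorem Valid.iter {y : List ℕ} (h : Valid y) (k : ℕ) : Valid (JHC^[k] y) := by
  induction k with
  | zero => exact h
  | succ k ih => rw [Function.iterate_succ_apply']; exact ih.jhc

theorem Valid.jhc_mem {y : List ℕ} (h : Valid y) : ∀ x ∈ JHC y, x ≤ 3 ∨ x ∈ y :=
  (JHC_cnt (noFour_of_altOK _ h.1) h.2.pos).2

theorem Valid.iter_le {y : List ℕ} (h : Valid y) (h3 : ∀ x ∈ y, x ≤ 3) (k : ℕ) :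
    ∀ x ∈ JHC^[k] y, x ≤ 3 := by
  induction k with
  | zero => exact h3
  | succ k ih =>
    rw [Function.iterate_succ_apply']
    intro x hx
    rcases (h.iter k).jhc_mem x hx with h | h
    exacts [h, ih x h]

theorem Valid.head_le {y : List ℕ} (h : Valid y) : ∀ a ∈ y.head?, a ≤ 3 := by
  match y, h with
  | [], _ => simp
  | c :: a :: t, h => simpa using h.2.1.2

/-- A letter `n ≥ 4` is always followed by a split point. -/
theorem sep_large {x y : List ℕ} {n : ℕ} (hn : 4 ≤ n) (hy : Valid y) : Sep (x ++ [n]) y := by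
  intro k a ha h
  obtain rfl : n = a := by simpa using ha
  have := (hy.iter k).head_le n h
  omega

theorem altOK_prefix : ∀ (x r : List ℕ), altOK (x ++ r) = true → altOK x = true
  | [], _, _ => rfl
  | [_], _, _ => rfl
  | [_, _], _, _ => rfl
  | [_, _, _], _, _ => rfl
  | c :: a :: d :: b :: t, r, h => by
    simp only [List.cons_append, altOK, Bool.and_eq_true] at h ⊢
    refine ⟨h.1, ?_⟩
    have := altOK_prefix (d :: b :: t) r (by simpa [altOK] using h.2)
    simpa [altOK] using this

theorem altOK_drop : ∀ (l x : List ℕ), Even l.length → altOK (l ++ x) = true → altOK x = true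
  | [], _, _, h => h
  | [_], _, he, _ => by simp at he
  | c :: a :: l, x, he, h => by
    simp only [List.cons_append, altOK, Bool.and_eq_true] at h
    refine altOK_drop l x ?_ h.2
    simpa [Nat.even_add_one] using he

/-- Cutting a string behind its first letter `≥ 4`. -/
theorem Cnt.pieces : ∀ {y : List ℕ}, Cnt y → (∀ x ∈ y, x ≤ 3) ∨
    ∃ x n y', y = x ++ [n] ++ y' ∧ (∀ a ∈ x, a ≤ 3) ∧ 4 ≤ n ∧ Cnt (x ++ [n]) ∧ Cnt y' ∧
      Even (x ++ [n]).length
  | [], _ => by simp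
  | c :: a :: t, h => by
    by_cases ha : 4 ≤ a
    · right
      exact ⟨[c], a, t, rfl, by simpa using h.1.2, ha, ⟨h.1, h.2.1, trivial⟩, h.2.2, by simp⟩
    · rcases Cnt.pieces h.2.2 with h' | ⟨x, n, y', rfl, h1, h2, h3, h4, h5⟩
      · left
        intro x hx
        simp only [List.mem_cons] at hx
        rcases hx with rfl | rfl | hx
        · exact h.1.2
        · omega
        · exact h' x hx
      · right
        refine ⟨c :: a :: x, n, y', by simp, ?_, h2, ⟨h.1, h.2.1, h3⟩, h4, ?_⟩
        · intro b hb
          simp only [List.mem_cons] at hb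
          rcases hb with rfl | rfl | hb
          · exact h.1.2
          · omega
          · exact h1 b hb
        · simpa [Nat.even_add_one] using h5

/-! ### Windows -/

/-- The part of `rle a m` of a list that does not depend on what follows the list: the last run is
dropped. -/
def runC (a m : ℕ) : List ℕ → List ℕ
  | [] => []
  | b :: t => bif Nat.beq b a then runC a (m + 1) t else m :: a :: runC b 1 t

/-- Skip the remainder of a run of the letter `a`, then read as in `runC`. -/
def skipC (a : ℕ) : List ℕ → List ℕ
  | [] => []
  | b :: t => bif Nat.beq b a then skipC a t else runC b 1 t

/-- The part of the image of a window that is determined by the window alone: the count of the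
first run and the whole last run are lost, see `core_infix`. -/
def core : List ℕ → List ℕ
  | [] => []
  | a :: t => a :: skipC a t

/-- Within `k` days a split point strictly inside the window becomes visible. -/
def test : ℕ → List ℕ → Bool
  | 0, _ => false
  | k + 1, W => hasCut W || test k (core W)

theorem runC_prefix (t : List ℕ) : ∀ (a m : ℕ) (q : List ℕ), runC a m t <+: rle a m (t ++ q) := by
  induction t with
  | nil => intro a m q; exact List.nil_prefix
  | cons b t ih =>
    intro a m q
    by_cases h : b = a
    · subst h
      rw [List.cons_append, rle_same]
      simpa [runC] using ih b (m + 1) q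
    · rw [List.cons_append, rle_ne h]
      simp only [runC, beq_false_iff.2 h, cond_false, List.prefix_cons_inj]
      exact ih b 1 q

theorem skipC_infix (t : List ℕ) : ∀ (a m : ℕ) (q : List ℕ),
    a :: skipC a t <:+: rle a m (t ++ q) := by
  induction t with
  | nil =>
    intro a m q
    obtain ⟨c, s, h⟩ := rle_shape q a m
    rw [List.nil_append, h]
    exact ⟨[c], s, by simp [skipC]⟩
  | cons b t ih =>
    intro a m q
    by_cases h : b = a
    · subst h
      rw [List.cons_append, rle_same]
      simpa [skipC] using ih b (m + 1) q
    · rw [List.cons_append, rle_ne h]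
      simp only [skipC, beq_false_iff.2 h, cond_false]
      obtain ⟨s, hs⟩ := runC_prefix t b 1 q
      exact ⟨[m], s, by simp [← hs]⟩

theorem rle_suffix (p : List ℕ) : ∀ (x m a : ℕ) (t : List ℕ),
    ∃ k, rle a k t <:+ rle x m (p ++ a :: t) := by
  induction p with
  | nil =>
    intro x m a t
    by_cases h : a = x
    · subst h; exact ⟨m + 1, by rw [List.nil_append, rle_same]⟩
    · exact ⟨1, [m, x], by rw [List.nil_append, rle_ne h]; rfl⟩
  | cons b p ih =>
    intro x m a t
    by_cases h : b = x
    · subst h; rw [List.cons_append, rle_same]; exact ih _ _ _ _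
    · obtain ⟨k, hk⟩ := ih b 1 a t
      refine ⟨k, ?_⟩
      rw [List.cons_append, rle_ne h]
      exact hk.trans ⟨[m, x], rfl⟩

theorem JHC_suffix (p : List ℕ) (a : ℕ) (t : List ℕ) :
    ∃ k, rle a k t <:+ JHC (p ++ a :: t) := by
  cases p with
  | nil => exact ⟨1, by rw [List.nil_append, JHC_cons]⟩
  | cons x p => rw [List.cons_append, JHC_cons]; exact rle_suffix p x 1 a t

theorem core_infix {W A : List ℕ} (h : W <:+: A) : core W <:+: JHC A := by
  obtain ⟨p, q, rfl⟩ := h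
  cases W with
  | nil => exact List.nil_infix
  | cons a t =>
    obtain ⟨k, hk⟩ := JHC_suffix p a (t ++ q)
    have : p ++ a :: t ++ q = p ++ a :: (t ++ q) := by simp
    rw [this]
    exact (skipC_infix t a k q).trans hk.isInfix

theorem rle_cut (t : List ℕ) : ∀ (a m : ℕ) (U V : List ℕ), rle a m t = U ++ V → Even U.length →
    U ≠ [] → ∃ l r, t = l ++ r ∧ U = rle a m l ∧ V = JHC r := by
  induction t with
  | nil =>
    intro a m U V h he h0
    match U, he, h0 with
    | [_], he, _ => simp at he
    | c :: d :: U, _, _ =>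
      simp only [rle, List.cons_append, List.cons.injEq] at h
      obtain ⟨rfl, rfl, h⟩ := h
      have h' : U = [] ∧ V = [] := by simpa using h
      obtain ⟨rfl, rfl⟩ := h'
      exact ⟨[], [], rfl, rfl, rfl⟩
  | cons b t ih =>
    intro a m U V h he h0
    by_cases hb : b = a
    · subst hb
      rw [rle_same] at h
      obtain ⟨l, r, rfl, h1, h2⟩ := ih _ _ _ _ h he h0
      exact ⟨b :: l, r, rfl, by rw [h1, rle_same], h2⟩
    · rw [rle_ne hb] at h
      match U, he, h0 with
      | [_], he, _ => simp at he
      | c :: d :: U, he, _ =>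
        simp only [List.cons_append, List.cons.injEq] at h
        obtain ⟨rfl, rfl, h⟩ := h
        by_cases hU : U = []
        · subst hU
          exact ⟨[], b :: t, rfl, rfl, by rw [JHC_cons, h]; rfl⟩
        · obtain ⟨l, r, rfl, h1, h2⟩ := ih _ _ _ _ h (by simpa [Nat.even_add_one] using he) hU
          exact ⟨b :: l, r, rfl, by rw [h1, rle_ne hb], h2⟩

/-- A cut of an image at an even position comes from a cut between two runs. -/
theorem JHC_cut {y U V : List ℕ} (h : JHC y = U ++ V) (he : Even U.length) :
    ∃ l r, y = l ++ r ∧ U = JHC l ∧ V = JHC r := by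
  by_cases hU : U = []
  · subst hU; exact ⟨[], y, rfl, rfl, by simpa using h.symm⟩
  cases y with
  | nil => simp [hU] at h
  | cons a t =>
    rw [JHC_cons] at h
    obtain ⟨l, r, rfl, h1, h2⟩ := rle_cut t a 1 U V h he hU
    exact ⟨a :: l, r, rfl, by rw [h1, JHC_cons], h2⟩

theorem rle_length (t : List ℕ) : ∀ a m, Even (rle a m t).length ∧
    (rle a m t).length ≤ 2 * (t.length + 1) := by
  induction t with
  | nil => intro a m; simp [rle]
  | cons b t ih =>
    intro a m
    by_cases hb : b = a
    · subst hb; rw [rle_same]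
      have := ih b (m + 1)
      exact ⟨this.1, by simp only [List.length_cons]; omega⟩
    · rw [rle_ne hb]
      have := ih b 1
      refine ⟨by simpa [Nat.even_add_one] using this.1, ?_⟩
      simp only [List.length_cons]; omega

theorem JHC_length (y : List ℕ) : Even (JHC y).length ∧ (JHC y).length ≤ 2 * y.length := by
  cases y with
  | nil => simp
  | cons a t => rw [JHC_cons]; exact rle_length t a 1

/-- Inside the string `L ++ A ++ R` there is a split point strictly inside `A`. -/
def SplitIn (L A R : List ℕ) : Prop :=
  ∃ P Q, A = P ++ Q ∧ P ≠ [] ∧ Q ≠ [] ∧ Sep (L ++ P) (Q ++ R)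

/-- Going back one day from an interval `A` of an image to the maximal set `a` of complete runs
described inside `A`. -/
theorem step_back {y L A R : List ℕ} (h : JHC y = L ++ A ++ R) (hA : 2 ≤ A.length) :
    ∃ l a r, y = l ++ a ++ r ∧ A.length ≤ 2 * a.length + 2 ∧
      (SplitIn l a r → SplitIn L A R) ∧ JHC a <:+: A := by
  obtain ⟨e, M, f, rfl, he, hf, heL, hfR⟩ : ∃ e M f, A = e ++ M ++ f ∧ e.length ≤ 1 ∧
      f.length ≤ 1 ∧ Even (L ++ e).length ∧ Even (f ++ R).length := by
    obtain ⟨e, A', rfl, he, heL, hA'⟩ : ∃ e A', A = e ++ A' ∧ e.length ≤ 1 ∧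
        Even (L ++ e).length ∧ A' ≠ [] := by
      rcases Nat.even_or_odd L.length with hL | hL
      · refine ⟨[], A, rfl, by simp, by simpa using hL, ?_⟩
        rintro rfl; simp at hA
      · match A, hA with
        | c :: d :: A, _ =>
          exact ⟨[c], d :: A, rfl, by simp, by simpa [Nat.even_add_one] using hL, by simp⟩
    rcases Nat.even_or_odd R.length with hR | hR
    · exact ⟨e, A', [], by simp, he, by simp, heL, by simpa using hR⟩
    · refine ⟨e, A'.dropLast, [A'.getLast hA'], ?_, he, by simp, heL, ?_⟩
      · rw [List.append_assoc, List.dropLast_append_getLast]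
      · simpa [Nat.even_add_one] using hR
  have hM : Even M.length := by
    have h1 := (JHC_length y).1
    rw [h] at h1
    simp only [List.length_append, Nat.even_iff] at *
    omega
  obtain ⟨l, z, rfl, hl, hz⟩ := JHC_cut (U := L ++ e) (V := M ++ (f ++ R)) (by rw [h]; simp) heL
  obtain ⟨a, r, rfl, ha, hr⟩ := JHC_cut (U := M) (V := f ++ R) hz.symm hM
  have n1 : NoMerge l (a ++ r) := by
    apply noMerge_of_eq
    rw [h, ← hl, ← hz]; simp
  have n2 : NoMerge a r := by
    apply noMerge_of_eq
    rw [← hz, ha, hr]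
  refine ⟨l, a, r, by simp, ?_, ?_, ⟨e, f, by rw [← ha]⟩⟩
  · have := (JHC_length a).2
    rw [← ha] at this
    simp only [List.length_append]; omega
  · rintro ⟨P, Q, rfl, hP, hQ, hs⟩
    have hs1 := hs.iterate 1
    simp only [Function.iterate_one] at hs1
    have m1 : NoMerge l P := by
      intro b hb
      have := n1 b hb
      rwa [List.append_assoc, List.head?_append_of_ne_nil _ hP] at this
    have m2 : NoMerge P Q := by
      intro b hb hb'
      refine hs.of_append_left 0 b hb ?_
      change b ∈ (Q ++ r).head?
      rwa [List.head?_append_of_ne_nil _ hQ]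
    rw [JHC_append m1, JHC_append n2.of_append_left, ← hl, ← hr] at hs1
    rw [JHC_append m2] at ha
    refine ⟨e ++ JHC P, JHC Q ++ f, by rw [ha]; simp, ?_, ?_, by simpa using hs1⟩
    · have := JHC_iter_ne_nil 1 hP
      simp only [Function.iterate_one] at this
      simp [this]
    · have := JHC_iter_ne_nil 1 hQ
      simp only [Function.iterate_one] at this
      simp [this]

/-- A long interval of a `k` days old string descends from a long interval `a`, and a split point
that becomes visible within `k` days in some window of `a` splits the descendant. -/
theorem chain (k : ℕ) : ∀ (y L A R : List ℕ) (N : ℕ), JHC^[k] y = L ++ A ++ R →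
    2 ^ k * (N + 2) ≤ A.length → ∃ l a r, y = l ++ a ++ r ∧ N ≤ a.length ∧
      (SplitIn l a r → SplitIn L A R) ∧
      ∀ j W, j ≤ k + 1 → W <:+: a → test j W = true → SplitIn L A R := by
  have cut : ∀ L A R W, W <:+: A → hasCut W = true → SplitIn L A R := by
    rintro L A R W ⟨p, q, rfl⟩ hW
    obtain ⟨P, Q, rfl, hP, hQ, hs⟩ := sep_of_hasCut hW
    refine ⟨p ++ P, Q ++ q, by simp, by simp [hP], by simp [hQ], ?_⟩
    simpa using hs (L ++ p) (q ++ R)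
  induction k with
  | zero =>
    intro y L A R N h hN
    refine ⟨L, A, R, h, by omega, id, ?_⟩
    intro j W hj hW ht
    match j, hj, ht with
    | 1, _, ht =>
      simp only [test, Bool.or_false] at ht
      exact cut _ _ _ _ hW ht
  | succ k ih =>
    intro y L A R N h hN
    rw [Function.iterate_succ_apply] at h
    obtain ⟨l', a', r', hy, hN', hs', ht'⟩ := ih (JHC y) L A R (2 * N + 2) h
      (by rw [pow_succ] at hN; nlinarith)
    obtain ⟨l, a, r, rfl, hlen, hs, hin⟩ := step_back hy (by omega)
    refine ⟨l, a, r, rfl, by omega, fun h => hs' (hs h), ?_⟩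
    intro j W hj hW ht
    match j, hj, ht with
    | j + 1, hj, ht =>
      simp only [test, Bool.or_eq_true] at ht
      rcases ht with ht | ht
      · exact hs' (hs (cut _ _ _ _ hW ht))
      · exact ht' j (core W) (by omega) ((core_infix hW).trans hin) ht

/-! ### Every window of 24 letters splits -/

/-- The inverse of the operator. -/
def un : List ℕ → List ℕ
  | c :: a :: t => List.replicate c a ++ un t
  | _ => []

/-- Necessary condition for a list to stand at an even position in a `k` days old string: reading
backwards `k` times, with either parity, never contradicts `altOK`. -/
def vf : ℕ → List ℕ → Bool
  | 0, W => altOK W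
  | k + 1, W => altOK W && (vf k (un W) || vf k (un W).tail)

theorem un_append : ∀ (l x : List ℕ), Even l.length → un (l ++ x) = un l ++ un x
  | [], _, _ => rfl
  | [_], _, he => by simp at he
  | c :: a :: l, x, he => by
    simp only [List.cons_append, un, List.append_assoc]
    rw [un_append l x (by simpa [Nat.even_add_one] using he)]

theorem un_prefix : ∀ (p r : List ℕ), un p <+: un (p ++ r)
  | [], _ => List.nil_prefix
  | [_], _ => List.nil_prefix
  | c :: a :: p, r => by
    simp only [List.cons_append, un]
    exact (List.prefix_append_right_inj _).2 (un_prefix p r)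

theorem un_rle (t : List ℕ) : ∀ a m, un (rle a m t) = List.replicate m a ++ t := by
  induction t with
  | nil => intro a m; simp [rle, un]
  | cons b t ih =>
    intro a m
    by_cases h : b = a
    · subst h; rw [rle_same, ih, List.replicate_succ']; simp
    · rw [rle_ne h]; simp [un, ih]

theorem un_JHC (z : List ℕ) : un (JHC z) = z := by
  cases z with
  | nil => rfl
  | cons a t => rw [JHC_cons, un_rle]; rfl

theorem vf_nil (k : ℕ) : vf k [] = true := by
  induction k with
  | zero => rfl
  | succ k ih => simp [vf, un, altOK, ih]

theorem vf_of_iter (k : ℕ) : ∀ (q l p r : List ℕ), altOK q = true → JHC^[k] q = l ++ p ++ r →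
    Even l.length → vf k p = true := by
  induction k with
  | zero =>
    intro q l p r hq h he
    change q = _ at h
    subst h
    rw [List.append_assoc] at hq
    exact altOK_prefix p r (altOK_drop l _ he hq)
  | succ k ih =>
    intro q l p r hq h he
    rw [Function.iterate_succ_apply'] at h
    have ha : altOK (l ++ p ++ r) = true := by rw [← h]; exact altOK_JHC _
    rw [List.append_assoc] at ha
    have hz : JHC^[k] q = un l ++ un (p ++ r) := by
      rw [← un_append _ _ he, ← List.append_assoc, ← h, un_JHC]
    obtain ⟨s, hs⟩ := un_prefix p r
    rw [← hs] at hz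
    simp only [vf, Bool.and_eq_true, Bool.or_eq_true]
    refine ⟨altOK_prefix p r (altOK_drop l _ he ha), ?_⟩
    rcases Nat.even_or_odd (un l).length with hl | hl
    · exact Or.inl (ih q _ _ s hq (by rw [hz]; simp) hl)
    · right
      cases hu : un p with
      | nil => exact vf_nil k
      | cons b t =>
        refine ih q (un l ++ [b]) t s hq (by rw [hz, hu]; simp) ?_
        simpa [Nat.even_add_one] using hl

/-- Depth-first search: every extension of `W` by `d` pairs over `{1, 2, 3}` that passes `vf 2`
shows a split point within 17 days. -/
def search : ℕ → List ℕ → Bool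
  | 0, _ => false
  | d + 1, W => !(vf 2 W) || test 17 W ||
    (search d (W ++ [1, 1]) && search d (W ++ [1, 2]) && search d (W ++ [1, 3]) &&
     search d (W ++ [2, 1]) && search d (W ++ [2, 2]) && search d (W ++ [2, 3]) &&
     search d (W ++ [3, 1]) && search d (W ++ [3, 2]) && search d (W ++ [3, 3]))

theorem search_sound (d : ℕ) : ∀ (W e : List ℕ), search d W = true → 2 * d ≤ e.length →
    (∀ x ∈ e, 1 ≤ x ∧ x ≤ 3) → (∀ p, p <+: W ++ e → vf 2 p = true) →
    ∃ W', W' <+: W ++ e ∧ test 17 W' = true := by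
  induction d with
  | zero => intro W e h; simp [search] at h
  | succ d ih =>
    intro W e h he h3 hv
    rw [search, hv W (List.prefix_append _ _)] at h
    simp only [Bool.not_true, Bool.false_or, Bool.or_eq_true, Bool.and_eq_true] at h
    rcases h with h | h
    · exact ⟨W, List.prefix_append _ _, h⟩
    · match e, he, h3, hv with
      | c :: a :: e, he, h3, hv =>
        have hc := h3 c (by simp)
        have ha := h3 a (by simp)
        have key : search d (W ++ [c, a]) = true := by
          obtain ⟨⟨⟨⟨⟨⟨⟨⟨h11, h12⟩, h13⟩, h21⟩, h22⟩, h23⟩, h31⟩, h32⟩, h33⟩ := h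
          obtain ⟨hc1, hc3⟩ := hc
          obtain ⟨ha1, ha3⟩ := ha
          interval_cases c <;> interval_cases a <;> assumption
        have := ih (W ++ [c, a]) e key (by simp only [List.length_cons] at he; omega)
          (fun x hx => h3 x (by simp [hx]))
        simpa using this (by simpa using hv)

set_option maxRecDepth 100000 in
theorem search_nil : search 12 [] = true := by decide +kernel

/-- Atoms in strings that are old enough have bounded length: a longer one would have an ancestor
containing a 24 letter window, and all of those split in time. -/
theorem atom_length_lt {q A : List ℕ} (hq : Valid q)
    (h3 : ∀ x ∈ (JHC^[2] q).dropLast, x ≤ 3) (hA : IsAtomString A) (hocc : Occ A (JHC^[27] q)) :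
    A.length < 2 ^ 25 * 28 := by
  obtain ⟨y, hy⟩ : ∃ y, y = JHC^[2] q := ⟨_, rfl⟩
  rw [show (27 : ℕ) = 25 + 2 from rfl, Function.iterate_add_apply, ← hy] at hocc
  rw [← hy] at h3
  by_contra hlen
  obtain ⟨L, R, he, h1, h2⟩ := hocc
  obtain ⟨l, a, r, hyl, hN, -, ht⟩ := chain 25 y L A R 26 he (by omega)
  obtain ⟨l', e, r', hye, hel, hlen', hr', hinf⟩ : ∃ l' e r', y = l' ++ e ++ r' ∧ Even l'.length ∧
      24 ≤ e.length ∧ r' ≠ [] ∧ e <:+: a := by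
    obtain ⟨b, a', hab, hb, hbl⟩ : ∃ b a', a = b ++ a' ∧ b.length ≤ 1 ∧ Even (l ++ b).length := by
      rcases Nat.even_or_odd l.length with hl | hl
      · exact ⟨[], a, rfl, by simp, by simpa using hl⟩
      · match a, hN with
        | c :: a, _ => exact ⟨[c], a, rfl, by simp, by simpa [Nat.even_add_one] using hl⟩
    subst hab
    rw [List.length_append] at hN
    refine ⟨l ++ b, a'.take 24, a'.drop 24 ++ r, ?_, hbl, ?_, ?_, ?_⟩
    · rw [hyl, List.append_assoc (l ++ b), ← List.append_assoc (a'.take 24),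
        List.take_append_drop]
      simp
    · rw [List.length_take]; omega
    · intro h0
      have := congrArg List.length h0
      simp only [List.length_append, List.length_drop, List.length_nil] at this
      omega
    · exact ⟨b, a'.drop 24, by rw [List.append_assoc, List.take_append_drop]⟩
  have hvalid : Valid y := by rw [hy]; exact hq.iter 2
  obtain ⟨W, hW, hWt⟩ := search_sound 12 [] e search_nil (by omega)
    (fun x hx => ⟨hvalid.2.pos x (by rw [hye]; simp [hx]), h3 x (by
      rw [hye, List.dropLast_append_of_ne_nil hr']; simp [hx])⟩)
    (by
      rintro p ⟨s, hs⟩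
      refine vf_of_iter 2 q l' p (s ++ r') hq.1 ?_ hel
      rw [← hy, hye, ← show p ++ s = e from hs]; simp)
  obtain ⟨P, Q, hPQ, hP, hQ, hs⟩ := ht 17 W (by omega) (hW.isInfix.trans hinf) hWt
  refine not_sep_of_atom hA hPQ hP hQ (sep_sub hs.of_append_left ?_)
  rw [hPQ, ← List.append_assoc] at h2
  exact h2.of_append_left

/-! ### The end of a string whose last letter is large -/

/-- The operator by structural recursion, for evaluation. -/
def look : List ℕ → List ℕ
  | [] => []
  | a :: t => rle a 1 t

theorem look_eq (x : List ℕ) : look x = JHC x := by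
  cases x with
  | nil => rfl
  | cons a t => rw [JHC_cons]; rfl

/-- The action of the operator on what precedes a final letter `n ≥ 4`. -/
def pre (x : List ℕ) : List ℕ := look x ++ [1]

theorem JHC_snoc {x : List ℕ} {n : ℕ} (h : n ∉ x.getLast?) : JHC (x ++ [n]) = pre x ++ [n] := by
  rw [JHC_append, pre, look_eq]
  · simp [JHC_cons, rle]
  · intro a ha hn
    obtain rfl : n = a := by simpa using hn
    exact h ha

theorem JHC_iter_snoc {x : List ℕ} {n : ℕ} (hn : 4 ≤ n) (h : n ∉ x.getLast?) (k : ℕ) :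
    JHC^[k] (x ++ [n]) = pre^[k] x ++ [n] ∧ n ∉ (pre^[k] x).getLast? := by
  induction k with
  | zero => exact ⟨rfl, h⟩
  | succ k ih =>
    rw [Function.iterate_succ_apply', Function.iterate_succ_apply', ih.1, JHC_snoc ih.2]
    refine ⟨rfl, ?_⟩
    simp [pre]; omega

theorem not_mem_getLast?_of_le {x : List ℕ} {n : ℕ} (hn : 4 ≤ n) (h : ∀ a ∈ x, a ≤ 3) :
    n ∉ x.getLast? := by
  intro hm
  have := h n (List.mem_of_mem_getLast? hm)
  omega

theorem pre_iter_le {x : List ℕ} {n : ℕ} (hn : 4 ≤ n) (h : ∀ a ∈ x, a ≤ 3)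
    (hv : Valid (x ++ [n])) (k : ℕ) : ∀ a ∈ pre^[k] x, a ≤ 3 := by
  have hl := not_mem_getLast?_of_le hn h
  induction k with
  | zero => exact h
  | succ k ih =>
    have hk := hv.iter k
    rw [(JHC_iter_snoc hn hl k).1] at hk
    have hf : NoFour (pre^[k] x) := fun c hc =>
      noFour_of_altOK _ hk.1 c (hc.trans (List.prefix_append _ _).isInfix)
    have := (JHC_cnt hf (fun a ha => hk.2.pos a (by simp [ha]))).2
    rw [Function.iterate_succ_apply', pre, look_eq]
    intro a ha
    rcases List.mem_append.1 ha with ha | ha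
    · rcases this a ha with h' | h'
      exacts [h', ih a h']
    · obtain rfl : a = 1 := by simpa using ha
      omega

/-- Skip the remainder of a run of the letter `a`, then read to the end. -/
def skipR (a : ℕ) : List ℕ → List ℕ
  | [] => []
  | b :: t => bif Nat.beq b a then skipR a t else rle b 1 t

/-- A suffix of `pre z` that is determined by a suffix of `z`, truncated to 40 letters. -/
def stepS (s : List ℕ) : List ℕ :=
  let r := match s with
    | [] => [1]
    | a :: t => a :: (skipR a t ++ [1])
  r.drop (r.length - 40)

theorem skipR_suffix (t : List ℕ) : ∀ a m, a :: skipR a t <:+ rle a m t := by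
  induction t with
  | nil => intro a m; exact ⟨[m], rfl⟩
  | cons b t ih =>
    intro a m
    by_cases h : b = a
    · subst h; rw [rle_same]; simpa [skipR] using ih b (m + 1)
    · rw [rle_ne h]
      simp only [skipR, beq_false_iff.2 h, cond_false]
      exact ⟨[m], rfl⟩

theorem stepS_suffix {s z : List ℕ} (h : s <:+ z) : stepS s <:+ pre z := by
  refine (List.drop_suffix _ _).trans ?_
  obtain ⟨p, rfl⟩ := h
  cases s with
  | nil => exact List.suffix_append _ _
  | cons a t =>
    obtain ⟨k, hk⟩ := JHC_suffix p a t
    obtain ⟨p', hp'⟩ := (skipR_suffix t a k).trans hk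
    exact ⟨p', by rw [pre, look_eq, ← hp']; simp⟩

theorem stepS_iter_suffix (k : ℕ) {s z : List ℕ} (h : s <:+ z) : stepS^[k] s <:+ pre^[k] z := by
  induction k with
  | zero => exact h
  | succ k ih =>
    rw [Function.iterate_succ_apply', Function.iterate_succ_apply']; exact stepS_suffix ih

/-- Conway's isotopes of neptunium are `npu ++ [n]`. -/
def npu : List ℕ :=
  [1, 3, 1, 1, 2, 2, 2, 1, 1, 3, 3, 2, 1, 1, 3, 2, 2, 1, 1, 2, 2, 1, 1, 2, 1, 3, 3, 2, 2, 1, 1]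

/-- Conway's isotopes of plutonium are `plu ++ [n]`. -/
def plu : List ℕ :=
  [3, 1, 2, 2, 1, 1, 3, 2, 2, 2, 1, 2, 2, 2, 1, 1, 2, 1, 1, 2, 3, 2, 2, 2, 1, 1]

/-- The list ends in one of the two transuranic prefixes, preceded by the letter `2`. -/
def Good (z : List ℕ) : Prop := 2 :: npu <:+ z ∨ 2 :: plu <:+ z

/-- Structural equality test of lists. -/
def same : List ℕ → List ℕ → Bool
  | [], [] => true
  | a :: s, b :: t => Nat.beq a b && same s t
  | _, _ => false

theorem eq_of_same : ∀ s t : List ℕ, same s t = true → s = t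
  | [], [], _ => rfl
  | a :: s, b :: t, h => by
    simp only [same, Bool.and_eq_true, Nat.beq_eq] at h
    rw [h.1, eq_of_same s t h.2]
  | [], _ :: _, h => by simp [same] at h
  | _ :: _, [], h => by simp [same] at h

/-- The suffix test on lists. -/
def endsIn (s : List ℕ) : List ℕ → Bool
  | [] => false
  | b :: z => same s (b :: z) || endsIn s z

theorem suffix_of_endsIn {s : List ℕ} : ∀ {z : List ℕ}, endsIn s z = true → s <:+ z
  | [], h => by simp [endsIn] at h
  | b :: z, h => by
    simp only [endsIn, Bool.or_eq_true] at h
    rcases h with h | h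
    · rw [eq_of_same _ _ h]
    · exact (suffix_of_endsIn h).trans (List.suffix_cons _ _)

/-- Boolean version of `Good`. -/
def good (z : List ℕ) : Bool := endsIn (2 :: npu) z || endsIn (2 :: plu) z

theorem Good.of_good {z : List ℕ} (h : good z = true) : Good z := by
  simp only [good, Bool.or_eq_true] at h
  exact h.imp suffix_of_endsIn suffix_of_endsIn

theorem Good.mono {y z : List ℕ} (h : Good y) (hz : y <:+ z) : Good z :=
  h.imp (fun h => h.trans hz) (fun h => h.trans hz)

/-- Search over the possible ends of a string, growing leftwards by pairs: after 27 days each of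
them has turned into a transuranic element. -/
def searchL : ℕ → List ℕ → Bool
  | 0, _ => false
  | d + 1, s => !altOK s || good (stepS^[27] s) ||
    (good (stepS^[19] (pre^[8] s)) &&
      (searchL d (1 :: 1 :: s) && searchL d (1 :: 2 :: s) && searchL d (1 :: 3 :: s) &&
       searchL d (2 :: 1 :: s) && searchL d (2 :: 2 :: s) && searchL d (2 :: 3 :: s) &&
       searchL d (3 :: 1 :: s) && searchL d (3 :: 2 :: s) && searchL d (3 :: 3 :: s)))

theorem searchL_sound (d : ℕ) : ∀ (l s : List ℕ), searchL d s = true → Even l.length →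
    altOK (l ++ s) = true → (∀ a ∈ l, 1 ≤ a ∧ a ≤ 3) → Good (pre^[27] (l ++ s)) := by
  induction d with
  | zero => intro l s h; simp [searchL] at h
  | succ d ih =>
    intro l s h he ha hl
    rw [searchL, altOK_drop l s he ha] at h
    simp only [Bool.not_true, Bool.false_or, Bool.or_eq_true, Bool.and_eq_true] at h
    rcases h with h | ⟨h0, h⟩
    · exact (Good.of_good h).mono (stepS_iter_suffix 27 (List.suffix_append _ _))
    · rcases List.eq_nil_or_concat l with rfl | ⟨l, a, rfl⟩
      · rw [List.nil_append, show (27 : ℕ) = 19 + 8 from rfl, Function.iterate_add_apply]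
        exact (Good.of_good h0).mono (stepS_iter_suffix 19 (List.suffix_refl _))
      · rcases List.eq_nil_or_concat l with rfl | ⟨l, k, rfl⟩
        · simp at he
        have hc := hl k (by simp)
        have ha' := hl a (by simp)
        have key : searchL d (k :: a :: s) = true := by
          obtain ⟨⟨⟨⟨⟨⟨⟨⟨h11, h12⟩, h13⟩, h21⟩, h22⟩, h23⟩, h31⟩, h32⟩, h33⟩ := h
          obtain ⟨hc1, hc3⟩ := hc
          obtain ⟨ha1, ha3⟩ := ha'
          interval_cases k <;> interval_cases a <;> assumption
        have := ih l (k :: a :: s) key (by simpa [Nat.even_add_one] using he) (by simpa using ha)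
          (fun x hx => hl x (by simp [hx]))
        simpa using this

set_option maxRecDepth 100000 in
theorem searchL_root : searchL 6 [1] = true ∧ searchL 6 [2] = true ∧ searchL 6 [3] = true := by
  decide +kernel

theorem occ_of_suffix {s z : List ℕ} (hs : okStart s = true) (h : 2 :: s <:+ z) (n : ℕ) :
    ∃ L, z ++ [n] = L ++ (s ++ [n]) ∧ (∀ a ∈ L, a ∈ z) ∧ Sep L (s ++ [n]) := by
  obtain ⟨p, rfl⟩ := h
  refine ⟨p ++ [2], by simp, ?_, sep_two (by simp) (start_of_okStart hs _)⟩
  intro a ha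
  simp only [List.mem_append, List.mem_cons] at ha ⊢
  tauto

theorem transuranic_end {x : List ℕ} {n : ℕ} (hn : 4 ≤ n) (h : ∀ a ∈ x, a ≤ 3)
    (hv : Valid (x ++ [n])) (he : Even (x ++ [n]).length) :
    ∃ L s, JHC^[27] (x ++ [n]) = L ++ (s ++ [n]) ∧ (s = npu ∨ s = plu) ∧ Sep L (s ++ [n]) ∧
      ∀ a ∈ L, a ≤ 3 := by
  have hg : Good (pre^[27] x) := by
    have hal := altOK_prefix _ _ hv.1
    have hp : ∀ a ∈ x, 1 ≤ a := fun a ha => hv.2.pos a (by simp [ha])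
    rcases List.eq_nil_or_concat x with rfl | ⟨l, c, rfl⟩
    · simp at he
    have hl : Even l.length := by simpa [Nat.even_add_one] using he
    simp only [List.concat_eq_append] at *
    have hc : searchL 6 [c] = true := by
      have h1 := h c (by simp)
      have h2 := hp c (by simp)
      rcases (show c = 1 ∨ c = 2 ∨ c = 3 by omega) with rfl | rfl | rfl
      exacts [searchL_root.1, searchL_root.2.1, searchL_root.2.2]
    exact searchL_sound 6 l [c] hc hl hal
      (fun a ha => ⟨hp a (by simp [ha]), h a (by simp [ha])⟩)
  rw [(JHC_iter_snoc hn (not_mem_getLast?_of_le hn h) 27).1]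
  rcases hg with hg | hg
  · obtain ⟨L, h1, h2, h3⟩ := occ_of_suffix (s := npu) rfl hg n
    exact ⟨L, npu, h1, Or.inl rfl, h3, fun a ha => pre_iter_le hn h hv 27 a (h2 a ha)⟩
  · obtain ⟨L, h1, h2, h3⟩ := occ_of_suffix (s := plu) rfl hg n
    exact ⟨L, plu, h1, Or.inr rfl, h3, fun a ha => pre_iter_le hn h hv 27 a (h2 a ha)⟩

/-! ### The transuranic atoms -/

/-- Within `k` days what precedes the large letter after `t` begins with `a`. -/
def hit (a : ℕ) : ℕ → List ℕ → Bool
  | 0, _ => false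
  | k + 1, t => (match t with | [] => false | b :: _ => Nat.beq b a) || hit a k (pre t)

/-- No cut inside the list, nor the one at its end, is a split point. -/
def noCut : List ℕ → Bool
  | [] => true
  | a :: t => hit a 12 t && noCut t

theorem hit_sound (a k : ℕ) : ∀ t, hit a k t = true → ∃ j, a ∈ (pre^[j] t).head? := by
  induction k with
  | zero => intro t h; simp [hit] at h
  | succ k ih =>
    intro t h
    simp only [hit, Bool.or_eq_true] at h
    rcases h with h | h
    · refine ⟨0, ?_⟩
      match t, h with
      | b :: t, h => simpa using h
    · obtain ⟨j, hj⟩ := ih _ h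
      exact ⟨j + 1, by rwa [Function.iterate_succ_apply]⟩

theorem noCut_sound : ∀ (p : List ℕ) (a : ℕ) (t : List ℕ), noCut (p ++ a :: t) = true →
    hit a 12 t = true
  | [], a, t, h => by
    simp only [List.nil_append, noCut, Bool.and_eq_true] at h; exact h.1
  | b :: p, a, t, h => by
    simp only [List.cons_append, noCut, Bool.and_eq_true] at h
    exact noCut_sound p a t h.2

theorem atom_of_noCut {s : List ℕ} (h : noCut s = true) (h3 : ∀ a ∈ s, 1 ≤ a ∧ a ≤ 3) {n : ℕ}
    (hn : 4 ≤ n) : IsAtomString (s ++ [n]) := by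
  refine atom_of_sep ⟨by simp, ?_⟩ ?_
  · intro x hx
    rcases List.mem_append.1 hx with hx | hx
    · exact (h3 x hx).1
    · obtain rfl : x = n := by simpa using hx
      omega
  · intro P Q hPQ hP hQ hs
    obtain ⟨t, rfl, rfl⟩ : ∃ t, Q = t ++ [n] ∧ s = P ++ t := by
      rcases List.eq_nil_or_concat Q with rfl | ⟨t, b, rfl⟩
      · exact absurd rfl hQ
      · rw [List.concat_eq_append, ← List.append_assoc] at hPQ
        obtain ⟨h1, h2⟩ := List.append_inj' hPQ rfl
        exact ⟨t, by rw [List.concat_eq_append, h2], h1⟩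
    rcases List.eq_nil_or_concat P with rfl | ⟨p, a, rfl⟩
    · exact hP rfl
    rw [List.concat_eq_append, List.append_assoc] at h
    obtain ⟨j, hj⟩ := hit_sound a 12 t (noCut_sound p a t h)
    have hl := not_mem_getLast?_of_le hn (fun x hx => (h3 x (List.mem_append_right _ hx)).2)
    refine hs j a (by simp) ?_
    rw [(JHC_iter_snoc hn hl j).1]
    exact List.mem_head?_append_of_mem_head? hj

theorem npu_le : ∀ a ∈ npu, 1 ≤ a ∧ a ≤ 3 := by decide

theorem plu_le : ∀ a ∈ plu, 1 ≤ a ∧ a ≤ 3 := by decide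

set_option maxRecDepth 100000 in
theorem npu_noCut : noCut npu = true := by decide +kernel

set_option maxRecDepth 100000 in
theorem plu_noCut : noCut plu = true := by decide +kernel

set_option maxRecDepth 100000 in
/-- The element `[n]` itself turns into both transuranic atoms, on alternate days. -/
theorem transuranic_days :
    (endsIn (2 :: npu) (stepS^[20] (pre^[9] [])) = true ∧
      endsIn (2 :: plu) (stepS^[21] (pre^[9] [])) = true) ∨
    (endsIn (2 :: plu) (stepS^[20] (pre^[9] [])) = true ∧
      endsIn (2 :: npu) (stepS^[21] (pre^[9] [])) = true) := by
  decide +kernel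

/-! ### The closed system -/

/-- `A` is an atom in the splitting of some 29 days old string. -/
def Mature (A : List ℕ) : Prop := IsAtomString A ∧ ∃ w, IsString w ∧ Occ A (JHC^[29] w)

theorem Occ.mem {A x : List ℕ} (h : Occ A x) : ∀ a ∈ A, a ∈ x := by
  obtain ⟨L, R, rfl, -, -⟩ := h
  intro a ha
  simp [ha]

/-- The atoms of a 27 days old descendant of a `Valid` string are found by cutting the ancestor
behind its letters `≥ 4`. -/
theorem classify {A : List ℕ} (hA : IsAtomString A) (q : List ℕ) (hq : Valid q)
    (hocc : Occ A (JHC^[27] q)) :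
    ((∀ x ∈ A, x ≤ 3) ∧ A.length < 2 ^ 25 * 28) ∨
      ∃ n, 4 ≤ n ∧ (A = npu ++ [n] ∨ A = plu ++ [n]) := by
  induction hlen : q.length using Nat.strong_induction_on generalizing q with
  | _ N ih =>
    rcases hq.2.pieces with h3 | ⟨x, n, y', rfl, hx, hn, hc, hc', he⟩
    · left
      refine ⟨fun a ha => hq.iter_le h3 27 a (hocc.mem a ha),
        atom_length_lt hq (fun a ha => hq.iter_le h3 2 a (List.mem_of_mem_dropLast ha)) hA hocc⟩
    · have hv : Valid (x ++ [n]) := ⟨altOK_prefix _ _ hq.1, hc⟩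
      have hv' : Valid y' := ⟨altOK_drop _ _ he hq.1, hc'⟩
      have hs : Sep (x ++ [n]) y' := sep_large hn hv'
      rw [hs.iter 27] at hocc
      rcases hocc.of_append hA (hs.iterate 27) with h | h
      · obtain ⟨L, s, hL, hsu, hsep, hL3⟩ := transuranic_end hn hx hv he
        have hat : IsAtomString (s ++ [n]) := by
          rcases hsu with rfl | rfl
          exacts [atom_of_noCut npu_noCut npu_le hn, atom_of_noCut plu_noCut plu_le hn]
        have h' := h
        rw [hL] at h'
        rcases h'.of_append hA hsep with h' | h'
        · left
          refine ⟨fun a ha => hL3 a (h'.mem a ha), atom_length_lt hv ?_ hA h⟩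
          rw [(JHC_iter_snoc hn (not_mem_getLast?_of_le hn hx) 2).1, List.dropLast_concat]
          exact pre_iter_le hn hx hv 2
        · right
          have := h'.eq_of_atom hA hat
          exact ⟨n, hn, by rcases hsu with rfl | rfl <;> simp [this]⟩
      · refine ih y'.length ?_ y' hv' h rfl
        rw [← hlen]; simp only [List.length_append, List.length_singleton]; omega

theorem Mature.classify {A : List ℕ} (h : Mature A) :
    ((∀ x ∈ A, x ≤ 3) ∧ A.length < 2 ^ 25 * 28) ∨
      ∃ n, 4 ≤ n ∧ (A = npu ++ [n] ∨ A = plu ++ [n]) := by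
  obtain ⟨hA, w, hw, hocc⟩ := h
  rw [show (29 : ℕ) = 27 + 2 from rfl, Function.iterate_add_apply] at hocc
  exact Audioactive.classify hA (JHC^[2] w) (valid_two hw) hocc

theorem finite_small (B : ℕ) : {A : List ℕ | (∀ x ∈ A, x ≤ 3) ∧ A.length < B}.Finite := by
  have h1 := List.finite_length_lt (Set.Iic 3 : Set ℕ) B
  refine (h1.image (List.map Subtype.val)).subset ?_
  rintro A ⟨h3, hB⟩
  have : A ∈ Set.range (List.map ((↑) : (Set.Iic 3 : Set ℕ) → ℕ)) := by
    rw [Set.range_list_map_coe]; exact h3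
  obtain ⟨l, rfl⟩ := this
  exact ⟨l, by simpa using hB, rfl⟩

theorem mature_npu_plu {n : ℕ} (hn : 4 ≤ n) : Mature (npu ++ [n]) ∧ Mature (plu ++ [n]) := by
  have hs : IsString [n] := ⟨by simp, by simp; omega⟩
  have key : ∀ s k, okStart s = true → endsIn (2 :: s) (stepS^[k] (pre^[9] [])) = true →
      Occ (s ++ [n]) (JHC^[k + 9] [n]) := by
    intro s k h0 h
    have h1 := (suffix_of_endsIn h).trans (stepS_iter_suffix k (List.suffix_refl _))
    rw [← Function.iterate_add_apply] at h1
    have h2 := (JHC_iter_snoc (x := []) hn (by simp) (k + 9)).1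
    rw [List.nil_append] at h2
    obtain ⟨L, hL, -, hsep⟩ := occ_of_suffix h0 h1 n
    exact ⟨L, [], by rw [h2, hL]; simp, by simpa using hsep, sep_nil_right _⟩
  have a1 := atom_of_noCut npu_noCut npu_le hn
  have a2 := atom_of_noCut plu_noCut plu_le hn
  rcases transuranic_days with ⟨h1, h2⟩ | ⟨h1, h2⟩
  · refine ⟨⟨a1, [n], hs, key _ 20 rfl h1⟩, ⟨a2, JHC [n], isString_JHC hs, ?_⟩⟩
    rw [← Function.iterate_succ_apply]
    exact key _ 21 rfl h2
  · refine ⟨⟨a1, JHC [n], isString_JHC hs, ?_⟩, ⟨a2, [n], hs, key _ 20 rfl h1⟩⟩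
    rw [← Function.iterate_succ_apply]
    exact key _ 21 rfl h2

/-- Applying the operator to a mature atom produces mature atoms only. -/
theorem Mature.decay {A : List ℕ} (h : Mature A) :
    ∃ As, SplitCompound (JHC A) As ∧ ∀ B ∈ As, Mature B := by
  obtain ⟨hA, w, hw, hocc⟩ := h
  obtain ⟨As, hAs⟩ := exists_splitCompound (JHC A) (isString_JHC hA.1)
  refine ⟨As, hAs, fun B hB => ⟨hAs.1 B hB, JHC w, isString_JHC hw, ?_⟩⟩
  have := hocc.trans (k := 1) (occ_of_splitCompound hAs hB)
  rwa [← Function.iterate_add_apply, Nat.add_comm, Function.iterate_add_apply] at this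

theorem exists_system : ∃ sys : ClosedAudioactiveSystem,
    ∀ A, Mature A → InSystem sys.S sys.u sys.v A := by
  classical
  have hfin : {A : List ℕ | Mature A ∧ ∀ x ∈ A, x ≤ 3}.Finite := by
    refine (finite_small (2 ^ 25 * 28)).subset ?_
    rintro A ⟨hA, h3⟩
    rcases hA.classify with h | ⟨n, hn, rfl | rfl⟩
    · exact h
    · have := h3 n (by simp); omega
    · have := h3 n (by simp); omega
  have key : ∀ A, Mature A ↔ InSystem hfin.toFinset npu plu A := by
    intro A
    constructor
    · intro hA
      rcases hA.classify with h | h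
      · exact Or.inl (by simpa using ⟨hA, h.1⟩)
      · exact Or.inr h
    · rintro (h | ⟨n, hn, rfl | rfl⟩)
      · exact ((Set.Finite.mem_toFinset hfin).1 h).1
      · exact (mature_npu_plu hn).1
      · exact (mature_npu_plu hn).2
  have small : ∀ x : ℕ, 1 ≤ x ∧ x ≤ 3 → x ∈ ({1, 2, 3} : Set ℕ) := by
    intro x hx
    simp only [Set.mem_insert_iff, Set.mem_singleton_iff]
    omega
  refine ⟨{ S := hfin.toFinset
            u := npu
            v := plu
            S_atom := fun A hA => ((Set.Finite.mem_toFinset hfin).1 hA).1.1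
            S_entries := fun A hA x hx => small x ⟨?_, ?_⟩
            u_entries := fun x hx => small x (npu_le x hx)
            v_entries := fun x hx => small x (plu_le x hx)
            u_atom := fun n hn => (mature_npu_plu hn).1.1
            v_atom := fun n hn => (mature_npu_plu hn).2.1
            closed := ?_ }, fun A hA => (key A).1 hA⟩
  · exact ((Set.Finite.mem_toFinset hfin).1 hA).1.1.1.2 x hx
  · exact ((Set.Finite.mem_toFinset hfin).1 hA).2 x hx
  · intro A hA
    obtain ⟨As, h1, h2⟩ := ((key A).2 hA).decay
    exact ⟨As, h1, fun B hB => (key B).1 (h2 B hB)⟩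

end Audioactive

/-- Longevity bound: every atom in the splitting of a 9-day-old string decays in
at most 20 days into elements of a closed audioactive system. -/
theorem mature_atom_longevity_le_20 :
    ∃ sys : ClosedAudioactiveSystem,
      ∀ w : List ℕ, IsString w → (∀ x ∈ w, x ∈ ({1, 2, 3} : Set ℕ)) →
        ∀ As : List (List ℕ), SplitCompound (JHC^[9] w) As →
          ∀ A ∈ As,
            ∃ Bs : List (List ℕ), SplitCompound (JHC^[20] A) Bs ∧
              ∀ B ∈ Bs, InSystem sys.S sys.u sys.v B := by
  obtain ⟨sys, hsys⟩ := Audioactive.exists_system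
  refine ⟨sys, fun w hw _ As hAs A hA => ?_⟩
  obtain ⟨Bs, hBs⟩ := Audioactive.exists_splitCompound (JHC^[20] A)
    (Audioactive.isString_iter (hAs.1 A hA).1 20)
  refine ⟨Bs, hBs, fun B hB => hsys B ⟨hBs.1 B hB, w, hw, ?_⟩⟩
  have := (Audioactive.occ_of_splitCompound hAs hA).trans (k := 20)
    (Audioactive.occ_of_splitCompound hBs hB)
  rwa [← Function.iterate_add_apply] at this
end

section
/- Let C_0 := [1] and C_i := JHC(C_{i-1}) for i > 0 (Conway's sequence 1, 11, 21, 1211, 111221, …). Then the sequence of ratios length(C_{i+1}) / length(C_i) converges to a real number λ (Conway's constant) satisfying 1.3035 < λ < 1.3036. -/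
/-!
Every iterate of `JHC` on `[1]`, from the seventh on, is a concatenation of Conway's 92 elements,
and `JHC` acts on such concatenations element by element: `x ++ y` satisfies
`JHC (x ++ y) = JHC x ++ JHC y` whenever the last entry of `x` differs from the first entry of `y`,
and the relation `Sep` between neighbouring elements, which forces this, is inherited by their
decay products (`JHC_flatMap`, `adm_flatMap`). Hence the length `len n i` of the `n`-th descendant
of element `i` satisfies the linear recurrence `len (n + 1) i = ∑ j ∈ decay i, len n j`.

Hydrogen (the string `22`) is a fixed point of `JHC`, so the decay matrix is not primitive.
However, the increments `len (n + 1) i - len n i` satisfy the same recurrence and vanish at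
hydrogen, and the matrix on the other 91 elements is primitive (its 44th power is positive,
`reach_check`). For a positive solution of the recurrence, each growth ratio is a weighted average
of the ratios of the previous generation, so an interval containing all ratios keeps containing
them; primitivity makes the interval shrink geometrically (`Good.contract`). All ratios of
increments therefore converge to one limit `λ`, which lies in any interval containing all ratios of
some generation; the evaluation of generations 97 to 99 (`ratios_check`) gives
`1.30351 ≤ λ ≤ 1.30359`. A Stolz–Cesàro argument (`tendsto_ratio`) transfers the limit from the
increments to the lengths.
-/

open Filter

namespace Conway

/-! ### The elements and their decay -/

/-- Conway's periodic table. The entry at position `i` (the atomic number, from 1 = hydrogen to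
92 = uranium) consists of the string of the element, written as a decimal number, and of the
atomic numbers of the elements into which it decays under one application of `JHC`. The entry at
position 0 is a dummy. -/
def table : List (ℕ × List ℕ) := [
  (0, []),
  (22, [1]),
  (13112221133211322112211213322112, [72, 91, 1, 20, 3]),
  (312211322212221121123222112, [2]),
  (111312211312113221133211322112211213322112, [32, 20, 3]),
  (1321132122211322212221121123222112, [4]),
  (3113112211322112211213322112, [5]),
  (111312212221121123222112, [6]),
  (132112211213322112, [7]),
  (31121123222112, [8]),
  (111213322112, [9]),
  (123222112, [10]),
  (3113322112, [61, 11]),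
  (1113222112, [12]),
  (1322112, [13]),
  (311311222112, [67, 14]),
  (1113122112, [15]),
  (132112, [16]),
  (3112, [17]),
  (1112, [18]),
  (12, [19]),
  (3113112221133112, [67, 91, 1, 20, 27]),
  (11131221131112, [21]),
  (13211312, [22]),
  (31132, [23]),
  (111311222112, [24, 14]),
  (13122112, [25]),
  (32112, [26]),
  (11133112, [30, 27]),
  (131112, [28]),
  (312, [29]),
  (13221133122211332, [63, 20, 89, 1, 20, 30]),
  (31131122211311122113222, [67, 31]),
  (11131221131211322113322112, [32, 11]),
  (13211321222113222112, [33]),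
  (3113112211322112, [34]),
  (11131221222112, [35]),
  (1321122112, [36]),
  (3112112, [37]),
  (1112133, [38, 92]),
  (12322211331222113112211, [39, 1, 20, 43]),
  (1113122113322113111221131221, [68, 40]),
  (13211322211312113211, [41]),
  (311322113212221, [42]),
  (132211331222113112211, [63, 20, 43]),
  (311311222113111221131221, [67, 44]),
  (111312211312113211, [45]),
  (132113212221, [46]),
  (3113112211, [47]),
  (11131221, [48]),
  (13211, [49]),
  (3112221, [61, 50]),
  (1322113312211, [63, 20, 51]),
  (311311222113111221, [67, 52]),
  (11131221131211, [53]),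
  (13211321, [54]),
  (311311, [55]),
  (11131, [56]),
  (1321133112, [57, 1, 20, 27]),
  (31131112, [58]),
  (111312, [59]),
  (132, [60]),
  (311332, [61, 20, 30]),
  (1113222, [62]),
  (13221133112, [63, 20, 27]),
  (3113112221131112, [67, 64]),
  (111312211312, [65]),
  (1321132, [66]),
  (311311222, [67, 61]),
  (11131221133112, [68, 20, 27]),
  (1321131112, [69]),
  (311312, [70]),
  (11132, [71]),
  (13112221133211322112211213322113, [72, 91, 1, 20, 74]),
  (312211322212221121123222113, [73]),
  (111312211312113221133211322112211213322113, [32, 20, 74]),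
  (1321132122211322212221121123222113, [75]),
  (3113112211322112211213322113, [76]),
  (111312212221121123222113, [77]),
  (132112211213322113, [78]),
  (31121123222113, [79]),
  (111213322113, [80]),
  (123222113, [81]),
  (3113322113, [61, 82]),
  (1113222113, [83]),
  (1322113, [84]),
  (311311222113, [67, 85]),
  (1113122113, [86]),
  (132113, [87]),
  (3113, [88]),
  (1113, [89]),
  (13, [90]),
  (3, [91])]

/-- The string of the element with atomic number `i` (empty unless `1 ≤ i ≤ 92`). -/
def elemStr (i : ℕ) : List ℕ := (Nat.digits 10 (table.getD i (0, [])).1).reverse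

/-- The atomic numbers of the elements into which `JHC (elemStr i)` splits, in order. -/
def decay (i : ℕ) : List ℕ := (table.getD i (0, [])).2

/-- First entry of the string of element `i`. -/
def firstDigit (i : ℕ) : ℕ := (elemStr i).headI

/-- Last entry of the string of element `i`. -/
def lastDigit (i : ℕ) : ℕ := (elemStr i).getLastI

/-- A sufficient condition for `elemStr a ++ elemStr b` to split between the two factors: exactly
one of the two properties, `a` ending in 2 and `b` starting with 2, holds. Decay preserves each of
these properties and its negation. -/
def Sep (a b : ℕ) : Prop := lastDigit a = 2 ↔ firstDigit b ≠ 2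

instance : DecidableRel Sep := fun a b => by unfold Sep; infer_instance

/-- The solution of the recurrence `x (n + 1) i = f [x n j | j ∈ decay i]` with `x 0 = x₀`.
The bare recursor is used because it evaluates well in the kernel. -/
def sol (f : List ℕ → ℕ) (x₀ : ℕ → ℕ) (n : ℕ) : ℕ → ℕ :=
  Nat.rec x₀ (fun _ ih i => f ((decay i).map ih)) n

/-- `len n i` is the length of the `n`-th descendant of element `i`. -/
def len : ℕ → ℕ → ℕ := sol List.sum fun i => (elemStr i).length

/-- Bitwise disjunction of a list of numbers. -/
def bitOr (l : List ℕ) : ℕ := l.foldr (· ||| ·) 0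

/-- `reach n i`, read as a bit set, is the set of elements occurring in the `n`-th descendant of
element `i`. -/
def reach : ℕ → ℕ → ℕ := sol bitOr fun i => 2 ^ i

/-! ### Finite verifications -/

theorem table_spec : ∀ i < 93, 1 ≤ i → elemStr i ≠ [] ∧ decay i ≠ [] ∧
    JHC (elemStr i) = (decay i).flatMap elemStr ∧ (decay i).IsChain Sep ∧
    (∀ j ∈ decay i, 1 ≤ j ∧ j < 93) ∧
    lastDigit (decay i).getLastI = lastDigit i ∧
    (firstDigit (decay i).headI = 2 ↔ firstDigit i = 2) := by
  decide +kernel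

/-- At generation 97 the length increments of all elements other than hydrogen (number 1,
whose length is constant) are positive, and they grow by nearly the same factor in the next step. -/
theorem ratios_check : ∀ i < 93,
    130351 * (len 98 i - len 97 i) ≤ 100000 * (len 99 i - len 98 i) ∧
    100000 * (len 99 i - len 98 i) ≤ 130359 * (len 98 i - len 97 i) ∧
    len 97 i ≤ len 98 i ∧ len 98 i ≤ len 99 i ∧
    (2 ≤ i → len 97 i < len 98 i) := by
  decide +kernel

/-- Primitivity: after 44 steps every element other than hydrogen contains all of them. -/
theorem reach_check : ∀ i < 93, 2 ≤ i → reach 44 i / 2 ^ 2 = 2 ^ 91 - 1 := by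
  decide +kernel

theorem hydrogen_check : ∀ i < 2, len 98 i = len 97 i := by
  decide +kernel

/-- The seventh iterate `1113213211` splits as hafnium followed by tin. -/
theorem start_check : JHC^[7] [1] = [72, 50].flatMap elemStr ∧ [72, 50].IsChain Sep := by
  decide +kernel

theorem decay_of_le {i : ℕ} (hi : 93 ≤ i) : decay i = [] := by
  have h : table.length ≤ i := hi
  simp [decay, List.getD_eq_getElem?_getD, List.getElem?_eq_none h]

/-! ### Splitting into elements -/

theorem JHC_append {x y : List ℕ} (h : ∀ a ∈ x.getLast?, ∀ b ∈ y.head?, a ≠ b) :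
    JHC (x ++ y) = JHC x ++ JHC y := by
  have key : (x ++ y).splitBy (· == ·) = x.splitBy (· == ·) ++ y.splitBy (· == ·) := by
    apply List.splitBy_append
    intro a ha b hb
    simpa using h a ha b hb
  simp [JHC, key]

/-- A sequence of elements in which every two neighbours satisfy `Sep`. -/
def Adm (s : List ℕ) : Prop := (∀ i ∈ s, 1 ≤ i ∧ i < 93) ∧ s.IsChain Sep

theorem getLastI_of_mem {l : List ℕ} {a : ℕ} (h : a ∈ l.getLast?) : l.getLastI = a := by
  rw [List.getLastI_eq_getLast?_getD, Option.mem_def.1 h]; rfl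

theorem headI_of_mem {l : List ℕ} {a : ℕ} (h : a ∈ l.head?) : l.headI = a := by
  cases l <;> simp_all

theorem JHC_flatMap : ∀ {s : List ℕ}, Adm s →
    JHC (s.flatMap elemStr) = (s.flatMap decay).flatMap elemStr
  | [], _ => by simp [JHC]
  | [a], h => by
    have := h.1 a (by simp)
    simpa using (table_spec a this.2 this.1).2.2.1
  | a :: b :: t, h => by
    have ha := h.1 a (by simp)
    have hb := h.1 b (by simp)
    have ht : Adm (b :: t) := ⟨fun i hi => h.1 i (List.mem_cons_of_mem _ hi), h.2.tail⟩
    have hs : Sep a b := by have := h.2; simp at this; exact this.1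
    rw [List.flatMap_cons, JHC_append, JHC_flatMap ht, (table_spec a ha.2 ha.1).2.2.1]
    · simp
    intro x hx y hy hxy
    have hx' : lastDigit a = x := getLastI_of_mem hx
    have hy' : firstDigit b = y := by
      apply headI_of_mem
      have := (table_spec b hb.2 hb.1).1
      cases hbs : elemStr b <;> simp_all
    unfold Sep at hs
    subst hxy
    rw [hx', hy'] at hs
    tauto

theorem adm_flatMap {s : List ℕ} (h : Adm s) : Adm (s.flatMap decay) := by
  constructor
  · intro j hj
    obtain ⟨i, hi, hij⟩ := List.mem_flatMap.1 hj
    exact (table_spec i (h.1 i hi).2 (h.1 i hi).1).2.2.2.2.1 j hij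
  · rw [List.flatMap_def, List.isChain_flatten]
    · constructor
      · intro l hl
        obtain ⟨i, hi, rfl⟩ := List.mem_map.1 hl
        exact (table_spec i (h.1 i hi).2 (h.1 i hi).1).2.2.2.1
      · rw [List.isChain_map]
        refine h.2.imp_of_mem_imp ?_
        intro a b ha hb hab x hx y hy
        obtain ⟨-, -, -, -, -, h1, -⟩ := table_spec a (h.1 a ha).2 (h.1 a ha).1
        obtain ⟨-, -, -, -, -, -, h2⟩ := table_spec b (h.1 b hb).2 (h.1 b hb).1
        rw [getLastI_of_mem hx] at h1
        rw [headI_of_mem hy] at h2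
        unfold Sep at *
        rw [h1, hab, not_iff_not, h2]
    · intro hn
      obtain ⟨i, hi, h0⟩ := List.mem_map.1 hn
      exact (table_spec i (h.1 i hi).2 (h.1 i hi).1).2.1 h0

theorem length_flatMap (n : ℕ) : ∀ {s : List ℕ}, Adm s →
    (JHC^[n] (s.flatMap elemStr)).length = (s.map (len n)).sum := by
  induction n with
  | zero =>
    intro s _
    simp [List.length_flatMap]; rfl
  | succ n ih =>
    intro s h
    rw [Function.iterate_succ_apply, JHC_flatMap h, ih (adm_flatMap h), List.map_flatMap,
      List.flatMap_def, List.sum_flatten, List.map_map]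
    rfl

theorem length_JHC (n : ℕ) : (JHC^[n + 7] [1]).length = len n 72 + len n 50 := by
  rw [Function.iterate_add_apply, start_check.1,
    length_flatMap n ⟨by decide, start_check.2⟩]
  simp

/-! ### The linear recurrence -/

/-- `X` solves the linear recurrence given by the decay of elements. -/
def IsSol (X : ℕ → ℕ → ℝ) : Prop := ∀ n i, X (n + 1) i = ((decay i).map (X n)).sum

theorem IsSol.comb {X : ℕ → ℕ → ℝ} (hX : IsSol X) (a b : ℝ) :
    IsSol fun n i => a * X (n + 1) i + b * X n i := by
  intro n i
  simp only
  rw [List.sum_map_add, List.sum_map_mul_left, List.sum_map_mul_left, ← hX, ← hX]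

theorem IsSol.nonneg {X : ℕ → ℕ → ℝ} (hX : IsSol X) {n : ℕ} (h : ∀ i, 0 ≤ X n i) (k : ℕ) :
    ∀ i, 0 ≤ X (n + k) i := by
  induction k with
  | zero => exact h
  | succ k ih =>
    intro i
    rw [← add_assoc, hX]
    apply List.sum_nonneg
    intro x hx
    obtain ⟨j, -, rfl⟩ := List.mem_map.1 hx
    exact ih j

theorem exists_of_testBit_bitOr {l : List ℕ} {j : ℕ} (h : (bitOr l).testBit j = true) :
    ∃ r ∈ l, r.testBit j = true := by
  induction l with
  | nil => simp [bitOr] at h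
  | cons a l ih =>
    have h' : (a ||| bitOr l).testBit j = true := h
    rw [Nat.testBit_or, Bool.or_eq_true] at h'
    rcases h' with h' | h'
    · exact ⟨a, by simp, h'⟩
    · obtain ⟨r, hr, hr'⟩ := ih h'
      exact ⟨r, List.mem_cons_of_mem _ hr, hr'⟩

/-- A nonnegative solution at element `i` dominates its earlier value at every element occurring in
the descendant of `i`. -/
theorem IsSol.le_of_reach {X : ℕ → ℕ → ℝ} (hX : IsSol X) {n : ℕ} (h : ∀ i, 0 ≤ X n i) {j : ℕ}
    (k : ℕ) : ∀ i, (reach k i).testBit j = true → X n j ≤ X (n + k) i := by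
  induction k with
  | zero =>
    intro i hi
    have hi' : (2 ^ i).testBit j = true := hi
    rw [Nat.testBit_two_pow, decide_eq_true_eq] at hi'
    simp [hi']
  | succ k ih =>
    intro i hi
    have hi' : (bitOr ((decay i).map (reach k))).testBit j = true := hi
    obtain ⟨r, hr, hrj⟩ := exists_of_testBit_bitOr hi'
    obtain ⟨l, hl, rfl⟩ := List.mem_map.1 hr
    rw [← add_assoc, hX]
    refine (ih l hrj).trans (List.single_le_sum ?_ _ (List.mem_map_of_mem hl))
    intro x hx
    obtain ⟨m, -, rfl⟩ := List.mem_map.1 hx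
    exact hX.nonneg h k m

theorem testBit_reach {i j : ℕ} (hi : 2 ≤ i ∧ i < 93) (hj : 2 ≤ j ∧ j < 93) :
    (reach 44 i).testBit j = true := by
  have h := congrArg (fun r => r.testBit (j - 2)) (reach_check i hi.2 hi.1)
  simp only [Nat.testBit_div_two_pow, Nat.testBit_two_pow_sub_one] at h
  rw [Nat.sub_add_cancel hj.1] at h
  rw [h]
  simp only [decide_eq_true_eq]
  omega

/-- `Between X n m M` says that all growth ratios of `X` from generation `n` to `n + 1` lie in
`[m, M]`; it is stated without division since `X` vanishes at hydrogen. -/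
def Between (X : ℕ → ℕ → ℝ) (n : ℕ) (m M : ℝ) : Prop :=
  ∀ i, m * X n i ≤ X (n + 1) i ∧ X (n + 1) i ≤ M * X n i

theorem Between.add {X : ℕ → ℕ → ℝ} (hX : IsSol X) {n : ℕ} {m M : ℝ} (h : Between X n m M)
    (k : ℕ) : Between X (n + k) m M := by
  intro i
  have h1 := (hX.comb 1 (-m)).nonneg (n := n) (fun i => by linarith [(h i).1]) k i
  have h2 := (hX.comb (-1) M).nonneg (n := n) (fun i => by linarith [(h i).2]) k i
  constructor <;> linarith

/-- The data needed for the contraction argument: a solution that is positive on all elements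
except hydrogen, vanishes elsewhere, and whose growth ratios initially lie in `[1, 2]`. -/
structure Good (X : ℕ → ℕ → ℝ) : Prop where
  isSol : IsSol X
  pos : ∀ n i, 2 ≤ i ∧ i < 93 → 0 < X n i
  zero : ∀ n i, ¬ (2 ≤ i ∧ i < 93) → X n i = 0
  between : Between X 0 1 2

theorem Good.nonneg {X : ℕ → ℕ → ℝ} (hX : Good X) (n i : ℕ) : 0 ≤ X n i := by
  by_cases hi : 2 ≤ i ∧ i < 93
  · exact (hX.pos n i hi).le
  · exact (hX.zero n i hi).ge

theorem Good.le_two_pow {X : ℕ → ℕ → ℝ} (hX : Good X) (n k i : ℕ) :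
    X (n + k) i ≤ 2 ^ k * X n i := by
  induction k with
  | zero => simp
  | succ k ih =>
    have h := (hX.between.add hX.isSol (n + k) i).2
    rw [zero_add] at h
    rw [← add_assoc, pow_succ]
    linarith

/-- All elements are comparable to helium (number 2), uniformly in the generation. -/
theorem Good.comparable {X : ℕ → ℕ → ℝ} (hX : Good X) (n i : ℕ) :
    X (n + 44) i ≤ 4 ^ 44 * X n 2 := by
  by_cases hi : 2 ≤ i ∧ i < 93
  · have h1 := hX.le_two_pow n 44 i
    have h2 := hX.isSol.le_of_reach (hX.nonneg n) 44 2 (testBit_reach (by norm_num) hi)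
    have h3 := hX.le_two_pow n 44 2
    have h4 : (4 : ℝ) ^ 44 = 2 ^ 44 * 2 ^ 44 := by norm_num
    rw [h4]
    nlinarith
  · rw [hX.zero _ i hi]
    exact mul_nonneg (by positivity) (hX.nonneg n 2)

/-- Over 44 generations the interval of growth ratios shrinks by a fixed factor: if helium's ratio
lies in the upper half of `[m, M]`, it pulls up all ratios, and otherwise pulls them all down. -/
theorem Good.contract {X : ℕ → ℕ → ℝ} (hX : Good X) {n : ℕ} {m M : ℝ} (hmM : m ≤ M)
    (h : Between X n m M) : ∃ m' M', m' ≤ M' ∧ Between X (n + 44) m' M' ∧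
      M' - m' = (1 - 1 / (2 * 4 ^ 44)) * (M - m) := by
  set K : ℝ := 4 ^ 44 with hK
  have hK1 : 1 ≤ K := by rw [hK]; norm_num
  have hK0 : 0 < K := by linarith
  set δ : ℝ := 1 / (2 * K) with hδ
  have hδK : δ * K = 1 / 2 := by rw [hδ]; field_simp
  have hδ0 : 0 < δ := by positivity
  have hcomp : ∀ i, X (n + 44) i ≤ K * X n 2 := hX.comparable n
  clear_value δ K
  clear hδ hK
  have hδ1 : δ ≤ 1 := by linarith [mul_le_mul_of_nonneg_left hK1 hδ0.le]
  have hB := h.add hX.isSol 44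
  have hw : 0 ≤ M - m := by linarith
  have hsmall : ∀ i, δ * (M - m) * X (n + 44) i ≤ (M - m) / 2 * X n 2 := by
    intro i
    calc δ * (M - m) * X (n + 44) i ≤ δ * (M - m) * (K * X n 2) :=
          mul_le_mul_of_nonneg_left (hcomp i) (by positivity)
      _ = (δ * K) * (M - m) * X n 2 := by ring
      _ = (M - m) / 2 * X n 2 := by rw [hδK]; ring
  rcases le_total ((m + M) / 2 * X n 2) (X (n + 1) 2) with hc | hc
  · refine ⟨m + δ * (M - m), M, by nlinarith, fun i => ⟨?_, (hB i).2⟩, by ring⟩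
    by_cases hi : 2 ≤ i ∧ i < 93
    · have h1 := (hX.isSol.comb 1 (-m)).le_of_reach (n := n) (fun i => by linarith [(h i).1]) 44 i
        (testBit_reach hi (j := 2) (by norm_num))
      have h2 := hsmall i
      linarith
    · simp [hX.zero _ i hi]
  · refine ⟨m, M - δ * (M - m), by nlinarith, fun i => ⟨(hB i).1, ?_⟩, by ring⟩
    by_cases hi : 2 ≤ i ∧ i < 93
    · have h1 := (hX.isSol.comb (-1) M).le_of_reach (n := n) (fun i => by linarith [(h i).2]) 44 i
        (testBit_reach hi (j := 2) (by norm_num))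
      have h2 := hsmall i
      linarith
    · simp [hX.zero _ i hi]

/-- All growth ratios of a good solution converge to a common limit. -/
theorem Good.exists_limit {X : ℕ → ℕ → ℝ} (hX : Good X) {a b : ℝ} (hab : a ≤ b)
    (h : Between X 0 a b) : ∃ lam, a ≤ lam ∧ lam ≤ b ∧
      ∀ ε > 0, ∃ n, Between X n (lam - ε) (lam + ε) := by
  have hle : ∀ n n' m m' M M', Between X n m M → Between X n' m' M' → m ≤ M' := by
    intro n n' m m' M M' h h'
    have h1 := (h.add hX.isSol n' 2).1
    have h2 := (h'.add hX.isSol n 2).2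
    rw [add_comm n' n] at h2
    exact le_of_mul_le_mul_right (h1.trans h2) (hX.pos _ 2 (by norm_num))
  set S : Set ℝ := {m | ∃ n M, Between X n m M} with hS
  have hup : ∀ n m M, Between X n m M → M ∈ upperBounds S := by
    rintro n m M h x ⟨n', M', h'⟩
    exact hle _ _ _ _ _ _ h' h
  have hin : ∀ n m M, Between X n m M → m ≤ sSup S ∧ sSup S ≤ M := fun n m M h =>
    ⟨le_csSup ⟨M, hup n m M h⟩ ⟨n, M, h⟩, csSup_le ⟨m, n, M, h⟩ (hup n m M h)⟩
  refine ⟨sSup S, (hin 0 a b h).1, (hin 0 a b h).2, fun ε hε => ?_⟩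
  set q : ℝ := 1 - 1 / (2 * 4 ^ 44) with hq
  have hq0 : 0 ≤ q := by rw [hq]; norm_num
  have hq1 : q < 1 := by rw [hq]; norm_num
  have hiter : ∀ t : ℕ, ∃ n m M, m ≤ M ∧ Between X n m M ∧ M - m = q ^ t * (b - a) := by
    intro t
    induction t with
    | zero => exact ⟨0, a, b, hab, h, by simp⟩
    | succ t ih =>
      obtain ⟨n, m, M, hmM, hB, hw⟩ := ih
      obtain ⟨m', M', hmM', hB', hw'⟩ := hX.contract hmM hB
      exact ⟨n + 44, m', M', hmM', hB', by rw [hw', hw, pow_succ]; ring⟩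
  have hlim : Tendsto (fun t : ℕ => q ^ t * (b - a)) atTop (nhds 0) := by
    simpa using (tendsto_pow_atTop_nhds_zero_of_lt_one hq0 hq1).mul_const (b - a)
  obtain ⟨t, ht⟩ := (hlim.eventually (gt_mem_nhds hε)).exists
  obtain ⟨n, m, M, -, hB, hw⟩ := hiter t
  have hm := hin n m M hB
  refine ⟨n, fun i => ⟨le_trans ?_ (hB i).1, (hB i).2.trans ?_⟩⟩ <;>
    exact mul_le_mul_of_nonneg_right (by linarith) (hX.nonneg n i)

/-! ### Length increments -/

/-- The length increment of the descendant of element `i` at generation `97 + n`. -/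
def incr (n i : ℕ) : ℝ := (len (97 + n + 1) i : ℝ) - len (97 + n) i

theorem incr_isSol : IsSol incr := by
  have key : IsSol fun n i => (len (97 + n) i : ℝ) := by
    intro n i
    have : len (97 + n + 1) i = ((decay i).map (len (97 + n))).sum := rfl
    simp only [← add_assoc, this, Nat.cast_list_sum, List.map_map]
    rfl
  intro n i
  have := key.comb 1 (-1) n i
  convert this using 2
  · simp only [incr, ← add_assoc]; ring
  · congr 1
    funext j
    simp only [incr, ← add_assoc]; ring

theorem incr_of_le {n i : ℕ} (hi : 93 ≤ i) : incr n i = 0 := by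
  have h : ∀ k, len (k + 1) i = 0 := fun k => by
    change ((decay i).map (len k)).sum = 0
    simp [decay_of_le hi]
  have h1 : len (97 + n) i = 0 := by
    rw [show 97 + n = 96 + n + 1 by omega]; exact h _
  simp [incr, h, h1]

theorem incr_check {i : ℕ} (hi : i < 93) :
    1.30351 * incr 0 i ≤ incr 1 i ∧ incr 1 i ≤ 1.30359 * incr 0 i ∧ 0 ≤ incr 0 i ∧
      (2 ≤ i → 0 < incr 0 i) := by
  obtain ⟨h1, h2, h3, h4, h5⟩ := ratios_check i hi
  have e0 : incr 0 i = ((len 98 i - len 97 i : ℕ) : ℝ) := by rw [Nat.cast_sub h3]; rfl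
  have e1 : incr 1 i = ((len 99 i - len 98 i : ℕ) : ℝ) := by rw [Nat.cast_sub h4]; rfl
  rw [e0, e1]
  have h1' : (130351 : ℝ) * ((len 98 i - len 97 i : ℕ) : ℝ) ≤
      100000 * ((len 99 i - len 98 i : ℕ) : ℝ) := by exact_mod_cast h1
  have h2' : (100000 : ℝ) * ((len 99 i - len 98 i : ℕ) : ℝ) ≤
      130359 * ((len 98 i - len 97 i : ℕ) : ℝ) := by exact_mod_cast h2
  refine ⟨by linarith, by linarith, Nat.cast_nonneg _, fun hi2 => ?_⟩
  exact_mod_cast Nat.sub_pos_of_lt (h5 hi2)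

theorem incr_between : Between incr 0 1.30351 1.30359 := by
  intro i
  rcases lt_or_ge i 93 with hi | hi
  · exact ⟨(incr_check hi).1, (incr_check hi).2.1⟩
  · simp [incr_of_le hi]

theorem incr_zero_nonneg (i : ℕ) : 0 ≤ incr 0 i := by
  rcases lt_or_ge i 93 with hi | hi
  · exact (incr_check hi).2.2.1
  · exact (incr_of_le hi).ge

theorem incr_good : Good incr where
  isSol := incr_isSol
  pos := by
    intro n i hi
    induction n with
    | zero => exact (incr_check hi.2).2.2.2 hi.1
    | succ n ih =>
      have h := (incr_between.add incr_isSol n i).1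
      rw [zero_add] at h
      linarith
  zero := by
    intro n i hi
    rcases lt_or_ge i 93 with h93 | h93
    · have hi' : i = 0 ∨ i = 1 := by omega
      -- number 0 is the empty string, and hydrogen decays to itself
      induction n with
      | zero =>
        have h := hydrogen_check i (by omega)
        simp [incr, h]
      | succ n ih =>
        rw [incr_isSol]
        rcases hi' with rfl | rfl
        · rw [show decay 0 = [] from rfl]
          simp
        · rw [show decay 1 = [1] from rfl]
          simpa using ih
    · exact incr_of_le h93
  between := fun i => by
    have h := incr_between i
    have h0 := incr_zero_nonneg i
    constructor <;> linarith [h.1, h.2]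

/-! ### From increments to lengths -/

/-- A form of the Stolz–Cesàro theorem: asymptotic growth ratios of increments pass to the
sequence. -/
theorem tendsto_ratio {L : ℕ → ℝ} {lam : ℝ} (hL : ∀ n, 1 ≤ L (n + 1) - L n)
    (h : ∀ ε > 0, ∃ n₀, ∀ n ≥ n₀,
      |(L (n + 2) - L (n + 1)) - lam * (L (n + 1) - L n)| ≤ ε * (L (n + 1) - L n)) :
    Tendsto (fun n => L (n + 1) / L n) atTop (nhds lam) := by
  have hsum : ∀ n, ∑ k ∈ Finset.range n, (L (k + 1) - L k) = L n - L 0 :=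
    fun n => Finset.sum_range_sub L n
  have hge : ∀ n : ℕ, (n : ℝ) ≤ L n - L 0 := by
    intro n
    rw [← hsum]
    simpa using Finset.card_nsmul_le_sum (Finset.range n) (fun k => L (k + 1) - L k) 1
      (fun k _ => hL k)
  have htop : Tendsto (fun n => L n - L 0) atTop atTop :=
    tendsto_atTop_mono hge tendsto_natCast_atTop_atTop
  have htopL : Tendsto L atTop atTop := by
    simpa using tendsto_atTop_add_const_right _ (L 0) htop
  have ho : (fun n => (L (n + 2) - L (n + 1)) - lam * (L (n + 1) - L n)) =o[atTop]
      fun n => L (n + 1) - L n := by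
    rw [Asymptotics.isLittleO_iff]
    intro ε hε
    obtain ⟨n₀, hn₀⟩ := h ε hε
    filter_upwards [eventually_ge_atTop n₀] with n hn
    rw [Real.norm_eq_abs, Real.norm_eq_abs,
      abs_of_nonneg (by linarith [hL n] : 0 ≤ L (n + 1) - L n)]
    exact hn₀ n hn
  have hS := ho.sum_range (fun n => by simpa using (zero_le_one.trans (hL n)))
    (by simpa only [hsum] using htop)
  simp only [hsum, Finset.sum_sub_distrib, ← Finset.mul_sum] at hS
  have hS' : (fun n => (L (n + 1) - L 1) - lam * (L n - L 0)) =o[atTop] fun n => L n - L 0 := by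
    refine hS.congr_left fun n => ?_
    have h1 := Finset.sum_range_sub (fun k => L (k + 1)) n
    simp only [Finset.sum_sub_distrib, zero_add] at h1
    rw [h1]
  have hq := hS'.tendsto_div_nhds_zero
  have hL0 : Tendsto (fun n => L 0 / L n) atTop (nhds 0) := htopL.const_div_atTop _
  have hL1 : Tendsto (fun n => (L 1 - lam * L 0) / L n) atTop (nhds 0) := htopL.const_div_atTop _
  have hfin := ((hq.mul (tendsto_const_nhds (x := (1 : ℝ)) |>.sub hL0)).add hL1).add_const lam
  simp only [sub_zero, mul_one, zero_add] at hfin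
  refine hfin.congr' ?_
  filter_upwards [htopL.eventually_gt_atTop 0, htop.eventually_gt_atTop 0] with n h1 h2
  field_simp
  ring

end Conway

/-- Conway's sequence has length ratios converging to Conway's constant,
which lies strictly between 1.3035 and 1.3036. -/
theorem conway_constant_bounds :
    ∃ lam : ℝ,
      Tendsto
        (fun i : ℕ => ((JHC^[i + 1] [1]).length : ℝ) / ((JHC^[i] [1]).length : ℝ))
        atTop (nhds lam) ∧
      1.3035 < lam ∧ lam < 1.3036 := by
  obtain ⟨lam, hlo, hhi, hlim⟩ :=
    Conway.incr_good.exists_limit (by norm_num) Conway.incr_between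
  refine ⟨lam, ?_, by linarith, by linarith⟩
  -- 7 steps lead to hafnium and tin, and 97 more into the range of `Conway.incr`
  rw [← tendsto_add_atTop_iff_nat 104]
  set L : ℕ → ℝ := fun n => (Conway.len (97 + n) 72 : ℝ) + Conway.len (97 + n) 50 with hLdef
  have hJ : ∀ n, ((JHC^[n + 104] [1]).length : ℝ) = L n := by
    intro n
    rw [show n + 104 = 97 + n + 7 by omega, Conway.length_JHC]
    simp [hLdef]
  have hd : ∀ n, L (n + 1) - L n = Conway.incr n 72 + Conway.incr n 50 := by
    intro n
    simp only [hLdef, Conway.incr, ← add_assoc]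
    ring
  have hpos : ∀ n, 0 < L (n + 1) - L n := by
    intro n
    rw [hd]
    exact add_pos (Conway.incr_good.pos n 72 (by norm_num))
      (Conway.incr_good.pos n 50 (by norm_num))
  have key : Tendsto (fun n => L (n + 1) / L n) atTop (nhds lam) := by
    apply Conway.tendsto_ratio
    · intro n
      -- a positive difference of integers is at least 1
      have h := hpos n
      simp only [hLdef] at h ⊢
      have h' : Conway.len (97 + n) 72 + Conway.len (97 + n) 50 <
          Conway.len (97 + (n + 1)) 72 + Conway.len (97 + (n + 1)) 50 := by
        have := sub_pos.1 h
        exact_mod_cast this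
      have h'' : ((Conway.len (97 + n) 72 + Conway.len (97 + n) 50 + 1 : ℕ) : ℝ) ≤
          ((Conway.len (97 + (n + 1)) 72 + Conway.len (97 + (n + 1)) 50 : ℕ) : ℝ) :=
        Nat.cast_le.2 h'
      push_cast at h''
      linarith
    · intro ε hε
      obtain ⟨n₀, hn₀⟩ := hlim ε hε
      refine ⟨n₀, fun n hn => ?_⟩
      have hB := hn₀.add Conway.incr_isSol (n - n₀)
      rw [Nat.add_sub_cancel' hn] at hB
      have h1 := hB 72
      have h2 := hB 50
      rw [show n + 2 = n + 1 + 1 from rfl, hd, hd, abs_le]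
      constructor <;> linarith [h1.1, h1.2, h2.1, h2.2]
  refine key.congr fun n => ?_
  rw [← hJ, ← hJ, show n + 1 + 104 = n + 104 + 1 by omega]
end

section
/- Let C_0 := [1] and C_i := JHC(C_{i-1}) for i > 0. There exists a real number λ such that length(C_{i+1}) / length(C_i) → λ as i → ∞, and this λ (Conway's constant) is an algebraic number whose minimal polynomial over ℚ has degree 71. -/
/-!
The growth rate of the look-and-say sequence exists and is a root of an irreducible polynomial `P`
of degree `71` (Conway's polynomial, `conwayPoly`).

*Recurrence.* The seventh iterate of `[1]` is the concatenation of two of Conway's 92 common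
elements. Adjacent elements that occur never interact (`JHC_flatMap_str`), so that the lengths
`len n e` of the descendants of an element `e` satisfy
`len (n + 1) e = ∑ len n d`, the sum being over the elements `d` into which `e` decays. By linearity,
the recurrence with characteristic polynomial `(X - 1) * P` holds for all `n` as soon as it holds for
`n = 0` and all elements, which is a finite computation (`shiftEval_len`). Hence the differences
`d n` of consecutive lengths satisfy the recurrence of `P` itself, and they are positive for large
`n` because no element except hydrogen stops growing (`len_lt_len_succ`).

*Convergence.* The polynomial `P` has a multiple in which the leading coefficient is positive, the
next one is negative and all others are nonpositive (`mulCoeffs_multiplier`). So some positive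
multiple of `d (n + 1)` is a combination of earlier terms with nonnegative coefficients. It follows
that a bound for sufficiently many consecutive ratios `d (k + 1) / d k` persists, and
the interval containing a window of ratios shrinks by a fixed factor, so that the ratios converge
(`exists_tendsto_ratio`). By Stolz–Cesàro the ratios of the lengths have the same limit, and dividing
the recurrence by `d n` shows that the limit is a root of `P`. Perron–Frobenius theory is not needed.

*Irreducibility.* All complex roots of `P` have absolute value less than `15`, so any nonconstant
monic factor of `P` over `ℤ` has absolute value at least `58 - 15 = 43` at `-58`. But `P(-58)` is `-12`
times a prime number with 125 digits (`prime_of_125_digits`, by a chain of Pocklington certificates),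
so one of two complementary factors has a value dividing `12` (`irreducible_conwayPoly`).
-/


open Filter

/-! ### Primality certificates -/

/-- `b ^ e mod N` by repeated squaring; the argument `k` bounds the number of binary digits of the
exponent `e` that are read. -/
def powMod (N b : ℕ) : ℕ → ℕ → ℕ
  | 0, _ => 1 % N
  | k + 1, e => powMod N b k (e / 2) ^ 2 * b ^ (e % 2) % N

theorem powMod_eq (N b k e : ℕ) (h : e < 2 ^ k) : powMod N b k e = b ^ e % N := by
  induction k generalizing e with
  | zero => simp at h; simp [powMod, h]
  | succ k ih =>
    rw [powMod, ih _ (by rw [pow_succ] at h; omega), Nat.mul_mod, ← Nat.pow_mod, ← Nat.mul_mod,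
      ← pow_mul, ← pow_add, mul_comm, Nat.div_add_mod]

/-- The computable hypothesis of Pocklington's criterion with base `2`: writing `N = q * m + 1`,
`2 ^ (N - 1) = 1` modulo `N` and `2 ^ m - 1` is prime to `N`. -/
def pockCheck (N q : ℕ) : Bool :=
  decide (N < 2 ^ 512) && decide (N = q * ((N - 1) / q) + 1) &&
    (powMod N 2 512 (N - 1) == 1) && (Nat.gcd (powMod N 2 512 ((N - 1) / q) + (N - 1)) N == 1)

/-- Pocklington: modulo a prime `p ∣ N`, the element `2 ^ m` has order exactly `q`. -/
theorem pocklington_dvd {N q p : ℕ} (hq : q.Prime) (h : pockCheck N q = true)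
    (hp : p.Prime) (hpN : p ∣ N) : q ∣ p - 1 := by
  obtain ⟨m, hm⟩ : ∃ m, m = (N - 1) / q := ⟨_, rfl⟩
  simp only [pockCheck, Bool.and_eq_true, decide_eq_true_eq, beq_iff_eq, ← hm] at h
  obtain ⟨⟨⟨hk, hN⟩, h1⟩, h2⟩ := h
  rw [powMod_eq _ _ _ _ (by omega)] at h1
  rw [powMod_eq _ _ _ _ (by have := Nat.div_le_self (N - 1) q; omega)] at h2
  have : Fact p.Prime := ⟨hp⟩
  have : Fact q.Prime := ⟨hq⟩
  have hN0 : ((N : ℕ) : ZMod p) = 0 := (ZMod.natCast_eq_zero_iff _ _).2 hpN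
  have cast_mod : ∀ x : ℕ, ((x % N : ℕ) : ZMod p) = x := fun x => by
    conv_rhs => rw [← Nat.mod_add_div x N]
    simp [hN0]
  have hb : ((2 : ZMod p) ^ m) ^ q = 1 := by
    have := cast_mod (2 ^ (N - 1))
    rw [h1, show N - 1 = q * m by omega] at this
    rw [← pow_mul, mul_comm]
    exact_mod_cast this.symm
  have hb1 : (2 : ZMod p) ^ m ≠ 1 := by
    intro h
    have h3 : p ∣ 2 ^ m % N + (N - 1) := by
      rw [← ZMod.natCast_eq_zero_iff, Nat.cast_add, cast_mod, Nat.cast_sub (by omega), hN0]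
      push_cast
      rw [h]
      ring
    have := Nat.dvd_gcd h3 hpN
    rw [h2] at this
    exact hp.one_lt.ne' (Nat.dvd_one.1 this)
  rw [← orderOf_eq_prime hb hb1]
  refine ZMod.orderOf_dvd_card_sub_one fun h => ?_
  rw [h, zero_pow hq.ne_zero] at hb
  exact zero_ne_one hb

theorem prime_of_forall_dvd {N F : ℕ} (hN : 1 < N) (hF : N < (F + 1) * (F + 1))
    (h : ∀ p, p.Prime → p ∣ N → F ∣ p - 1) : N.Prime := by
  by_contra hc
  have hp := Nat.minFac_prime hN.ne'
  have h1 := Nat.le_of_dvd (Nat.sub_pos_of_lt hp.one_lt) (h _ hp (Nat.minFac_dvd N))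
  have h2 := Nat.minFac_sq_le_self (by omega) hc
  have h3 : F + 1 ≤ N.minFac := by have := hp.one_lt; omega
  nlinarith

theorem prime_of_large_prime {N : ℕ} (q : ℕ) (hq : q.Prime) (hN : 1 < N)
    (hF : N < (q + 1) * (q + 1)) (h : pockCheck N q = true) : N.Prime :=
  prime_of_forall_dvd hN hF fun _ hp hpN => pocklington_dvd hq h hp hpN

theorem prime_334358417 : Nat.Prime 334358417 := by
  refine prime_of_forall_dvd (F := 1223 * 2441) (by norm_num) (by norm_num) fun p hp hpN => ?_
  exact Nat.Coprime.mul_dvd_of_dvd_of_dvd (by norm_num)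
    (pocklington_dvd (by norm_num) (by decide +kernel) hp hpN)
    (pocklington_dvd (by norm_num) (by decide +kernel) hp hpN)

theorem prime_38785576373 : Nat.Prime 38785576373 :=
  prime_of_large_prime _ prime_334358417 (by norm_num) (by norm_num) (by decide +kernel)

theorem prime_11239868581 : Nat.Prime 11239868581 :=
  prime_of_large_prime 234457 (by norm_num) (by norm_num) (by norm_num) (by decide +kernel)

theorem prime_of_44_digits : Nat.Prime 11677154141228386255613788443608395541608123 := by
  refine prime_of_forall_dvd (F := 38785576373 * (11239868581 * 72911)) (by norm_num) (by norm_num)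
    fun p hp hpN => ?_
  exact Nat.Coprime.mul_dvd_of_dvd_of_dvd (by norm_num)
    (pocklington_dvd prime_38785576373 (by decide +kernel) hp hpN)
    (Nat.Coprime.mul_dvd_of_dvd_of_dvd (by norm_num)
      (pocklington_dvd prime_11239868581 (by decide +kernel) hp hpN)
      (pocklington_dvd (by norm_num) (by decide +kernel) hp hpN))

theorem prime_of_56_digits :
    Nat.Prime 46371546620739477011169035054698000979390797330091311363 :=
  prime_of_large_prime _ prime_of_44_digits (by norm_num) (by norm_num) (by decide +kernel)

theorem prime_of_107_digits :
    Nat.Prime 32048329181157703843374112969065824666901289684479075379057469616254657283517186312770486586468347486042661 :=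
  prime_of_large_prime _ prime_of_56_digits (by norm_num) (by norm_num) (by decide +kernel)

theorem prime_of_125_digits :
    Nat.Prime 13307043925898791166171975981169342537018574247555388685678381337078212037299373590643630724604113209095914757311893436843121 :=
  prime_of_large_prime _ prime_of_107_digits (by norm_num) (by norm_num) (by decide +kernel)

/-! ### The common elements -/

/-- Prepends the decimal digits of a number to a list; the first argument bounds their number. -/
def consDigits : ℕ → ℕ → List ℕ → List ℕ
  | 0, _, acc => acc
  | k + 1, n, acc => if n = 0 then acc else consDigits k (n / 10) (n % 10 :: acc)

/-- The 92 common elements. Each entry consists of a string, written as a decimal numeral, and the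
list of (positions in this table of) the elements into which it decays. -/
def elements : List (ℕ × List ℕ) :=
  [(11132, [2]), (13211, [3]), (311312, [4]), (11131221, [5]), (1321131112, [6]), (3113112211, [7]),
   (11131221133112, [8, 9, 10]), (132113212221, [11]), (311311222, [12, 13]), (12, [14]),
   (32112, [15]), (111312211312113211, [16]), (1321132, [17]), (132, [18]), (1112, [19]),
   (13122112, [20]), (311311222113111221131221, [12, 21]), (111312211312, [22]), (111312, [23]),
   (3112, [24]), (111311222112, [25, 26]), (132211331222113112211, [27, 9, 28]),
   (3113112221131112, [12, 29]), (31131112, [30]), (132112, [31]), (31132, [32]), (1322112, [33]),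
   (1113222, [34]), (311322113212221, [35]), (13221133112, [27, 9, 10]),
   (1321133112, [36, 37, 9, 10]), (1113122112, [38]), (13211312, [39]), (1113222112, [40]),
   (311332, [13, 9, 41]), (13211322211312113211, [42]), (11131, [43]), (22, [37]),
   (311311222112, [12, 26]), (11131221131112, [44]), (3113322112, [13, 45]), (312, [46]),
   (1113122113322113111221131221, [8, 47]), (311311, [48]), (3113112221133112, [12, 49, 37, 9, 10]),
   (123222112, [50]), (131112, [51]), (12322211331222113112211, [52, 37, 9, 28]), (13211321, [53]),
   (13, [54]), (111213322112, [55]), (11133112, [41, 10]), (1112133, [56, 57]),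
   (11131221131211, [58]), (1113, [59]), (31121123222112, [60]), (3112112, [61]), (3, [49]),
   (311311222113111221, [12, 62]), (3113, [63]), (132112211213322112, [64]), (1321122112, [65]),
   (1322113312211, [27, 9, 66]), (132113, [67]), (111312212221121123222112, [68]),
   (11131221222112, [69]), (3112221, [13, 1]), (1113122113, [70]),
   (3113112211322112211213322112, [71]), (3113112211322112, [72]), (311311222113, [12, 73]),
   (1321132122211322212221121123222112, [74]), (13211321222113222112, [75]), (1322113, [76]),
   (111312211312113221133211322112211213322112, [77, 9, 78]),
   (11131221131211322113322112, [77, 45]), (1113222113, [79]), (31131122211311122113222, [12, 80]),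
   (312211322212221121123222112, [81]), (3113322113, [13, 82]),
   (13221133122211332, [27, 9, 59, 37, 9, 41]),
   (13112221133211322112211213322112, [0, 49, 37, 9, 78]), (123222113, [83]), (111213322113, [84]),
   (31121123222113, [85]), (132112211213322113, [86]), (111312212221121123222113, [87]),
   (3113112211322112211213322113, [88]), (1321132122211322212221121123222113, [89]),
   (111312211312113221133211322112211213322113, [77, 9, 90]), (312211322212221121123222113, [91]),
   (13112221133211322112211213322113, [0, 49, 37, 9, 90])]

/-- Looks up an entry of the table. Numbers outside the range stand for hydrogen, so that every
property of all entries holds for all natural numbers. -/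
def entry (e : ℕ) : ℕ × List ℕ := elements.getD e (22, [37])

/-- The string of the element `e`. -/
def str (e : ℕ) : List ℕ := consDigits 42 (entry e).1 []

/-- The elements into which `e` decays. -/
def decay (e : ℕ) : List ℕ := (entry e).2

theorem forall_of_elements {p : ℕ → Prop} (h : ∀ e < 92, p e)
    (hp : ∀ e e', entry e = entry e' → p e' → p e) (e : ℕ) : p e := by
  by_cases he : e < 92
  · exact h e he
  · refine hp e 37 ?_ (h 37 (by norm_num))
    rw [entry, List.getD_eq_default _ _ (by simpa [elements] using he)]
    rfl

/-- The last digit of the string of `e`; it is not changed by decay. -/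
def lastDigit (e : ℕ) : ℕ := (str e).getLastD 0

/-- The digits with which the descendants of `e` start (up to generation `8`, after which nothing
new occurs). -/
def initials (e : ℕ) : ℕ → List ℕ
  | 0 => [(str e).headD 0]
  | k + 1 => (str e).headD 0 :: initials ((decay e).headD 0) k

/-- Two adjacent elements never interact: the last digit of the first one is different from all
initial digits of the descendants of the second one. -/
def NoInteraction (a b : ℕ) : Prop := lastDigit a ∉ initials b 8

instance : DecidableRel NoInteraction := fun a b =>
  inferInstanceAs (Decidable (lastDigit a ∉ initials b 8))

theorem JHC_append {v w : List ℕ} (hv : v ≠ []) (hw : w ≠ [])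
    (h : v.getLastD 0 ≠ w.headD 0) : JHC (v ++ w) = JHC v ++ JHC w := by
  unfold JHC
  rw [List.splitBy_append, List.flatMap_append]
  intro x hx y hy
  cases w with
  | nil => exact absurd rfl hw
  | cons b w =>
    obtain ⟨v, a, rfl⟩ := (List.eq_nil_or_concat' v).resolve_left hv
    simp_all

theorem str_ne_nil (e : ℕ) : str e ≠ [] :=
  forall_of_elements (p := fun e => str e ≠ []) (by decide +kernel)
    (fun a b h => by simp only [str, h, imp_self]) e

theorem decay_ne_nil (e : ℕ) : decay e ≠ [] :=
  forall_of_elements (p := fun e => decay e ≠ []) (by decide +kernel)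
    (fun a b h => by simp only [decay, h, imp_self]) e

theorem JHC_str (e : ℕ) : JHC (str e) = (decay e).flatMap str :=
  forall_of_elements (p := fun e => JHC (str e) = (decay e).flatMap str) (by decide +kernel)
    (fun a b h => by simp only [str, decay, h, imp_self]) e

theorem lastDigit_decay (e : ℕ) : lastDigit ((decay e).getLastD 0) = lastDigit e :=
  forall_of_elements (p := fun e => lastDigit ((decay e).getLastD 0) = lastDigit e)
    (by decide +kernel) (fun a b h => by simp only [lastDigit, str, decay, h, imp_self]) e

theorem initials_decay (e : ℕ) : initials ((decay e).headD 0) 8 ⊆ initials e 8 :=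
  forall_of_elements (p := fun e => initials ((decay e).headD 0) 8 ⊆ initials e 8)
    (by decide +kernel) (fun a b h => by simp only [initials, str, decay, h, imp_self]) e

theorem isChain_decay (e : ℕ) : (decay e).IsChain NoInteraction :=
  forall_of_elements (p := fun e => (decay e).IsChain NoInteraction)
    (by decide +kernel) (fun a b h => by simp only [decay, h, imp_self]) e

theorem NoInteraction.ne {a b : ℕ} (h : NoInteraction a b) :
    (str a).getLastD 0 ≠ (str b).headD 0 := fun h' => h (by
  rw [lastDigit, h']
  exact List.mem_cons_self)

theorem NoInteraction.decay {a b : ℕ} (h : NoInteraction a b) :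
    NoInteraction ((decay a).getLastD 0) ((decay b).headD 0) := fun h' =>
  h (initials_decay b (lastDigit_decay a ▸ h'))

theorem getLastD_decay (a : ℕ) :
    ∀ x ∈ (decay a).getLast?, x = (decay a).getLastD 0 := by
  intro x hx
  rw [List.getLastD_eq_getLast?, Option.mem_def.1 hx, Option.getD_some]

theorem headD_flatMap_decay (b : ℕ) (es : List ℕ) :
    ∀ y ∈ ((b :: es).flatMap decay).head?, y = (decay b).headD 0 := by
  intro y hy
  have := decay_ne_nil b
  cases h : decay b with
  | nil => contradiction
  | cons c l => simp_all

/-- One step of `JHC` on a string composed of non-interacting elements is the simultaneous decay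
of all these elements. -/
theorem JHC_flatMap_str (es : List ℕ) (h : es.IsChain NoInteraction) :
    JHC (es.flatMap str) = (es.flatMap decay).flatMap str ∧
      (es.flatMap decay).IsChain NoInteraction := by
  induction es with
  | nil => exact ⟨rfl, List.isChain_nil⟩
  | cons a es ih =>
    cases es with
    | nil => simp [JHC_str a, isChain_decay a]
    | cons b es =>
      obtain ⟨hab, hc⟩ := List.isChain_cons_cons.1 h
      obtain ⟨ih1, ih2⟩ := ih hc
      constructor
      · have hne : (str a).getLastD 0 ≠ ((b :: es).flatMap str).headD 0 := by
          have h1 := hab.ne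
          have := str_ne_nil b
          cases hb : str b with
          | nil => contradiction
          | cons c l =>
            rw [hb] at h1
            rwa [List.flatMap_cons, hb]
        rw [List.flatMap_cons, JHC_append (str_ne_nil a) (by simp [str_ne_nil]) hne, ih1, JHC_str,
          ← List.flatMap_append, ← List.flatMap_cons]
      · rw [List.flatMap_cons]
        refine (isChain_decay a).append ih2 fun x hx y hy => ?_
        rw [headD_flatMap_decay b es y hy, getLastD_decay a x hx]
        exact hab.decay

/-- The length of the `n`-th iterate of the string of `e`. -/
def len : ℕ → ℕ → ℕ
  | 0, e => (str e).length
  | n + 1, e => ((decay e).map (len n)).sum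

theorem length_iterate (n : ℕ) (es : List ℕ) (h : es.IsChain NoInteraction) :
    (JHC^[n] (es.flatMap str)).length = (es.map (len n)).sum := by
  induction n generalizing es with
  | zero => simp [List.length_flatMap, len]
  | succ n ih =>
    obtain ⟨h1, h2⟩ := JHC_flatMap_str es h
    rw [Function.iterate_succ_apply, h1, ih _ h2]
    clear h h1 h2
    induction es with
    | nil => rfl
    | cons a es ih' => simp [len, ih']

theorem JHC_iterate_seven : JHC^[7] [1] = [0, 1].flatMap str := by decide +kernel

/-- The seventh iterate of `[1]` is the compound `Hf.Sn` of the elements `0` and `1`. -/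
theorem length_iterate_one (n : ℕ) : (JHC^[n + 7] [1]).length = len n 0 + len n 1 := by
  rw [Function.iterate_add_apply, JHC_iterate_seven, length_iterate n _ (by decide +kernel)]
  simp

/-! ### Linear recurrences -/

/-- The value at `n` of `∑ i, cs[i] * s (n + i)`, the operator with coefficient list `cs` (constant
term first) in the shift applied to the sequence `s`. -/
def shiftEval {R : Type*} [CommRing R] : List ℤ → (ℕ → R) → ℕ → R
  | [], _, _ => 0
  | c :: cs, s, n => c * s n + shiftEval cs s (n + 1)

/-- Sum of two polynomials given by coefficient lists. -/
def addCoeffs : List ℤ → List ℤ → List ℤ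
  | [], q => q
  | a :: p, [] => a :: p
  | a :: p, b :: q => (a + b) :: addCoeffs p q

/-- Product of two polynomials given by coefficient lists. -/
def mulCoeffs : List ℤ → List ℤ → List ℤ
  | [], _ => []
  | a :: p, q => addCoeffs (q.map (a * ·)) (0 :: mulCoeffs p q)

section ShiftEval

variable {R : Type*} [CommRing R]

theorem shiftEval_addCoeffs (p q : List ℤ) (s : ℕ → R) (n : ℕ) :
    shiftEval (addCoeffs p q) s n = shiftEval p s n + shiftEval q s n := by
  induction p generalizing q n with
  | nil => simp [addCoeffs, shiftEval]
  | cons a p ih =>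
    cases q with
    | nil => simp [addCoeffs, shiftEval]
    | cons b q =>
      simp only [addCoeffs, shiftEval, ih]
      push_cast
      ring

theorem shiftEval_map_mul (a : ℤ) (q : List ℤ) (s : ℕ → R) (n : ℕ) :
    shiftEval (q.map (a * ·)) s n = a * shiftEval q s n := by
  induction q generalizing n with
  | nil => simp [shiftEval]
  | cons b q ih =>
    simp only [List.map_cons, shiftEval, ih]
    push_cast
    ring

theorem shiftEval_mulCoeffs (p q : List ℤ) (s : ℕ → R) (n : ℕ) :
    shiftEval (mulCoeffs p q) s n = shiftEval p (shiftEval q s) n := by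
  induction p generalizing n with
  | nil => simp [mulCoeffs, shiftEval]
  | cons a p ih =>
    rw [mulCoeffs, shiftEval_addCoeffs, shiftEval_map_mul]
    simp [shiftEval, ih]

theorem shiftEval_zero (p : List ℤ) (n : ℕ) : shiftEval p (fun _ => (0 : R)) n = 0 := by
  induction p generalizing n with
  | nil => rfl
  | cons a p ih => simp [shiftEval, ih]

theorem shiftEval_add (p : List ℤ) (s t : ℕ → R) (n : ℕ) :
    shiftEval p (fun k => s k + t k) n = shiftEval p s n + shiftEval p t n := by
  induction p generalizing n with
  | nil => simp [shiftEval]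
  | cons a p ih =>
    simp only [shiftEval, ih]
    ring

theorem shiftEval_const_mul (p : List ℤ) (m : R) (s : ℕ → R) (n : ℕ) :
    shiftEval p (fun k => m * s k) n = m * shiftEval p s n := by
  induction p generalizing n with
  | nil => simp [shiftEval]
  | cons a p ih =>
    simp only [shiftEval, ih]
    ring

theorem shiftEval_comp_add (p : List ℤ) (s : ℕ → R) (j n : ℕ) :
    shiftEval p (fun k => s (k + j)) n = shiftEval p s (n + j) := by
  induction p generalizing n with
  | nil => rfl
  | cons a p ih => rw [shiftEval, ih, shiftEval, Nat.add_right_comm]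

theorem shiftEval_append (p q : List ℤ) (s : ℕ → R) (n : ℕ) :
    shiftEval (p ++ q) s n = shiftEval p s n + shiftEval q s (n + p.length) := by
  induction p generalizing n with
  | nil => simp [shiftEval]
  | cons a p ih =>
    rw [List.cons_append, shiftEval, ih, shiftEval, List.length_cons,
      show n + 1 + p.length = n + (p.length + 1) by ring]
    ring

theorem map_shiftEval {S : Type*} [CommRing S] (f : R →+* S) (p : List ℤ) (s : ℕ → R) (n : ℕ) :
    f (shiftEval p s n) = shiftEval p (fun k => f (s k)) n := by
  induction p generalizing n with
  | nil => simp [shiftEval]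
  | cons a p ih => simp [shiftEval, ih]

/-- The recursion for `len`, transferred to the values of a shift operator. -/
theorem shiftEval_len_succ (p : List ℤ) (e n : ℕ) :
    shiftEval p (fun k => (len k e : R)) (n + 1) =
      ((decay e).map fun d => shiftEval p (fun k => (len k d : R)) n).sum := by
  rw [← shiftEval_comp_add p (fun k => (len k e : R)) 1 n]
  simp only [len]
  induction decay e with
  | nil => simpa using shiftEval_zero p n
  | cons a l ih =>
    simp only [List.map_cons, List.sum_cons, Nat.cast_add, shiftEval_add, ih]

end ShiftEval

/-! ### The recurrence of order 71 -/

/-- The coefficients of Conway's polynomial, constant term first. -/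
def conwayCoeffs : List ℤ :=
  [-6, 3, -6, 12, -4, 7, -7, 1, 0, 5, -2, -4, -12, 2, 7, 12, -7, -10, -4, 3, 9, -7, 0, -8, 14, -3,
   9, 2, -3, -10, -2, -6, 1, 10, -3, 1, 7, -7, 7, -12, -5, 8, 6, 10, -8, -8, -7, -3, 9, 1, 6, 6, -2,
   -3, -10, -2, 3, 5, 2, -1, -1, -1, -1, -1, 1, 2, 2, -1, -2, -1, 0, 1]

/-- A single number whose digits to base `2 ^ 256` are the entries of a list, modulo `2 ^ 256`. -/
def pack : List ℕ → ℕ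
  | [] => 0
  | v :: l => pack l * 2 ^ 256 + v % 2 ^ 256

/-- One Horner step for the computation of `shiftEval cs (len · e) 0` simultaneously for all
elements `e`, whose values modulo `2 ^ 256` are the digits of a packed number `T`. -/
def packStep (c : ℤ) (T : ℕ) : ℕ :=
  pack (elements.map fun x => (x.2.map fun d => T / 2 ^ (256 * d)).sum +
    (c % 2 ^ 256).toNat * (consDigits 42 x.1 []).length)

/-- `f n`, written in such a way that kernel reduction evaluates the argument `n` first. -/
def force {α : Type} (n : ℕ) (f : ℕ → α) : α := Nat.rec (f 0) (fun k _ => f (k + 1)) n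

theorem force_eq {α : Type} (n : ℕ) (f : ℕ → α) : force n f = f n := by cases n <;> rfl

/-- The values of `shiftEval cs (len · e) 0` modulo `2 ^ 256` for all elements `e`, packed. -/
def hornerPack : List ℤ → ℕ
  | [] => 0
  | c :: cs => force (hornerPack cs) (packStep c)

theorem hornerPack_conwayCoeffs : hornerPack (mulCoeffs [-1, 1] conwayCoeffs) = 0 := by
  decide +kernel

theorem pack_div (l : List ℕ) (i : ℕ) (hi : i < l.length) :
    ((pack l / 2 ^ (256 * i) : ℕ) : ZMod (2 ^ 256)) = (l[i] : ZMod (2 ^ 256)) := by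
  induction l generalizing i with
  | nil => simp at hi
  | cons v l ih =>
    cases i with
    | zero =>
      have : ((2 ^ 256 : ℕ) : ZMod (2 ^ 256)) = 0 := ZMod.natCast_self _
      rw [pack, mul_zero, pow_zero, Nat.div_one, Nat.cast_add, Nat.cast_mul, this, mul_zero,
        zero_add, ZMod.natCast_mod, List.getElem_cons_zero]
    | succ i =>
      rw [List.getElem_cons_succ, ← ih i (by simpa using hi), mul_add_one, add_comm (256 * i),
        pow_add, ← Nat.div_div_eq_div_mul, pack, mul_comm (pack l),
        Nat.mul_add_div (Nat.two_pow_pos 256),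
        Nat.div_eq_of_lt (Nat.mod_lt v (Nat.two_pow_pos 256)), add_zero]

theorem decay_lt {e d : ℕ} (hd : d ∈ decay e) : d < 92 :=
  forall_of_elements (p := fun e => ∀ d ∈ decay e, d < 92)
    (by decide +kernel) (fun a b h => by simp only [decay, h, imp_self]) e d hd

theorem hornerPack_div (cs : List ℤ) (e : ℕ) (he : e < 92) :
    ((hornerPack cs / 2 ^ (256 * e) : ℕ) : ZMod (2 ^ 256)) =
      shiftEval cs (fun k => (len k e : ZMod (2 ^ 256))) 0 := by
  induction cs generalizing e with
  | nil => simp [hornerPack, shiftEval]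
  | cons c cs ih =>
    have hl : e < elements.length := he
    have hc : (((c % 2 ^ 256).toNat : ℕ) : ZMod (2 ^ 256)) = c := by
      rw [← Int.cast_natCast, Int.toNat_of_nonneg (Int.emod_nonneg _ (by norm_num))]
      exact ZMod.intCast_mod c (2 ^ 256)
    have hx : elements[e] = entry e := by rw [entry, List.getD_eq_getElem _ _ hl]
    rw [hornerPack, force_eq, packStep, pack_div _ _ (by rwa [List.length_map]), List.getElem_map,
      hx, shiftEval, shiftEval_len_succ, Nat.cast_add, Nat.cast_mul, hc, add_comm, len, str, decay]
    congr 1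
    rw [Nat.cast_list_sum, List.map_map]
    congr 1
    exact List.map_congr_left fun d hd => ih d (decay_lt hd)

theorem len_zero_le (e : ℕ) : (str e).length ≤ 42 :=
  forall_of_elements (p := fun e => (str e).length ≤ 42)
    (by decide +kernel) (fun a b h => by simp only [str, h, imp_self]) e

theorem length_decay_le (e : ℕ) : (decay e).length ≤ 6 :=
  forall_of_elements (p := fun e => (decay e).length ≤ 6)
    (by decide +kernel) (fun a b h => by simp only [decay, h, imp_self]) e

theorem len_le (n e : ℕ) : len n e ≤ 42 * 6 ^ n := by
  induction n generalizing e with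
  | zero => simpa [len] using len_zero_le e
  | succ n ih =>
    calc len (n + 1) e ≤ ((decay e).map (len n)).length • (42 * 6 ^ n) :=
          List.sum_le_card_nsmul _ _ (by simpa using fun d _ => ih d)
      _ ≤ 6 * (42 * 6 ^ n) := by
          rw [smul_eq_mul, List.length_map]
          exact Nat.mul_le_mul_right _ (length_decay_le e)
      _ = 42 * 6 ^ (n + 1) := by ring

theorem abs_shiftEval_len_le (cs : List ℤ) (hcs : ∀ c ∈ cs, |c| ≤ 26) (e n : ℕ) :
    |shiftEval cs (fun k => (len k e : ℤ)) n| ≤ 1092 * 6 ^ n * 7 ^ cs.length := by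
  induction cs generalizing n with
  | nil => simp [shiftEval]
  | cons c cs ih =>
    have h1 := ih (fun c hc => hcs c (List.mem_cons_of_mem _ hc)) (n + 1)
    have h2 : |c * (len n e : ℤ)| ≤ 26 * (42 * 6 ^ n) := by
      rw [abs_mul, Nat.abs_cast]
      exact mul_le_mul (hcs c List.mem_cons_self) (by exact_mod_cast len_le n e) (by positivity)
        (by norm_num)
    have h3 : (1 : ℤ) ≤ 7 ^ cs.length := one_le_pow₀ (by norm_num)
    have h4 : (0 : ℤ) < 6 ^ n := by positivity
    rw [shiftEval, List.length_cons]
    refine (abs_add_le _ _).trans ((add_le_add h2 h1).trans ?_)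
    rw [pow_succ, pow_succ]
    nlinarith

/-- The lengths of the descendants of every element satisfy the recurrence given by `X - 1` times
Conway's polynomial. -/
theorem shiftEval_len (e n : ℕ) :
    shiftEval (mulCoeffs [-1, 1] conwayCoeffs) (fun k => (len k e : ℤ)) n = 0 := by
  induction n generalizing e with
  | zero =>
    refine forall_of_elements (p := fun e => shiftEval (mulCoeffs [-1, 1] conwayCoeffs)
      (fun k => (len k e : ℤ)) 0 = 0) (fun e he => ?_) (fun a b h => ?_) e
    · have h1 := hornerPack_div (mulCoeffs [-1, 1] conwayCoeffs) e he
      have h2 := map_shiftEval (Int.castRingHom (ZMod (2 ^ 256)))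
        (mulCoeffs [-1, 1] conwayCoeffs) (fun k => (len k e : ℤ)) 0
      simp only [eq_intCast, Int.cast_natCast] at h2
      rw [hornerPack_conwayCoeffs, Nat.zero_div, Nat.cast_zero, ← h2, eq_comm,
        ZMod.intCast_zmod_eq_zero_iff_dvd] at h1
      refine Int.eq_zero_of_abs_lt_dvd h1
        ((abs_shiftEval_len_le _ (by decide +kernel) e 0).trans_lt ?_)
      rw [show (mulCoeffs [-1, 1] conwayCoeffs).length = 73 by decide +kernel]
      norm_num
    · have : ∀ k, len k a = len k b := fun k => by cases k <;> simp [len, str, decay, h]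
      simp only [this, imp_self]
  | succ n ih => simp [shiftEval_len_succ, ih]

/-! ### Growth -/

/-- From the sixth generation on, the length of the descendants of `e` does not decrease, and it
increases unless `e` is hydrogen (string `22`). -/
theorem len_lt_len_succ (n e : ℕ) : len (n + 6) e ≤ len (n + 7) e ∧
    ((entry e).1 ≠ 22 → len (n + 6) e < len (n + 7) e) := by
  induction n generalizing e with
  | zero =>
    refine forall_of_elements (p := fun e => len (0 + 6) e ≤ len (0 + 7) e ∧
      ((entry e).1 ≠ 22 → len (0 + 6) e < len (0 + 7) e)) (by decide +kernel) (fun a b h => ?_) e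
    simp only [len, decay, h, imp_self]
  | succ n ih =>
    have h1 : ∀ d ∈ decay e, len (n + 6) d ≤ len (n + 7) d := fun d _ => (ih d).1
    refine ⟨List.sum_le_sum h1, fun he => ?_⟩
    have h2 : (entry e).1 ≠ 22 → ∃ d ∈ decay e, (entry d).1 ≠ 22 :=
      forall_of_elements (p := fun e => (entry e).1 ≠ 22 → ∃ d ∈ decay e, (entry d).1 ≠ 22)
        (by decide +kernel) (fun a b h => by simp only [decay, h, imp_self]) e
    obtain ⟨d, hd, hd'⟩ := h2 he
    exact List.sum_lt_sum _ _ h1 ⟨d, hd, (ih d).2 hd'⟩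

/-! ### Convergence of ratios -/

section Ratio

/-- If the last value of every window of `E + 1` values pulls the next value of `ρ` away from any
lower bound of the window, then after `E` steps the lower bound improves by a fixed fraction. -/
theorem window_lower {ρ : ℕ → ℝ} {E : ℕ} {δ : ℝ} (hδ : 0 < δ) (hδ1 : δ ≤ 1)
    (hlow : ∀ n m, (∀ k ≤ E, m ≤ ρ (n + k)) → δ * (ρ (n + E) - m) ≤ ρ (n + E + 1) - m)
    {n : ℕ} {m : ℝ} (h : ∀ k ≤ E, m ≤ ρ (n + k)) :
    (∀ k, m ≤ ρ (n + k)) ∧ ∀ k ≤ E, m + δ ^ E * (ρ (n + E) - m) ≤ ρ (n + E + k) := by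
  have h1 : ∀ j, ∀ k ≤ E, m ≤ ρ (n + j + k) := by
    intro j
    induction j with
    | zero => simpa using h
    | succ j ih =>
      intro k hk
      rcases hk.lt_or_eq with hk | rfl
      · simpa only [add_assoc, add_comm 1] using ih (k + 1) hk
      · have h2 := hlow _ _ ih
        have h3 := mul_nonneg hδ.le (sub_nonneg.2 (ih k le_rfl))
        rw [show n + (j + 1) + k = n + j + k + 1 by ring]
        linarith
  have h0 : ∀ k, m ≤ ρ (n + k) := fun k => by simpa using h1 k 0 (Nat.zero_le _)
  have h4 : ∀ j, δ ^ j * (ρ (n + E) - m) ≤ ρ (n + E + j) - m := by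
    intro j
    induction j with
    | zero => simp
    | succ j ih =>
      have h2 := hlow _ _ (h1 j)
      rw [show n + E + (j + 1) = n + j + E + 1 by ring, pow_succ', mul_assoc]
      rw [add_right_comm] at ih
      exact (mul_le_mul_of_nonneg_left ih hδ.le).trans h2
  refine ⟨h0, fun k hk => ?_⟩
  have h5 := mul_le_mul_of_nonneg_right (pow_le_pow_of_le_one hδ.le hδ1 hk)
    (sub_nonneg.2 (h0 E))
  linarith [h4 k]

theorem exists_tendsto_of_window {ρ : ℕ → ℝ} {E : ℕ} {δ K : ℝ} (hδ : 0 < δ) (hδ1 : δ ≤ 1)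
    (h0 : ∀ n, 0 ≤ ρ n) (hK : ∀ n, ρ n ≤ K)
    (hlow : ∀ n m, (∀ k ≤ E, m ≤ ρ (n + k)) → δ * (ρ (n + E) - m) ≤ ρ (n + E + 1) - m)
    (hup : ∀ n m, (∀ k ≤ E, ρ (n + k) ≤ m) → δ * (m - ρ (n + E)) ≤ m - ρ (n + E + 1)) :
    ∃ lam, Tendsto ρ atTop (nhds lam) := by
  have hlow' : ∀ n m, (∀ k ≤ E, m ≤ (-ρ) (n + k)) →
      δ * ((-ρ) (n + E) - m) ≤ (-ρ) (n + E + 1) - m := by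
    intro n m h
    have := hup n (-m) fun k hk => le_neg.1 (h k hk)
    simp only [Pi.neg_apply]
    linarith
  have key : ∀ j : ℕ, ∃ n m M, M - m = (1 - δ ^ E) ^ j * K ∧
      (∀ k ≤ E, m ≤ ρ (n + k)) ∧ ∀ k ≤ E, -M ≤ (-ρ) (n + k) := by
    intro j
    induction j with
    | zero => exact ⟨0, 0, K, by simp, fun k _ => h0 _, fun k _ => neg_le_neg (hK _)⟩
    | succ j ih =>
      obtain ⟨n, m, M, h1, h2, h3⟩ := ih
      refine ⟨n + E, m + δ ^ E * (ρ (n + E) - m), -(-M + δ ^ E * ((-ρ) (n + E) - -M)), ?_,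
        (window_lower hδ hδ1 hlow h2).2, ?_⟩
      · rw [pow_succ', mul_assoc, ← h1, Pi.neg_apply]
        ring
      · rw [neg_neg]
        exact (window_lower hδ hδ1 hlow' h3).2
  apply cauchySeq_tendsto_of_complete
  rw [Metric.cauchySeq_iff]
  intro ε hε
  have hlim : Tendsto (fun j : ℕ => (1 - δ ^ E) ^ j * K) atTop (nhds (0 * K)) :=
    (tendsto_pow_atTop_nhds_zero_of_lt_one (by linarith [pow_le_one₀ (n := E) hδ.le hδ1])
      (by linarith [pow_pos hδ E])).mul_const K
  rw [zero_mul] at hlim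
  obtain ⟨j, hj⟩ := (hlim.eventually_lt_const hε).exists
  obtain ⟨n, m, M, h1, h2, h3⟩ := key j
  have h4 := (window_lower hδ hδ1 hlow h2).1
  have h5 := (window_lower hδ hδ1 hlow' h3).1
  refine ⟨n, fun p hp q hq => ?_⟩
  obtain ⟨p, rfl⟩ := Nat.exists_eq_add_of_le hp
  obtain ⟨q, rfl⟩ := Nat.exists_eq_add_of_le hq
  have := h5 p
  have := h5 q
  simp only [Pi.neg_apply, neg_le_neg_iff] at *
  rw [Real.dist_eq, abs_sub_lt_iff]
  constructor <;> linarith [h4 p, h4 q]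

theorem shiftEval_nonpos {bs : List ℤ} (hbs : ∀ b ∈ bs, b ≤ 0) {t : ℕ → ℝ} {n : ℕ}
    (ht : ∀ k < bs.length, 0 ≤ t (n + k)) : shiftEval bs t n ≤ 0 := by
  induction bs generalizing n with
  | nil => exact le_rfl
  | cons b bs ih =>
    have h1 : (b : ℝ) ≤ 0 := by exact_mod_cast hbs b List.mem_cons_self
    have h2 := mul_nonpos_of_nonpos_of_nonneg h1 (ht 0 (by simp))
    have h3 := ih (n := n + 1) (fun b hb => hbs b (List.mem_cons_of_mem _ hb))
      fun k hk => by simpa only [add_assoc, add_comm 1] using ht (k + 1) (by simpa using hk)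
    rw [shiftEval]
    simpa using add_nonpos h2 h3

theorem exists_bound_shiftEval {bs : List ℤ} (hbs : ∀ b ∈ bs, b ≤ 0) {t : ℕ → ℝ} {B : ℝ}
    (hB : 0 ≤ B) (ht : ∀ n, t n ≤ B * t (n + 1)) :
    ∃ K, ∀ n, -shiftEval bs t n ≤ K * t (n + bs.length) := by
  induction bs with
  | nil => exact ⟨0, by simp [shiftEval]⟩
  | cons b bs ih =>
    obtain ⟨K, hK⟩ := ih (fun b hb => hbs b (List.mem_cons_of_mem _ hb))
    have h1 : (b : ℝ) ≤ 0 := by exact_mod_cast hbs b List.mem_cons_self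
    have h2 : ∀ j n, t n ≤ B ^ j * t (n + j) := by
      intro j
      induction j with
      | zero => simp
      | succ j ih =>
        intro n
        refine (ih n).trans ?_
        rw [pow_succ, mul_assoc, ← add_assoc]
        exact mul_le_mul_of_nonneg_left (ht _) (pow_nonneg hB j)
    refine ⟨-b * B ^ (bs.length + 1) + K, fun n => ?_⟩
    have h3 := mul_le_mul_of_nonneg_left (h2 (bs.length + 1) n) (neg_nonneg.2 h1)
    have h4 := hK (n + 1)
    rw [show n + 1 + bs.length = n + (bs.length + 1) by ring] at h4
    rw [shiftEval, List.length_cons]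
    linarith

/-- A positive solution of a linear recurrence that expresses `c * d (n + E + 1)` by the previous
`E + 1` terms with nonnegative coefficients, the one of `d (n + E)` being positive, has convergent
ratios: a bound for `E + 1` consecutive ratios is also one for the next ratio, and strictly so. -/
theorem exists_tendsto_ratio {bs : List ℤ} (hbs : ∀ b ∈ bs, b ≤ 0) {a c : ℤ} (ha : 0 < a)
    (hac : a ≤ c) {d : ℕ → ℝ} (hd : ∀ n, 0 < d n)
    (hrec : ∀ n, shiftEval (bs ++ [-a, c]) d n = 0) :
    ∃ lam, Tendsto (fun n => d (n + 1) / d n) atTop (nhds lam) := by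
  set E := bs.length with hE
  have ha' : (0 : ℝ) < a := by exact_mod_cast ha
  have hac' : (a : ℝ) ≤ c := by exact_mod_cast hac
  have hc' : (0 : ℝ) < c := ha'.trans_le hac'
  have step : ∀ (t : ℕ → ℝ) (n : ℕ), shiftEval (bs ++ [-a, c]) t n =
      shiftEval bs t n - a * t (n + E) + c * t (n + E + 1) := by
    intro t n
    rw [shiftEval_append]
    simp only [shiftEval, ← hE]
    push_cast
    ring
  have ineq : ∀ (t : ℕ → ℝ) (n : ℕ), shiftEval (bs ++ [-a, c]) t n = 0 →
      (∀ k < E, 0 ≤ t (n + k)) → a * t (n + E) ≤ c * t (n + E + 1) := by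
    intro t n h ht
    have := shiftEval_nonpos hbs ht
    rw [step] at h
    linarith
  -- the terms grow at least geometrically with ratio `a / c` from index `E` on
  obtain ⟨K₀, hK₀⟩ := exists_bound_shiftEval hbs (t := fun n => d (n + E)) (B := c / a)
    (by positivity) (fun n => by
      have := ineq d n (hrec n) fun k _ => (hd _).le
      rw [div_mul_eq_mul_div, le_div_iff₀ ha', add_right_comm]
      linarith)
  -- hence the ratios are bounded
  obtain ⟨K, hK1, hK⟩ : ∃ K : ℝ, 1 ≤ K ∧ ∀ n, d (n + E + E + 1) ≤ K * d (n + E + E) := by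
    refine ⟨max 1 ((a + K₀) / c), le_max_left _ _, fun n => ?_⟩
    have h1 := hK₀ n
    have h2 := hrec (n + E)
    rw [shiftEval_comp_add] at h1
    rw [step] at h2
    refine le_trans ?_ (mul_le_mul_of_nonneg_right (le_max_right _ _) (hd _).le)
    rw [div_mul_eq_mul_div, le_div_iff₀ hc']
    linarith
  set e : ℕ → ℝ := fun n => d (n + (E + E)) with he
  have hepos : ∀ n, 0 < e n := fun n => hd _
  have herec : ∀ n, shiftEval (bs ++ [-a, c]) e n = 0 := fun n => by
    rw [he, shiftEval_comp_add, hrec]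
  have heK : ∀ n, e (n + 1) ≤ K * e n := fun n => by
    have := hK n
    simp only [he, ← add_assoc]
    rwa [add_right_comm n 1 E, add_right_comm (n + E) 1 E]
  have hcomb : ∀ (x y : ℝ) n,
      shiftEval (bs ++ [-a, c]) (fun k => x * e (k + 1) + y * e k) n = 0 := fun x y n => by
    rw [shiftEval_add, shiftEval_const_mul, shiftEval_const_mul, shiftEval_comp_add, herec, herec]
    ring
  have hdiv : ∀ n, e (n + 1) = e (n + 1) / e n * e n := fun n => by
    rw [div_mul_cancel₀ _ (hepos n).ne']
  have hδ : 0 < (a / (c * K) : ℝ) := by positivity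
  -- both inequalities of the contraction, for `x = 1` and for `x = -1`
  have main : ∀ (x y : ℝ) n, (∀ k ≤ E, 0 ≤ x * (e (n + k + 1) / e (n + k)) + y) →
      a / (c * K) * (x * (e (n + E + 1) / e (n + E)) + y) ≤
        x * (e (n + E + 1 + 1) / e (n + E + 1)) + y := by
    intro x y n h
    have h1 := ineq _ n (hcomb x y n) fun k hk => by
      rw [hdiv (n + k)]
      nlinarith [h k hk.le, hepos (n + k), mul_nonneg (h k hk.le) (hepos (n + k)).le]
    have h2 := h E le_rfl
    have h3 := hepos (n + E)
    have h4 := hepos (n + E + 1)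
    have h5 := heK (n + E)
    have h6 : a * e (n + E) * (x * (e (n + E + 1) / e (n + E)) + y) ≤
        c * e (n + E + 1) * (x * (e (n + E + 1 + 1) / e (n + E + 1)) + y) := by
      field_simp
      linarith
    set r := e (n + E + 1) / e (n + E)
    set r' := e (n + E + 1 + 1) / e (n + E + 1)
    have h7 : 0 ≤ c * e (n + E + 1) * (x * r' + y) := le_trans (by positivity) h6
    have h8 : 0 ≤ x * r' + y := nonneg_of_mul_nonneg_right h7 (by positivity)
    have h9 : c * e (n + E + 1) * (x * r' + y) ≤ c * (K * e (n + E)) * (x * r' + y) := by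
      gcongr
    rw [div_mul_eq_mul_div, div_le_iff₀ (by positivity)]
    refine le_of_mul_le_mul_right ?_ h3
    linarith
  obtain ⟨lam, hlam⟩ := exists_tendsto_of_window (ρ := fun n => e (n + 1) / e n) (E := E)
    (δ := a / (c * K)) (K := K) hδ
    (by
      rw [div_le_one (by positivity)]
      nlinarith)
    (fun n => (div_pos (hepos _) (hepos _)).le)
    (fun n => by
      rw [div_le_iff₀ (hepos n)]
      exact heK n)
    (fun n m h => by
      have := main 1 (-m) n fun k hk => by linarith [h k hk]
      simpa [sub_eq_add_neg] using this)
    (fun n m h => by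
      have := main (-1) m n fun k hk => by linarith [h k hk]
      simpa [neg_add_eq_sub] using this)
  refine ⟨lam, (tendsto_add_atTop_iff_nat (E + E)).1 ?_⟩
  simpa only [he, add_right_comm _ 1 (E + E)] using hlam

/-- A form of the Stolz–Cesàro theorem: the ratios of a sequence converge to the same limit as those
of its differences. -/
theorem tendsto_ratio_of_diff {L : ℕ → ℝ} {lam : ℝ} (hL : ∀ n, 0 ≤ L n)
    (hd : ∀ n, 1 ≤ L (n + 1) - L n)
    (h : Tendsto (fun n => (L (n + 2) - L (n + 1)) / (L (n + 1) - L n)) atTop (nhds lam)) :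
    Tendsto (fun n => L (n + 1) / L n) atTop (nhds lam) := by
  have hge : ∀ n : ℕ, (n : ℝ) ≤ L n := by
    intro n
    induction n with
    | zero => simpa using hL 0
    | succ n ih =>
      push_cast
      linarith [hd n]
  have hLtop : Tendsto L atTop atTop := tendsto_atTop_mono hge tendsto_natCast_atTop_atTop
  have hsum : ∀ n, ∑ k ∈ Finset.range n, (L (k + 1) - L k) = L n - L 0 :=
    Finset.sum_range_sub L
  have ho : (fun n => (L (n + 2) - L (n + 1)) - lam * (L (n + 1) - L n)) =o[atTop]
      fun n => L (n + 1) - L n := by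
    rw [Asymptotics.isLittleO_iff_tendsto fun n hn => absurd hn (by linarith [hd n])]
    have h1 := h.sub_const lam
    rw [sub_self] at h1
    refine h1.congr fun n => ?_
    have : L (n + 1) - L n ≠ 0 := by linarith [hd n]
    field_simp
  have ho2 := ho.sum_range (fun n => (zero_le_one.trans (hd n) :)) (by
    simp only [hsum]
    exact tendsto_atTop_add_const_right _ _ hLtop)
  have hconst : Tendsto (fun n => (L 1 - lam * L 0) / L n) atTop (nhds 0) :=
    hLtop.const_div_atTop _
  have hO : (fun n => L n - L 0) =O[atTop] L :=
    Asymptotics.IsBigO.of_bound 1 (Eventually.of_forall fun n => by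
      have : L 0 ≤ L n := by
        induction n with
        | zero => exact le_rfl
        | succ n ih => linarith [hd n]
      rw [Real.norm_of_nonneg (by linarith), Real.norm_of_nonneg (hL n)]
      linarith [hL 0])
  simp only [hsum] at ho2
  have h2 := (ho2.trans_isBigO hO).tendsto_div_nhds_zero
  have h3 := (h2.add hconst).const_add lam
  simp only [add_zero] at h3
  refine h3.congr' ?_
  filter_upwards [eventually_gt_atTop 0] with n hn
  have hLn : 0 < L n := lt_of_lt_of_le (by exact_mod_cast hn) (hge n)
  have h4 : ∑ k ∈ Finset.range n, ((L (k + 2) - L (k + 1)) - lam * (L (k + 1) - L k)) =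
      (L (n + 1) - L 1) - lam * (L n - L 0) := by
    rw [Finset.sum_sub_distrib, ← Finset.mul_sum, hsum]
    congr 1
    exact Finset.sum_range_sub (fun k => L (k + 1)) n
  rw [h4, ← add_div, eq_div_iff hLn.ne', add_mul, div_mul_cancel₀ _ hLn.ne']
  ring

end Ratio

/-! ### Conway's polynomial -/

open Polynomial in
/-- The polynomial with given list of coefficients, constant term first. -/
noncomputable def toPoly : List ℤ → ℤ[X]
  | [] => 0
  | c :: cs => C c + X * toPoly cs

theorem toPoly_append_one (cs : List ℤ) :
    toPoly (cs ++ [1]) = Polynomial.X ^ cs.length + toPoly cs := by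
  induction cs with
  | nil => simp [toPoly]
  | cons c cs ih =>
    rw [List.cons_append, toPoly, ih, toPoly, List.length_cons]
    ring

theorem degree_toPoly_lt (cs : List ℤ) : (toPoly cs).degree < cs.length := by
  induction cs with
  | nil => simp [toPoly]
  | cons c cs ih =>
    rw [toPoly, List.length_cons]
    refine (Polynomial.degree_add_le _ _).trans_lt (max_lt ?_ ?_)
    · exact Polynomial.degree_C_le.trans_lt (by exact_mod_cast Nat.succ_pos _)
    · rw [mul_comm, Polynomial.degree_mul_X]
      push_cast
      exact WithBot.add_lt_add_right (by simp) ih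

/-- If the ratios of `d` tend to `lam`, then `shiftEval cs d` is asymptotically `d` times the value
at `lam` of the polynomial with coefficients `cs`; so `lam` is a root if `d` satisfies the
recurrence. -/
theorem tendsto_shiftEval_div {d : ℕ → ℝ} (hd : ∀ n, 0 < d n) {lam : ℝ}
    (h : Tendsto (fun n => d (n + 1) / d n) atTop (nhds lam)) (cs : List ℤ) :
    Tendsto (fun n => shiftEval cs d n / d n) atTop (nhds (Polynomial.aeval lam (toPoly cs))) := by
  induction cs with
  | nil => simp [shiftEval, toPoly]
  | cons c cs ih =>
    have h1 := (((tendsto_add_atTop_iff_nat 1).2 ih).mul h).const_add (c : ℝ)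
    simp only [toPoly, map_add, map_mul, Polynomial.aeval_X, eq_intCast, map_intCast]
    rw [mul_comm lam]
    refine h1.congr fun n => ?_
    have := (hd n).ne'
    have := (hd (n + 1)).ne'
    rw [shiftEval]
    field_simp

/-- A monic polynomial whose other coefficients have absolute value at most `14` has no roots
outside the disc of radius `15`. -/
theorem one_le_norm_aeval (cs : List ℤ) (hcs : ∀ c ∈ cs, |c| ≤ 14) {z : ℂ} (hz : 15 ≤ ‖z‖) :
    1 ≤ ‖Polynomial.aeval z (toPoly (cs ++ [1]))‖ := by
  induction cs with
  | nil => simp [toPoly]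
  | cons c cs ih =>
    have h1 := ih fun c hc => hcs c (List.mem_cons_of_mem _ hc)
    have h2 : ‖(c : ℂ)‖ ≤ 14 := by
      rw [Complex.norm_intCast]
      exact_mod_cast hcs c List.mem_cons_self
    rw [List.cons_append, toPoly]
    simp only [map_add, map_mul, Polynomial.aeval_X, eq_intCast, map_intCast]
    set w := Polynomial.aeval z (toPoly (cs ++ [1]))
    have h3 : ‖z * w‖ ≤ ‖(c : ℂ) + z * w‖ + ‖(c : ℂ)‖ := by
      simpa using norm_sub_le ((c : ℂ) + z * w) c
    rw [norm_mul] at h3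
    nlinarith

/-- Conway's polynomial. -/
noncomputable def conwayPoly : Polynomial ℤ := toPoly conwayCoeffs

theorem conwayCoeffs_eq : conwayCoeffs = conwayCoeffs.dropLast ++ [1] := by decide +kernel

theorem length_dropLast_conwayCoeffs : conwayCoeffs.dropLast.length = 71 := by decide +kernel

theorem conwayPoly_eq : conwayPoly = Polynomial.X ^ 71 + toPoly conwayCoeffs.dropLast := by
  rw [conwayPoly, conwayCoeffs_eq, toPoly_append_one, ← conwayCoeffs_eq,
    length_dropLast_conwayCoeffs]

theorem degree_toPoly_dropLast : (toPoly conwayCoeffs.dropLast).degree < (71 : ℕ) := by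
  have := degree_toPoly_lt conwayCoeffs.dropLast
  rwa [length_dropLast_conwayCoeffs] at this

theorem monic_conwayPoly : conwayPoly.Monic := by
  rw [conwayPoly_eq]
  exact Polynomial.monic_X_pow_add degree_toPoly_dropLast

theorem natDegree_conwayPoly : conwayPoly.natDegree = 71 := by
  rw [conwayPoly_eq]
  refine Polynomial.natDegree_eq_of_degree_eq_some ?_
  rw [Polynomial.degree_add_eq_left_of_degree_lt] <;> rw [Polynomial.degree_X_pow]
  exact degree_toPoly_dropLast

/-- Horner evaluation of a coefficient list at an integer. -/
def evalCoeffs (x : ℤ) : List ℤ → ℤ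
  | [] => 0
  | c :: cs => c + x * evalCoeffs x cs

theorem eval_toPoly (x : ℤ) (cs : List ℤ) : (toPoly cs).eval x = evalCoeffs x cs := by
  induction cs with
  | nil => simp [toPoly, evalCoeffs]
  | cons c cs ih => simp [toPoly, evalCoeffs, ih]

/-- The value of Conway's polynomial at `-58` is `-12` times a prime number. -/
theorem eval_conwayPoly : conwayPoly.eval (-58) = -12 *
    ((13307043925898791166171975981169342537018574247555388685678381337078212037299373590643630724604113209095914757311893436843121 : ℕ) : ℤ) := by
  rw [conwayPoly, eval_toPoly]
  decide +kernel

/-- All roots `z` of a factor of Conway's polynomial satisfy `‖-58 - z‖ ≥ 43`, so the value of the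
factor at `-58` is large. -/
theorem lt_abs_eval_of_dvd {f : Polynomial ℤ} (hf : f.Monic) (hdeg : f.natDegree ≠ 0)
    (hdvd : f ∣ conwayPoly) : 12 < |f.eval (-58)| := by
  set F := f.map (Int.castRingHom ℂ) with hF
  have hFm : F.Monic := hf.map _
  have hsplit : F.Splits := IsAlgClosed.splits F
  have hroot : ∀ z ∈ F.roots, ‖z‖ < 15 := by
    intro z hz
    by_contra! hz'
    have h1 := (Polynomial.mem_roots'.1 hz).2
    have h2 : Polynomial.aeval z f = 0 := by
      rw [Polynomial.IsRoot, hF, Polynomial.eval_map] at h1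
      exact h1
    have h3 : Polynomial.aeval z conwayPoly = 0 := by
      obtain ⟨g, hg⟩ := hdvd
      rw [hg, map_mul, h2, zero_mul]
    have h4 := one_le_norm_aeval conwayCoeffs.dropLast (by decide +kernel) hz'
    rw [← conwayCoeffs_eq] at h4
    rw [conwayPoly] at h3
    rw [h3, norm_zero] at h4
    exact absurd h4 (by norm_num)
  have hbound : ∀ s : Multiset ℂ, (∀ z ∈ s, ‖z‖ < 15) →
      (43 : ℝ) ^ s.card ≤ ‖(s.map fun z => (-58 : ℂ) - z).prod‖ := by
    intro s
    induction s using Multiset.induction with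
    | empty => simp
    | cons z s ih =>
      intro h
      have h1 := ih fun w hw => h w (Multiset.mem_cons_of_mem hw)
      have h2 := h z (Multiset.mem_cons_self z s)
      have h3 : 43 ≤ ‖(-58 : ℂ) - z‖ := by
        have := norm_sub_norm_le (-58 : ℂ) z
        rw [norm_neg, Complex.norm_ofNat] at this
        linarith
      rw [Multiset.map_cons, Multiset.prod_cons, norm_mul, Multiset.card_cons, pow_succ']
      exact mul_le_mul h3 h1 (by positivity) (by positivity)
  have h1 := hbound F.roots hroot
  rw [← hsplit.eval_eq_prod_roots_of_monic hFm, ← hsplit.natDegree_eq_card_roots, hF,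
    hf.natDegree_map] at h1
  have h2 : (f.map (Int.castRingHom ℂ)).eval (-58) = ((f.eval (-58) : ℤ) : ℂ) := by
    simpa using Polynomial.eval_intCast_map (Int.castRingHom ℂ) f (-58)
  rw [h2, Complex.norm_intCast] at h1
  have h3 : (43 : ℝ) ≤ 43 ^ f.natDegree := le_self_pow₀ (by norm_num) hdeg
  have h4 : (43 : ℝ) ≤ ((|f.eval (-58)| : ℤ) : ℝ) := by
    push_cast
    exact h3.trans h1
  have h5 : (43 : ℤ) ≤ |f.eval (-58)| := by exact_mod_cast h4
  linarith

theorem irreducible_conwayPoly : Irreducible conwayPoly := by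
  rw [monic_conwayPoly.irreducible_iff_natDegree]
  refine ⟨fun h => ?_, fun f g hf hg hfg => ?_⟩
  · have := natDegree_conwayPoly
    rw [h, Polynomial.natDegree_one] at this
    norm_num at this
  by_contra! hc
  have h1 := lt_abs_eval_of_dvd hf hc.1 (Dvd.intro g hfg)
  have h2 := lt_abs_eval_of_dvd hg hc.2 (Dvd.intro_left f hfg)
  have h3 := eval_conwayPoly
  rw [← hfg, Polynomial.eval_mul] at h3
  -- the prime divides the value of one factor, so that the value of the other one divides `12`
  have key : ∀ x y N : ℤ, Prime N → 12 < |y| → x * y = -12 * N → ¬ N ∣ x := by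
    rintro x y N hN hy hxy ⟨k, rfl⟩
    have h4 : k * y = -12 := mul_left_cancel₀ hN.ne_zero (by linarith)
    have h5 : y ∣ 12 := (Dvd.intro_left k h4).trans (by norm_num)
    have h6 := Int.le_of_dvd (by norm_num) ((abs_dvd y 12).2 h5)
    omega
  have hN := Nat.prime_iff_prime_int.1 prime_of_125_digits
  rcases hN.dvd_or_dvd (Dvd.intro_left _ h3.symm) with h4 | h4
  · exact key _ _ _ hN h2 h3 h4
  · exact key _ _ _ hN h1 (by rw [mul_comm, h3]) h4

/-! ### The growth rate -/

/-- A multiplier for which all coefficients of its product with Conway's polynomial, except the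
leading one, are nonpositive. -/
def multiplier : List ℤ :=
  [686, 1016, 455, 2171, 2840, 2320, 3274, 4551, 4164, 3962, 5112, 5059, 4377, 4345, 5069, 4170,
   4053, 3889, 4038, 3281, 3334, 3140, 2956, 2613, 2592, 2364, 2057, 2147, 1750, 1493, 1387, 1308,
   826, 748, 743, 507, 334, 369, 366, 136, 165, 193, 97, -14, 111]

theorem mulCoeffs_multiplier : mulCoeffs multiplier conwayCoeffs =
    (mulCoeffs multiplier conwayCoeffs).dropLast.dropLast ++ [-14, 111] ∧
    ∀ b ∈ (mulCoeffs multiplier conwayCoeffs).dropLast.dropLast, b ≤ 0 := by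
  decide +kernel

/-- The length of the iterate number `n + 13` of `[1]`. -/
def lengthSeq (n : ℕ) : ℝ := (len (n + 6) 0 : ℝ) + len (n + 6) 1

theorem lengthSeq_eq (n : ℕ) : ((JHC^[n + 13] [1]).length : ℝ) = lengthSeq n := by
  rw [show n + 13 = n + 6 + 7 by ring, length_iterate_one, lengthSeq, Nat.cast_add]

theorem one_le_lengthSeq_sub (n : ℕ) : 1 ≤ lengthSeq (n + 1) - lengthSeq n := by
  have h0 := (len_lt_len_succ n 0).2 (by decide +kernel)
  have h1 := (len_lt_len_succ n 1).1
  have h2 : len (n + 6) 0 + len (n + 6) 1 + 1 ≤ len (n + 7) 0 + len (n + 7) 1 := by omega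
  have h3 : (len (n + 6) 0 + len (n + 6) 1 + 1 : ℝ) ≤ len (n + 7) 0 + len (n + 7) 1 := by
    exact_mod_cast h2
  have h4 : lengthSeq (n + 1) = len (n + 7) 0 + len (n + 7) 1 := rfl
  have h5 : lengthSeq n = len (n + 6) 0 + len (n + 6) 1 := rfl
  linarith

theorem shiftEval_lengthSeq_sub (n : ℕ) :
    shiftEval conwayCoeffs (fun k => lengthSeq (k + 1) - lengthSeq k) n = 0 := by
  have h1 : ∀ e k, shiftEval (mulCoeffs [-1, 1] conwayCoeffs) (fun j => (len j e : ℝ)) k = 0 := by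
    intro e k
    have h := map_shiftEval (Int.castRingHom ℝ) (mulCoeffs [-1, 1] conwayCoeffs)
      (fun j => (len j e : ℤ)) k
    rw [shiftEval_len, map_zero] at h
    simpa using h.symm
  have h2 : shiftEval (mulCoeffs [-1, 1] conwayCoeffs) lengthSeq n = 0 := by
    have h := shiftEval_comp_add (mulCoeffs [-1, 1] conwayCoeffs)
      (fun k => (len k 0 : ℝ) + len k 1) 6 n
    have h' := shiftEval_add (mulCoeffs [-1, 1] conwayCoeffs) (fun k => (len k 0 : ℝ))
      (fun k => (len k 1 : ℝ)) (n + 6)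
    rw [h1, h1, add_zero] at h'
    exact h.trans h'
  rw [shiftEval_mulCoeffs] at h2
  simp only [shiftEval] at h2
  have h3 := shiftEval_add conwayCoeffs (fun k => lengthSeq (k + 1)) (fun k => -1 * lengthSeq k) n
  rw [shiftEval_const_mul, shiftEval_comp_add] at h3
  have h4 : (fun k => lengthSeq (k + 1) - lengthSeq k) =
      fun k => lengthSeq (k + 1) + -1 * lengthSeq k := by
    funext k
    ring
  rw [h4, h3]
  push_cast at h2
  linarith

/-- Conway's constant is algebraic of degree 71 over ℚ. -/
theorem conway_constant_algebraic_degree_71 :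
    ∃ lam : ℝ,
      Tendsto
        (fun i : ℕ => ((JHC^[i + 1] [1]).length : ℝ) / ((JHC^[i] [1]).length : ℝ))
        atTop (nhds lam) ∧
      IsAlgebraic ℚ lam ∧ (minpoly ℚ lam).natDegree = 71 := by
  have hd : ∀ n, 0 < lengthSeq (n + 1) - lengthSeq n := fun n =>
    zero_lt_one.trans_le (one_le_lengthSeq_sub n)
  obtain ⟨lam, hlam⟩ := exists_tendsto_ratio mulCoeffs_multiplier.2 (a := 14) (c := 111)
    (by norm_num) (by norm_num) hd fun n => by
      rw [← mulCoeffs_multiplier.1, shiftEval_mulCoeffs, funext shiftEval_lengthSeq_sub]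
      exact shiftEval_zero _ _
  have hroot : Polynomial.aeval lam conwayPoly = 0 := by
    refine tendsto_nhds_unique (tendsto_shiftEval_div hd hlam conwayCoeffs) ?_
    simp only [shiftEval_lengthSeq_sub, zero_div]
    exact tendsto_const_nhds
  have hmonic := monic_conwayPoly.map (Int.castRingHom ℚ)
  have hirr : Irreducible (conwayPoly.map (Int.castRingHom ℚ)) :=
    (monic_conwayPoly.irreducible_iff_irreducible_map_fraction_map (K := ℚ)).1
      irreducible_conwayPoly
  have hrootQ : Polynomial.aeval lam (conwayPoly.map (Int.castRingHom ℚ)) = 0 := by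
    have h := Polynomial.aeval_map_algebraMap ℚ lam conwayPoly
    rw [hroot] at h
    exact h
  refine ⟨lam, (tendsto_add_atTop_iff_nat 13).1 ?_, ⟨_, hmonic.ne_zero, hrootQ⟩, ?_⟩
  · have h := tendsto_ratio_of_diff (L := lengthSeq)
      (fun n => add_nonneg (Nat.cast_nonneg _) (Nat.cast_nonneg _)) one_le_lengthSeq_sub hlam
    refine h.congr fun n => ?_
    rw [add_right_comm n 13 1, lengthSeq_eq, lengthSeq_eq]
  · rw [← minpoly.eq_of_irreducible_of_monic hirr hrootQ hmonic,
      monic_conwayPoly.natDegree_map, natDegree_conwayPoly]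
end

section
/- One-day grammar rule (exclusion of the chunk ',ac,bc,'): For every string w and every natural number k with 2k + 3 < length(JHC(w)), the entries of JHC(w) at (0-indexed) positions 2k + 1 and 2k + 3 are distinct. Equivalently, no factor of the form [a, c, b, c] occurs in JHC(w) beginning at an even (0-indexed) position. -/
/-!
The entries of `JHC w` at odd positions are the letters of the successive maximal runs of `w`.
`List.splitBy` separates two runs only between unequal letters, and a run is constant, so its last
letter is also its first (`headI_eq_getLast`). Hence the letters of consecutive runs differ
(`isChain_headI_splitBy`), and reading them off at the odd positions
(`getD_flatMap_ne_of_isChain`) gives the claim.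
-/

open Filter

theorem headI_eq_getLast {r : List ℕ} (hr : r ≠ []) (hc : r.IsChain fun x y => (x == y) = true) :
    r.headI = r.getLast hr := by
  induction r with
  | nil => exact absurd rfl hr
  | cons a t ih =>
    cases t with
    | nil => rfl
    | cons b s =>
      rw [List.isChain_cons_cons] at hc
      have h := ih (List.cons_ne_nil _ _) hc.2
      have hab : a = b := by simpa using hc.1
      rw [List.getLast_cons (List.cons_ne_nil _ _), ← h]
      exact hab

theorem headI_eq_head {s : List ℕ} (hs : s ≠ []) : s.headI = s.head hs := by
  cases s with
  | nil => exact absurd rfl hs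
  | cons a t => rfl

theorem isChain_headI_splitBy (w : List ℕ) :
    (w.splitBy (· == ·)).IsChain fun r s => r.headI ≠ s.headI := by
  have h := List.isChain_getLast_head_splitBy (· == ·) w
  rw [List.isChain_iff_getElem] at h ⊢
  intro i hi
  obtain ⟨hr, hs, hne⟩ := h i hi
  have hc := List.isChain_of_mem_splitBy (List.getElem_mem (Nat.lt_of_succ_lt hi))
  rw [headI_eq_getLast hr hc, headI_eq_head hs]
  simpa using hne

theorem getD_flatMap_ne_of_isChain (L : List (List ℕ))
    (hL : L.IsChain fun r s => r.headI ≠ s.headI) (k : ℕ)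
    (hk : 2 * k + 3 < (L.flatMap fun r => [r.length, r.headI]).length) :
    (L.flatMap fun r => [r.length, r.headI]).getD (2 * k + 1) 0 ≠
      (L.flatMap fun r => [r.length, r.headI]).getD (2 * k + 3) 0 := by
  induction L generalizing k with
  | nil => simp at hk
  | cons r t ih =>
    cases k with
    | zero =>
      cases t with
      | nil => simp at hk
      | cons s u => simpa using (List.isChain_cons_cons.mp hL).1
    | succ k =>
      have h := ih hL.tail k (by
        simp only [List.flatMap_cons, List.length_append, List.length_cons, List.length_nil] at hk
        omega)
      -- Dropping the first run shifts every position by two.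
      simpa [Nat.mul_add] using h

/-- One-day grammar rule: the letters at odd positions `2k+1` and `2k+3`
of `JHC w` are distinct (no chunk `,ac,bc,`). -/
theorem one_day_rule :
    ∀ w : List ℕ, IsString w → ∀ k : ℕ, 2 * k + 3 < (JHC w).length →
      (JHC w).getD (2 * k + 1) 0 ≠ (JHC w).getD (2 * k + 3) 0 := by
  intro w _ k hk
  exact getD_flatMap_ne_of_isChain _ (isChain_headI_splitBy w) k hk
end

section
/- Two-day grammar rule (exclusion of the chunk ',32,33,'): For every string w, the list [3, 2, 3, 3] does not occur as a factor (contiguous sublist) of JHC(JHC(w)). -/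
/-!
The run-length description of a string is a list of pairs `(m, a)` in which consecutive pairs have
different second entries; `JHC` writes these pairs one after the other (`exists_runs`).

Suppose `[3, 2, 3, 3]` is a factor of `JHC v` with `v = JHC w`. If it starts in the middle of a pair,
the pairs involved are `(x, 3), (2, 3)`, whose second entries agree, which is impossible. So it
consists of the two pairs `(3, 2), (3, 3)` (`pairs_of_factor`), and `v` has the factor
`[2, 2, 2, 3, 3, 3]`. Since `v` is itself a sequence of pairs, this factor is read either as
`(2, 2), (2, 3), (3, 3)` or as `(x, 2), (2, 2), …`; both contain consecutive pairs with equal second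
entries (`not_factor_twos_threes`), a contradiction.
-/


open Filter

/-- The concatenation of the pairs in `P`, each pair `(m, a)` being written as `m, a`. -/
def flattenPairs (P : List (ℕ × ℕ)) : List ℕ := P.flatMap fun p => [p.1, p.2]

/-- `P` can be a run-length description as far as maximality of the runs is concerned: the letters
(second entries) of consecutive pairs are different. -/
def AltLetters (P : List (ℕ × ℕ)) : Prop := P.IsChain fun p q => p.2 ≠ q.2

theorem exists_runs (w : List ℕ) : ∃ P : List (ℕ × ℕ),
    JHC w = flattenPairs P ∧ AltLetters P ∧
      w = P.flatMap fun p => List.replicate p.1 p.2 := by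
  have hrep : ∀ r ∈ w.splitBy (· == ·), r = List.replicate r.length r.headI := by
    intro r hr
    have hc := List.isChain_of_mem_splitBy hr
    simp only [beq_iff_eq] at hc
    have hne := List.ne_nil_of_mem_splitBy hr
    cases r with
    | nil => exact absurd rfl hne
    | cons a l => exact List.isChain_eq_iff_eq_replicate.1 hc a rfl
  refine ⟨(w.splitBy (· == ·)).map fun r => (r.length, r.headI), ?_, ?_, ?_⟩
  · simp [JHC, flattenPairs, List.flatMap_map]
  · unfold AltLetters
    rw [List.isChain_map]
    refine List.IsChain.imp_of_mem_imp ?_ (List.isChain_getLast_head_splitBy (· == ·) w)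
    rintro a b ha - ⟨hna, hnb, hab⟩ heq
    -- All letters of the run `a` are equal, so its last letter is its first one.
    have hmem : ∀ x ∈ a, x = a.headI := fun x hx => by
      rw [hrep a ha] at hx
      exact List.eq_of_mem_replicate hx
    have hlast : a.getLast hna = a.headI := hmem _ (List.getLast_mem hna)
    have hhead : b.head hnb = b.headI := by
      cases b with
      | nil => exact absurd rfl hnb
      | cons => rfl
    simp only [beq_eq_false_iff_ne] at hab
    exact hab (hlast.trans (heq.trans hhead.symm))
  · rw [List.flatMap_map]
    conv_lhs => rw [← List.flatten_splitBy (· == ·) w]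
    rw [List.flatMap_def]
    congr 1
    conv_lhs => rw [← List.map_id (w.splitBy (· == ·))]
    exact List.map_congr_left hrep

/-- A factor `[3, 2, 3, 3]` is aligned with the pairs, since otherwise the middle entries would form
the pair `(2, 3)`, preceded by a pair with letter `3`. -/
theorem pairs_of_factor : ∀ (P : List (ℕ × ℕ)) (s t : List ℕ), AltLetters P →
    flattenPairs P = s ++ 3 :: 2 :: 3 :: 3 :: t →
      ∃ P₁ P₂, P = P₁ ++ (3, 2) :: (3, 3) :: P₂
  | [], s, t, _, h => by simp [flattenPairs] at h
  | [(a, b)], s, t, _, h => by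
    have := congrArg List.length h
    simp [flattenPairs] at this
    lia
  | (a, b) :: (c, d) :: P, s, t, hP, h => by
    unfold AltLetters at hP
    rw [List.isChain_cons_cons] at hP
    match s with
    | [] =>
      simp [flattenPairs] at h
      obtain ⟨rfl, rfl, rfl, rfl, -⟩ := h
      exact ⟨[], P, rfl⟩
    | [x] =>
      simp [flattenPairs] at h
      obtain ⟨-, rfl, -, rfl, -⟩ := h
      exact absurd rfl hP.1
    | x :: y :: s =>
      have h' : flattenPairs ((c, d) :: P) = s ++ 3 :: 2 :: 3 :: 3 :: t := by
        simp [flattenPairs] at h ⊢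
        exact h.2.2
      obtain ⟨P₁, P₂, e⟩ := pairs_of_factor _ s t hP.2 h'
      exact ⟨(a, b) :: P₁, P₂, by rw [e]; rfl⟩

theorem not_factor_twos_threes : ∀ (P : List (ℕ × ℕ)) (s t : List ℕ), AltLetters P →
    flattenPairs P ≠ s ++ 2 :: 2 :: 2 :: 3 :: 3 :: 3 :: t
  | [], s, t, _, h => by simp [flattenPairs] at h
  | [(a, b)], s, t, _, h => by
    have := congrArg List.length h
    simp [flattenPairs] at this
    lia
  | [(a, b), (c, d)], s, t, _, h => by
    have := congrArg List.length h
    simp [flattenPairs] at this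
    lia
  | (a, b) :: (c, d) :: (e, f) :: P, s, t, hP, h => by
    unfold AltLetters at hP
    rw [List.isChain_cons_cons] at hP
    match s with
    | [] =>
      rw [List.isChain_cons_cons] at hP
      simp [flattenPairs] at h
      obtain ⟨-, -, -, rfl, -, rfl, -⟩ := h
      exact hP.2.1 rfl
    | [x] =>
      simp [flattenPairs] at h
      obtain ⟨-, rfl, -, rfl, -⟩ := h
      exact hP.1 rfl
    | x :: y :: s =>
      refine not_factor_twos_threes ((c, d) :: (e, f) :: P) s t hP.2 ?_
      simp [flattenPairs] at h ⊢
      exact h.2.2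

/-- Two-day grammar rule: `[3,2,3,3]` is never a factor of `JHC (JHC w)`. -/
theorem two_day_rule :
    ∀ w : List ℕ, IsString w → ¬ ([3, 2, 3, 3] <:+: JHC (JHC w)) := by
  rintro w - ⟨s, t, h⟩
  obtain ⟨P, hJ, hP, -⟩ := exists_runs w
  obtain ⟨Q, hJJ, hQ, hv⟩ := exists_runs (JHC w)
  obtain ⟨Q₁, Q₂, rfl⟩ := pairs_of_factor Q s t hQ (by rw [← hJJ, ← h]; simp)
  refine not_factor_twos_threes P (Q₁.flatMap fun p => List.replicate p.1 p.2)
    (Q₂.flatMap fun p => List.replicate p.1 p.2) hP ?_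
  rw [← hJ, hv]
  simp [List.replicate_succ]
end

section
/- Unique atomic decomposition: Every string w is a split compound of a unique finite list of atoms; that is, there exists exactly one list of atoms A_1, …, A_k such that w = A_1 ++ ⋯ ++ A_k and JHC^n(w) = JHC^n(A_1) ++ ⋯ ++ JHC^n(A_k) for every n ≥ 0. -/
/-!
Existence is induction on length: a string that is not an atom splits into two shorter strings,
and their decompositions concatenate.

For uniqueness, the operator preserves the last symbol of a string, and it commutes with a
concatenation `u ++ v` exactly when the last symbol of `u` differs from the first symbol of `v`;
otherwise two runs merge and the output is two symbols shorter. Hence `L ++ R` splits as `L.R` if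
and only if no iterate of `R` begins with the last symbol of `L` (`iterate_append_iff`). It follows
that if a string splits after a prefix `A` and also after a longer prefix `A ++ M`, then `A ++ M`
itself splits after `A` (`SplitsAs.restrict`). So the first atoms of two decompositions of the same
string cannot have different lengths, and they coincide. The same length count shows that the tail
of a split compound is again a split compound (`SplitCompound.tail`), which allows induction on the
list of atoms.
-/


open Filter

/-! ### The operator and concatenation -/

lemma JHC_ne_nil {w : List ℕ} (hw : w ≠ []) : JHC w ≠ [] := by
  obtain ⟨r, rs, h⟩ := List.exists_cons_of_ne_nil
    (List.splitBy_ne_nil (r := fun x y : ℕ => x == y) |>.2 hw)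
  simp [JHC, h]

lemma JHC_iterate_ne_nil {w : List ℕ} (hw : w ≠ []) (n : ℕ) : JHC^[n] w ≠ [] := by
  induction n with
  | zero => simpa using hw
  | succ n ih => rw [Function.iterate_succ_apply']; exact JHC_ne_nil ih

/-- The last output symbol is the value of the last run, that is, the last input symbol. -/
lemma getLast?_JHC (w : List ℕ) : (JHC w).getLast? = w.getLast? := by
  rcases List.eq_nil_or_concat (w.splitBy (· == ·)) with h | ⟨ss, s, h⟩
  · have : w = [] := List.splitBy_eq_nil.1 h
    subst this
    simp [JHC]
  · have hs : s ∈ w.splitBy (· == ·) := by simp [h]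
    have hc := List.isChain_of_mem_splitBy hs
    have hne := List.ne_nil_of_mem_splitBy hs
    have hf := List.flatten_splitBy (fun x y : ℕ => x == y) w
    rw [h] at hf
    obtain ⟨a, t, rfl⟩ := List.exists_cons_of_ne_nil hne
    have hc' : (a :: t).IsChain (· = ·) := by simpa using hc
    have hp := List.pairwise_cons.1 (List.isChain_iff_pairwise.1 hc')
    have hlast : (a :: t).getLast? = some a := by
      rw [List.getLast?_eq_some_getLast (by simp)]
      rcases List.mem_cons.1 (List.getLast_mem (l := a :: t) (by simp)) with h1 | h1
      · rw [h1]
      · rw [← hp.1 _ h1]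
    rw [JHC, h, ← hf]
    simp [List.getLast?_append, hlast]

lemma getLast?_JHC_iterate (w : List ℕ) (n : ℕ) : (JHC^[n] w).getLast? = w.getLast? := by
  induction n with
  | zero => rfl
  | succ n ih => rw [Function.iterate_succ_apply', getLast?_JHC, ih]

lemma JHC_append_s10 {u v : List ℕ} (h : v ≠ [] → u.getLast? ≠ v.head?) :
    JHC (u ++ v) = JHC u ++ JHC v := by
  rw [JHC, List.splitBy_append, List.flatMap_append]
  · rfl
  · intro x hx y hy
    have hv : v ≠ [] := by rintro rfl; simp at hy
    have := h hv
    rw [Option.mem_def] at hx hy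
    rw [hx, hy] at this
    simpa using this

lemma length_JHC (w : List ℕ) : (JHC w).length = 2 * (w.splitBy (· == ·)).length := by
  rw [JHC]
  induction w.splitBy (· == ·) with
  | nil => rfl
  | cons s ss ih => simp [ih]; omega

/-- The number of runs still to be emitted does not depend on the contents of the current run
`g` accumulated so far. -/
lemma length_splitBy_loop (l : List ℕ) (a : ℕ) (g : List ℕ) (gs : List (List ℕ)) :
    (List.splitBy.loop (· == ·) l a g gs).length
      = (List.splitBy.loop (· == ·) l a [] []).length + gs.length := by
  induction l generalizing a g gs with
  | nil => simp [List.splitBy.loop]; omega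
  | cons b l ih =>
    simp only [List.splitBy.loop]
    split
    · rw [ih, ih b [a] []]; simp
    · rw [ih, ih b [] [_]]; simp; omega

lemma length_JHC_cons_self (a : ℕ) (v : List ℕ) :
    (JHC (a :: a :: v)).length = (JHC (a :: v)).length := by
  rw [length_JHC, length_JHC]
  simp only [List.splitBy, List.splitBy.loop, beq_self_eq_true]
  rw [length_splitBy_loop]
  simp

/-- When the boundary symbols agree, two runs merge, and one run (two output symbols) is lost. -/
lemma length_JHC_append_of_eq {u v : List ℕ} (hv : v ≠ []) (h : u.getLast? = v.head?) :
    (JHC (u ++ v)).length + 2 = (JHC u).length + (JHC v).length := by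
  obtain ⟨a, v, rfl⟩ := List.exists_cons_of_ne_nil hv
  induction u with
  | nil => simp at h
  | cons x u ih =>
    rcases u with _ | ⟨y, u⟩
    · obtain rfl : x = a := by simpa using h
      have : (JHC [x]).length = 2 := rfl
      rw [List.singleton_append, length_JHC_cons_self, this]
      omega
    · have ih := ih (by simpa [List.getLast?_cons_cons] using h)
      by_cases hxy : x = y
      · subst hxy
        simp only [List.cons_append, length_JHC_cons_self] at ih ⊢
        exact ih
      · have h1 : ∀ t, JHC (x :: y :: t) = JHC [x] ++ JHC (y :: t) := fun t =>
          JHC_append_s10 (u := [x]) (v := y :: t) (by simpa using hxy)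
        simp only [List.cons_append, h1, List.length_append] at ih ⊢
        omega

lemma length_JHC_append_le (u v : List ℕ) :
    (JHC (u ++ v)).length ≤ (JHC u).length + (JHC v).length := by
  by_cases h : v ≠ [] → u.getLast? ≠ v.head?
  · rw [JHC_append_s10 h, List.length_append]
  · push Not at h
    have := length_JHC_append_of_eq h.1 h.2
    omega

lemma length_JHC_flatten_le (Xs : List (List ℕ)) :
    (JHC Xs.flatten).length ≤ ((Xs.map JHC).flatten).length := by
  induction Xs with
  | nil => simp [JHC]
  | cons X Xs ih =>
    have := length_JHC_append_le X Xs.flatten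
    simp only [List.flatten_cons, List.map_cons, List.length_append]
    omega

/-! ### Splittings as boundary conditions -/

/-- The last symbol of `L` never changes, so a splitting only asks that no iterate of `R` begin
with that symbol. -/
lemma iterate_append_iff {L R : List ℕ} (hR : R ≠ []) :
    (∀ n : ℕ, JHC^[n] (L ++ R) = JHC^[n] L ++ JHC^[n] R) ↔
      ∀ n : ℕ, L.getLast? ≠ (JHC^[n] R).head? := by
  constructor
  · intro h n heq
    have h1 := h (n + 1)
    rw [Function.iterate_succ_apply', h n, Function.iterate_succ_apply',
      Function.iterate_succ_apply'] at h1
    have h2 := length_JHC_append_of_eq (u := JHC^[n] L) (JHC_iterate_ne_nil hR n)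
      (by rw [getLast?_JHC_iterate, heq])
    rw [h1, List.length_append] at h2
    omega
  · intro h n
    induction n with
    | zero => rfl
    | succ n ih =>
      simp only [Function.iterate_succ_apply']
      rw [ih, JHC_append_s10]
      intro _
      rw [getLast?_JHC_iterate]
      exact h n

/-- Overlapping splittings refine each other: if `A ++ M ++ R` splits both after `A` and after
`A ++ M`, then `A ++ M` splits after `A`. Indeed `M ++ R` splits after `M`, because `M` and
`A ++ M` have the same last symbol, so the iterates of `M ++ R` and of `M` begin alike. -/
lemma SplitsAs.restrict {w A M R : List ℕ} (hM : M ≠ []) (h₁ : SplitsAs w A (M ++ R))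
    (h₂ : SplitsAs w (A ++ M) R) : SplitsAs (A ++ M) A M := by
  obtain ⟨e₁, hA, hMR, h₁⟩ := h₁
  obtain ⟨e₂, -, hR, h₂⟩ := h₂
  rw [e₁, iterate_append_iff hMR] at h₁
  rw [e₂, iterate_append_iff hR] at h₂
  have h₃ : ∀ n : ℕ, JHC^[n] (M ++ R) = JHC^[n] M ++ JHC^[n] R := by
    rw [iterate_append_iff hR]
    intro n
    rw [← List.getLast?_append_of_ne_nil A hM]
    exact h₂ n
  refine ⟨rfl, hA, hM, (iterate_append_iff hM).2 fun n => ?_⟩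
  have := h₁ n
  rwa [h₃, List.head?_append_of_ne_nil _ (JHC_iterate_ne_nil hM n)] at this

/-! ### Split compounds -/

lemma SplitCompound.flatten_ne_nil {w : List ℕ} {As : List (List ℕ)} (h : SplitCompound w As)
    (hAs : As ≠ []) : w ≠ [] := by
  obtain ⟨A, As, rfl⟩ := List.exists_cons_of_ne_nil hAs
  rw [h.2.1]
  have := (h.1 A (by simp)).1.1
  simp [this]

/-- The tail of a split compound is a split compound of the remaining atoms. A merge of runs
anywhere shortens the output, and no other boundary can compensate for the loss. -/
lemma SplitCompound.tail {w A : List ℕ} {As : List (List ℕ)} (h : SplitCompound w (A :: As)) :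
    SplitCompound As.flatten As := by
  obtain ⟨hat, rfl, hn⟩ := h
  refine ⟨fun B hB => hat B (by simp [hB]), rfl, fun n => ?_⟩
  induction n with
  | zero => simp
  | succ n ih =>
    have h0 := hn n
    have h1 := hn (n + 1)
    simp only [List.map_cons, List.flatten_cons] at h0 h1
    rw [Function.iterate_succ_apply', h0, ← ih, Function.iterate_succ_apply'] at h1
    rw [Function.iterate_succ_apply']
    by_cases hb : JHC^[n] As.flatten ≠ [] → (JHC^[n] A).getLast? ≠ (JHC^[n] As.flatten).head?
    · rw [JHC_append_s10 hb] at h1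
      exact List.append_cancel_left h1
    · push Not at hb
      have h2 := length_JHC_append_of_eq hb.1 hb.2
      have h3 := length_JHC_flatten_le (As.map fun A => JHC^[n] A)
      rw [← ih, List.map_map] at h3
      have h4 : (JHC ∘ fun A => JHC^[n] A) = fun A => JHC^[n + 1] A := by
        funext B
        rw [Function.comp_apply, ← Function.iterate_succ_apply' JHC]
      rw [h4] at h3
      rw [h1, List.length_append] at h2
      omega

lemma SplitCompound.splitsAs {w A : List ℕ} {As : List (List ℕ)}
    (h : SplitCompound w (A :: As)) (hAs : As ≠ []) : SplitsAs w A As.flatten := by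
  have ht := h.tail
  refine ⟨by simpa using h.2.1, (h.1 A (by simp)).1.1, ht.flatten_ne_nil hAs, fun n => ?_⟩
  rw [ht.2.2 n, h.2.2 n]
  simp

lemma exists_splitCompound (w : List ℕ) (hw : IsString w) : ∃ As, SplitCompound w As := by
  induction hk : w.length using Nat.strong_induction_on generalizing w with
  | _ k ih =>
    by_cases hat : IsAtomString w
    · exact ⟨[w], by simpa using hat, by simp, by simp⟩
    · obtain ⟨L, R, rfl, hL, hR, hs⟩ : ∃ L R, SplitsAs w L R := by
        simpa [IsAtomString, hw] using hat
      have hl := List.length_pos_iff.2 hL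
      have hr := List.length_pos_iff.2 hR
      rw [List.length_append] at hk
      obtain ⟨As, a1, a2, a3⟩ := ih _ (by omega) L
        ⟨hL, fun x hx => hw.2 x (List.mem_append_left _ hx)⟩ rfl
      obtain ⟨Bs, b1, b2, b3⟩ := ih _ (by omega) R
        ⟨hR, fun x hx => hw.2 x (List.mem_append_right _ hx)⟩ rfl
      refine ⟨As ++ Bs, fun C hC => (List.mem_append.1 hC).elim (a1 C) (b1 C), ?_, fun n => ?_⟩
      · rw [List.flatten_append, ← a2, ← b2]
      · rw [hs, a3, b3, List.map_append, List.flatten_append]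

/-- The first atom of a split compound is never a proper prefix of the first atom of another. -/
lemma SplitCompound.not_proper_prefix {w A M : List ℕ} {As Bs : List (List ℕ)} (hM : M ≠ [])
    (hA : SplitCompound w (A :: As)) (hB : SplitCompound w ((A ++ M) :: Bs)) : False := by
  have e : As.flatten = M ++ Bs.flatten := by
    have := hA.2.1.symm.trans hB.2.1
    simpa [List.append_assoc] using this
  have hAs : As ≠ [] := by
    rintro rfl
    simp [hM] at e
  have hatom := (hB.1 (A ++ M) (by simp)).2 A M
  have s₁ := hA.splitsAs hAs
  rcases eq_or_ne Bs [] with rfl | hBs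
  · have : w = A ++ M := by simpa using hB.2.1
    rw [e, this] at s₁
    exact hatom (by simpa using s₁)
  · rw [e] at s₁
    exact hatom (s₁.restrict hM (hB.splitsAs hBs))

lemma SplitCompound.unique {w : List ℕ} {As Bs : List (List ℕ)} (hA : SplitCompound w As)
    (hB : SplitCompound w Bs) : As = Bs := by
  induction As generalizing w Bs with
  | nil =>
    by_contra hne
    exact hB.flatten_ne_nil (Ne.symm hne) (by simpa using hA.2.1)
  | cons A As ih =>
    rcases Bs with _ | ⟨B, Bs⟩
    · exact absurd (by simpa using hB.2.1) (hA.flatten_ne_nil (by simp))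
    · have e : A ++ As.flatten = B ++ Bs.flatten := by
        simpa using hA.2.1.symm.trans hB.2.1
      have hAB : A = B := by
        rcases List.append_eq_append_iff.1 e with ⟨M, rfl, -⟩ | ⟨M, rfl, -⟩
        · by_contra hne
          exact SplitCompound.not_proper_prefix (by rintro rfl; simp at hne) hA hB
        · by_contra hne
          exact SplitCompound.not_proper_prefix (by rintro rfl; simp at hne) hB hA
      subst hAB
      have e' := List.append_cancel_left e
      have ht := hA.tail
      rw [e'] at ht
      rw [ih ht hB.tail]

/-- Unique atomic decomposition: every string is a split compound of a
unique finite list of atoms. -/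
theorem unique_atomic_decomposition :
    ∀ w : List ℕ, IsString w → ∃! As : List (List ℕ), SplitCompound w As := by
  intro w hw
  obtain ⟨As, hAs⟩ := exists_splitCompound w hw
  exact ⟨As, hAs, fun Bs hBs => hBs.unique hAs⟩
end
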